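/- arXiv:0811.0946 — 6 statements merged into one kernel-verified Lean document; each statement's English description precedes it below -/
import Mathlib

section
/- Let ω > 0 and q > p > 1 be real numbers, let n ≥ 1 be a natural number, and let f(u) = -ω·u + u^p - u^q. Suppose that f̃(u) := (f'(u) + u·f''(u))·f(u) - u·f'(u)² < 0 for all u > 0. Then the boundary value problem u''(r) + ((n-1)/r)·u'(r) + f(u(r)) = 0 for r > 0, u'(0) = 0, lim_{r→∞} u(r) = 0 has at most one positive solution. -/
open Filter

/-- The double power nonlinearity `f(u) = -ω·u + u^p - u^q` (real powers). -/
noncomputable def f (ω p q u : ℝ) : ℝ := -ω * u + u ^ p - u ^ q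

/-- Its derivative for `u > 0`: `f'(u) = -ω + p·u^(p-1) - q·u^(q-1)`. -/
noncomputable def f' (ω p q u : ℝ) : ℝ := -ω + p * u ^ (p - 1) - q * u ^ (q - 1)

/-- Its second derivative for `u > 0`:
`f''(u) = p(p-1)·u^(p-2) - q(q-1)·u^(q-2)`. -/
noncomputable def f'' (p q u : ℝ) : ℝ :=
  p * (p - 1) * u ^ (p - 2) - q * (q - 1) * u ^ (q - 2)

/-- `u` is a positive solution of the radial boundary value problem
`u'' + ((n-1)/r) u' + f(u) = 0` on `(0,∞)`, `u'(0) = 0`, `u(r) → 0` as `r → ∞`. -/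
def IsPositiveSolution (n : ℕ) (f : ℝ → ℝ) (u : ℝ → ℝ) : Prop :=
  ContDiffOn ℝ 2 u (Set.Ici 0) ∧
  (∀ r : ℝ, 0 ≤ r → 0 < u r) ∧
  (∀ r : ℝ, 0 < r →
    iteratedDerivWithin 2 u (Set.Ici 0) r
      + ((n : ℝ) - 1) / r * derivWithin u (Set.Ici 0) r + f (u r) = 0) ∧
  derivWithin u (Set.Ici 0) 0 = 0 ∧
  Tendsto u atTop (nhds 0)

/-!
Write the nonlinearity as `u * h u`, where `h` increases and then decreases. A positive solution is
strictly decreasing, and its decay exponent `θ = -r u'/u` satisfies the Riccati equation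
`r θ' = θ² - (n - 2) θ + r² h(u)`. A Pohozaev-type argument shows that `θ` increases strictly from
`0` to `∞`, so it can serve as the independent variable, and two solutions then differ only through
the forcing `r² h(u)`. The elasticity of `h` is strictly decreasing where `h` is positive; hence the
solution with the larger initial height stays above the other one at all radii. But then compare the
two at equal heights: the excess of the squared slope of the upper solution over that of the lower
one, weighted by `r^(2(n-1))` with `r` the radius of the upper one, starts out positive and never
decreases, whereas it must tend to `0` because solutions decay exponentially. So the initial heights
agree, and uniqueness for the initial value problem finishes the proof.
-/

open Set Topology

/-! ### Calculus -/

section Calculus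

variable {g g' : ℝ → ℝ} {a b d x : ℝ}

theorem exists_mem_Ioo_lt_of_hasDerivAt_pos (hg : HasDerivAt g d x) (hd : 0 < d) (hax : a < x) :
    ∃ y ∈ Ioo a x, g y < g x := by
  have hslope : ∀ᶠ y in 𝓝[<] x, 0 < slope g x y :=
    (hg.tendsto_slope.mono_left (nhdsWithin_mono _ fun _ hy => ne_of_lt hy)).eventually_const_lt hd
  obtain ⟨y, hy, hys⟩ := (hslope.and (Ioo_mem_nhdsLT hax)).exists
  refine ⟨y, hys, ?_⟩
  rw [slope_def_field, div_pos_iff] at hy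
  rcases hy with hy | hy <;> linarith [hys.2]

theorem nonpos_of_isLocalMax (hmax : IsLocalMax g x) (hg : ∀ᶠ y in 𝓝 x, HasDerivAt g (g' y) y)
    (hg' : HasDerivAt g' d x) : d ≤ 0 := by
  by_contra! hd
  have hderiv : deriv g =ᶠ[𝓝 x] g' := hg.mono fun y hy => hy.deriv
  have hd2 : deriv (deriv g) x = d := hderiv.deriv_eq.trans hg'.deriv
  have hmin : IsLocalMin g x := isLocalMin_of_deriv_deriv_pos (hd2.symm ▸ hd) hmax.deriv_eq_zero
    hg.self_of_nhds.continuousAt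
  have hconst : g =ᶠ[𝓝 x] fun _ => g x := by
    filter_upwards [hmax, hmin] with y hy hy' using hy.antisymm hy'
  have hzero : deriv (deriv g) x = 0 := by simpa using hconst.deriv.deriv_eq
  exact hd.ne' (hd2.symm.trans hzero)

theorem pos_on_Icc_of_ne_zero (hg : ContinuousOn g (Icc a b)) (ha : 0 < g a)
    (hne : ∀ x ∈ Ioc a b, (∀ s ∈ Ico a x, 0 < g s) → g x ≠ 0) :
    ∀ x ∈ Icc a b, 0 < g x := by
  by_contra! ⟨x, hx, hgx⟩
  have exists_zero : ∀ y ∈ Icc a b, g y ≤ 0 → ∃ z ∈ Icc a y, g z = 0 := fun y hy hgy =>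
    intermediate_value_Icc' hy.1 (hg.mono (Icc_subset_Icc_right hy.2)) ⟨hgy, ha.le⟩
  obtain ⟨w, hw, hgw⟩ := exists_zero x hx hgx
  have hcompact : IsCompact (Icc a b ∩ g ⁻¹' {0}) :=
    isCompact_Icc.of_isClosed_subset
      (hg.preimage_isClosed_of_isClosed isClosed_Icc isClosed_singleton) inter_subset_left
  obtain ⟨z, ⟨hz, hgz⟩, hleast⟩ := hcompact.exists_isLeast ⟨w, ⟨hw.1, hw.2.trans hx.2⟩, hgw⟩
  have haz : a < z := hz.1.lt_of_ne (by rintro rfl; exact ha.ne' hgz)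
  refine hne z ⟨haz, hz.2⟩ (fun s hs => ?_) hgz
  by_contra! hgs
  obtain ⟨y, hy, hgy⟩ := exists_zero s ⟨hs.1, hs.2.le.trans hz.2⟩ hgs
  have hzy : z ≤ y := hleast ⟨⟨hy.1, hy.2.trans (hs.2.le.trans hz.2)⟩, hgy⟩
  linarith [hy.2, hs.2]

theorem pos_on_Icc_of_deriv_pos_at_zero (hg : ContinuousOn g (Icc a b)) (ha : 0 < g a)
    (hd : ∀ x ∈ Ioc a b, (∀ s ∈ Ico a x, 0 < g s) → g x = 0 → ∃ d, 0 < d ∧ HasDerivAt g d x) :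
    ∀ x ∈ Icc a b, 0 < g x := by
  refine pos_on_Icc_of_ne_zero hg ha fun x hx hpos hgx => ?_
  obtain ⟨d, hd, hder⟩ := hd x hx hpos hgx
  obtain ⟨y, hy, hyx⟩ := exists_mem_Ioo_lt_of_hasDerivAt_pos hder hd hx.1
  linarith [hpos y ⟨hy.1.le, hy.2⟩]

theorem pos_of_tendsto_zero_of_deriv_pos (hlim : Tendsto g (𝓝[>] a) (𝓝 0))
    (hd : ∀ x ∈ Ioc a b, HasDerivAt g (g' x) x) (hpos : ∀ x ∈ Ioc a b, g x ≤ 0 → 0 < g' x)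
    (hab : a < b) : 0 < g b := by
  by_contra! hgb
  have hb : b ∈ Ioc a b := right_mem_Ioc.2 hab
  obtain ⟨y, hy, hyb⟩ := exists_mem_Ioo_lt_of_hasDerivAt_pos (hd b hb) (hpos b hb hgb) hab
  have hgy : g y < 0 := hyb.trans_le hgb
  obtain ⟨e, he, hey⟩ :=
    ((hlim.eventually_const_lt hgy).and (Ioo_mem_nhdsGT hy.1)).exists
  have hsub : Icc e b ⊆ Ioc a b := fun x hx => ⟨hey.1.trans_le hx.1, hx.2⟩
  obtain ⟨z, hz, hmin⟩ := isCompact_Icc.exists_isMinOn ⟨y, hey.2.le, hy.2.le⟩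
    fun x hx => (hd x (hsub hx)).continuousAt.continuousWithinAt
  have hzy : g z ≤ g y := hmin ⟨hey.2.le, hy.2.le⟩
  have hez : e < z := hz.1.lt_of_ne (by rintro rfl; linarith)
  obtain ⟨s, hs, hsz⟩ := exists_mem_Ioo_lt_of_hasDerivAt_pos (hd z (hsub hz))
    (hpos z (hsub hz) (hzy.trans hgy.le)) hez
  exact hsz.not_ge (hmin ⟨hs.1.le, hs.2.le.trans hz.2⟩)

theorem pos_of_unimodal (hg : ContinuousOn g (Ici 0)) (h0 : g 0 = 0)
    (htop : Tendsto g atTop (𝓝 0)) (hd : ∀ x, 0 < x → HasDerivAt g (g' x) x)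
    (huni : ∀ s t, 0 < s → s < t → 0 ≤ g' t → 0 < g' s) (hx : 0 < x) : 0 < g x := by
  rcases le_or_gt 0 (g' x) with hx' | hx'
  · have hmono : StrictMonoOn g (Icc 0 x) := by
      refine strictMonoOn_of_hasDerivWithinAt_pos (convex_Icc 0 x) (hg.mono Icc_subset_Ici_self)
        (f' := g') (fun s hs => ?_) fun s hs => ?_ <;> rw [interior_Icc] at hs
      · exact (hd s hs.1).hasDerivWithinAt
      · exact huni s x hs.1 hs.2 hx'
    exact h0 ▸ hmono (left_mem_Icc.2 hx.le) (right_mem_Icc.2 hx.le) hx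
  · have hanti : StrictAntiOn g (Ici x) := by
      refine strictAntiOn_of_hasDerivWithinAt_neg (convex_Ici x)
        (hg.mono (Ici_subset_Ici.2 hx.le)) (f' := g') (fun s hs => ?_) fun s hs => ?_ <;>
        rw [interior_Ici] at hs
      · exact (hd s (hx.trans hs)).hasDerivWithinAt
      · by_contra! hs'
        exact hx'.not_gt (huni x s hx hs hs')
    have hnext : 0 ≤ g (x + 1) := by
      refine le_of_tendsto htop ((eventually_ge_atTop (x + 1)).mono fun s hs => ?_)
      have hxs : x ≤ x + 1 := by linarith
      exact hanti.antitoneOn hxs (hxs.trans hs) hs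
    exact hnext.trans_lt (hanti self_mem_Ici (by simp) (by linarith))

theorem eq_zero_of_hasDerivAt_le_mul {K : ℝ} (hg : ContinuousOn g (Icc a b)) (ha : g a = 0)
    (hb : 0 ≤ g b) (hd : ∀ x ∈ Ioo a b, HasDerivAt g (g' x) x)
    (hle : ∀ x ∈ Ioo a b, g' x ≤ K * g x) (hab : a ≤ b) : g b = 0 := by
  have hanti : AntitoneOn (fun x => g x * Real.exp (-K * x)) (Icc a b) := by
    refine antitoneOn_of_hasDerivWithinAt_nonpos (convex_Icc a b) (hg.mul (by fun_prop))
      (f' := fun x => (g' x - K * g x) * Real.exp (-K * x)) (fun x hx => ?_) fun x hx => ?_ <;>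
      rw [interior_Icc] at hx
    · have hexp := ((hasDerivAt_id x).const_mul (-K)).exp
      refine (((hd x hx).mul hexp).congr_deriv ?_).hasDerivWithinAt
      simp only [id]
      ring
    · exact mul_nonpos_of_nonpos_of_nonneg (sub_nonpos.2 (hle x hx)) (Real.exp_pos _).le
  have hgb := hanti (left_mem_Icc.2 hab) (right_mem_Icc.2 hab) hab
  simp only [ha, zero_mul] at hgb
  exact (nonpos_of_mul_nonpos_left hgb (Real.exp_pos _)).antisymm hb

theorem hasDerivAt_invFunOn {s : Set ℝ} (hs : IsOpen s) (hmono : StrictMonoOn g s)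
    (hd : ∀ x ∈ s, HasDerivAt g (g' x) x) (hx : x ∈ s) (hne : g' x ≠ 0) :
    HasDerivAt (Function.invFunOn g s) (g' x)⁻¹ (g x) := by
  have himage : g '' s ∈ 𝓝 (g x) := by
    obtain ⟨l, r, -, hlr, hsub⟩ := exists_Icc_mem_subset_of_mem_nhds (hs.mem_nhds hx)
    rw [Icc_mem_nhds_iff] at hlr
    have hle := (hlr.1.trans hlr.2).le
    refine mem_of_superset (Icc_mem_nhds (hmono (hsub (left_mem_Icc.2 hle)) hx hlr.1)
      (hmono hx (hsub (right_mem_Icc.2 hle)) hlr.2)) ((intermediate_value_Icc hle ?_).trans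
        (image_mono hsub))
    exact fun y hy => (hd y (hsub hy)).continuousAt.continuousWithinAt
  have hright : ∀ᶠ y in 𝓝 (g x), g (Function.invFunOn g s y) = y :=
    mem_of_superset himage fun y hy => Function.invFunOn_eq hy
  have hleft : Function.invFunOn g s (g x) = x := hmono.injOn.leftInvOn_invFunOn hx
  have hcont : ContinuousAt (Function.invFunOn g s) (g x) := by
    refine StrictMonoOn.continuousAt_of_image_mem_nhds (s := g '' s) ?_ himage ?_
    · rintro _ ⟨y, hy, rfl⟩ _ ⟨z, hz, rfl⟩ hyz
      rw [hmono.injOn.leftInvOn_invFunOn hy, hmono.injOn.leftInvOn_invFunOn hz]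
      exact (hmono.lt_iff_lt hy hz).1 hyz
    · rw [hmono.injOn.leftInvOn_invFunOn.image_image, hleft]
      exact hs.mem_nhds hx
  exact .of_local_left_inverse hcont (hleft.symm ▸ hd x hx) hne hright

theorem tendsto_sq_nhdsGT_zero : Tendsto (fun x : ℝ => x ^ 2) (𝓝[>] 0) (𝓝 0) :=
  ((continuous_pow 2).tendsto' 0 0 (zero_pow two_ne_zero)).mono_left nhdsWithin_le_nhds

theorem tendsto_rpow_nhdsGT_zero (ha : 0 < a) : Tendsto (fun x : ℝ => x ^ a) (𝓝[>] 0) (𝓝 0) :=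
  ((Real.continuous_rpow_const ha.le).tendsto' 0 0 (Real.zero_rpow ha.ne')).mono_left
    nhdsWithin_le_nhds

theorem natCast_mul_pow_pred_eq (k : ℕ) (hx : x ≠ 0) : (k : ℝ) * x ^ (k - 1) = k / x * x ^ k := by
  rcases k with _ | k
  · simp
  · rw [Nat.add_sub_cancel, pow_succ]
    field_simp

theorem tendsto_pow_mul_zero_of_hasDerivAt_le_neg_mul {α : ℝ} (hα : 0 < α)
    (hpos : ∀ᶠ r in atTop, 0 ≤ g r) (hd : ∀ᶠ r in atTop, HasDerivAt g (g' r) r)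
    (hle : ∀ᶠ r in atTop, g' r ≤ -α * g r) (j : ℕ) :
    Tendsto (fun r => r ^ j * g r) atTop (𝓝 0) := by
  obtain ⟨R, hR⟩ := eventually_atTop.1 (hpos.and (hd.and hle))
  have hder : ∀ r, R ≤ r → HasDerivAt (fun r => g r * Real.exp (α * r))
      ((g' r + α * g r) * Real.exp (α * r)) r := fun r hr => by
    refine ((hR r hr).2.1.mul ((hasDerivAt_id r).const_mul α).exp).congr_deriv ?_
    simp only [id]
    ring
  have hanti : AntitoneOn (fun r => g r * Real.exp (α * r)) (Ici R) := by
    refine antitoneOn_of_hasDerivWithinAt_nonpos (convex_Ici R)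
      (fun r hr => (hder r hr).continuousAt.continuousWithinAt)
      (f' := fun r => (g' r + α * g r) * Real.exp (α * r))
      (fun r hr => ?_) fun r hr => ?_ <;> rw [interior_Ici] at hr
    · exact (hder r (le_of_lt hr)).hasDerivWithinAt
    · exact mul_nonpos_of_nonpos_of_nonneg (by linarith [(hR r (le_of_lt hr)).2.2])
        (Real.exp_pos _).le
  have hexp : Tendsto (fun r : ℝ => r ^ j * Real.exp (-α * r)) atTop (𝓝 0) := by
    simpa using tendsto_rpow_mul_exp_neg_mul_atTop_nhds_zero j α hα
  refine squeeze_zero' (g := fun r => g R * Real.exp (α * R) * (r ^ j * Real.exp (-α * r)))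
    ?_ ?_ (by simpa using hexp.const_mul (g R * Real.exp (α * R)))
  · filter_upwards [hpos, eventually_ge_atTop 0] with r hgr hr
    exact mul_nonneg (pow_nonneg hr j) hgr
  · filter_upwards [eventually_ge_atTop R, eventually_ge_atTop 0] with r hr hr0
    have hgr : g r = g r * Real.exp (α * r) * Real.exp (-α * r) := by
      rw [mul_assoc, ← Real.exp_add]
      simp
    calc r ^ j * g r = g r * Real.exp (α * r) * (r ^ j * Real.exp (-α * r)) := by
          nth_rw 1 [hgr]
          ring
      _ ≤ g R * Real.exp (α * R) * (r ^ j * Real.exp (-α * r)) :=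
          mul_le_mul_of_nonneg_right (hanti self_mem_Ici hr hr) (by positivity)

theorem two_mul_mul_sub_add_le {x y z κ L : ℝ} (hκ : 0 ≤ κ) (hL : 0 ≤ L) (hz : |z| ≤ L * |x|) :
    2 * y * (-κ * y - z) + 2 * x * y ≤ (L + 1) * (y ^ 2 + x ^ 2) := by
  have hyz : -(y * z) ≤ |y| * (L * |x|) :=
    (neg_le_abs _).trans (abs_mul y z ▸ mul_le_mul_of_nonneg_left hz (abs_nonneg y))
  have hamgm : 2 * |y| * |x| ≤ y ^ 2 + x ^ 2 := by simpa using two_mul_le_add_sq |y| |x|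
  have hL' := mul_le_mul_of_nonneg_left hamgm hL
  have hκ' := mul_nonneg hκ (sq_nonneg y)
  linarith [two_mul_le_add_sq x y]

end Calculus

/-! ### Bump nonlinearities -/

/-- The elasticity `d log |h| / d log x = x h'(x) / h(x)` of `h`, with `dh` standing for `h'`. -/
noncomputable def elasticity (h dh : ℝ → ℝ) (x : ℝ) : ℝ := x * dh x / h x

/-- `h` has derivative `dh` on `(0, ∞)`, which is positive before `m` and negative after `m`. -/
structure IsUnimodal (h dh : ℝ → ℝ) (m : ℝ) : Prop where
  m_pos : 0 < m
  hasDerivAt : ∀ x, 0 < x → HasDerivAt h (dh x) x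
  deriv_pos : ∀ x, 0 < x → x < m → 0 < dh x
  deriv_neg : ∀ x, m < x → dh x < 0

/-- The nonlinearities `x ↦ x * h x` covered by the uniqueness argument. The function `h` rises from
`-ω` at `0` through its zero `b` to its maximum at `m`, then falls through its zero `c`; `dh` is its
derivative, `H` the primitive of `x * h x` vanishing at `0`, and the elasticity is strictly
decreasing between the two zeros. -/
structure IsBump (h dh H : ℝ → ℝ) (ω b m c : ℝ) : Prop extends IsUnimodal h dh m where
  ω_pos : 0 < ω
  b_pos : 0 < b
  b_lt_m : b < m
  m_lt_c : m < c
  continuousOn_deriv : ContinuousOn dh (Ioi 0)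
  tendsto_zero : Tendsto h (𝓝[>] 0) (𝓝 (-ω))
  apply_b : h b = 0
  apply_c : h c = 0
  hasDerivAt_primitive : ∀ x, 0 < x → HasDerivAt H (x * h x) x
  primitive_tendsto_zero : Tendsto H (𝓝[>] 0) (𝓝 0)
  strictAntiOn_elasticity : StrictAntiOn (elasticity h dh) (Ioo b c)

namespace IsUnimodal

variable {h dh : ℝ → ℝ} {b m c x y l : ℝ}

theorem strictMonoOn (hh : IsUnimodal h dh m) : StrictMonoOn h (Ioc 0 m) := by
  refine strictMonoOn_of_hasDerivWithinAt_pos (convex_Ioc 0 m)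
    (fun x hx => (hh.hasDerivAt x hx.1).continuousAt.continuousWithinAt) (f' := dh)
    (fun x hx => ?_) fun x hx => ?_ <;> rw [interior_Ioc] at hx
  · exact (hh.hasDerivAt x hx.1).hasDerivWithinAt
  · exact hh.deriv_pos x hx.1 hx.2

theorem strictAntiOn (hh : IsUnimodal h dh m) : StrictAntiOn h (Ici m) := by
  refine strictAntiOn_of_hasDerivWithinAt_neg (convex_Ici m)
    (fun x hx => (hh.hasDerivAt x (hh.m_pos.trans_le hx)).continuousAt.continuousWithinAt)
    (f' := dh) (fun x hx => ?_) fun x hx => ?_ <;> rw [interior_Ici] at hx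
  · exact (hh.hasDerivAt x (hh.m_pos.trans hx)).hasDerivWithinAt
  · exact hh.deriv_neg x hx

theorem pos_between_zeros (hh : IsUnimodal h dh m) (hb : 0 < b) (hbm : b < m) (hmc : m < c)
    (hhb : h b = 0) (hhc : h c = 0) (hx : x ∈ Ioo b c) : 0 < h x := by
  rcases le_total x m with hxm | hxm
  · exact hhb ▸ hh.strictMonoOn ⟨hb, hbm.le⟩ ⟨hb.trans hx.1, hxm⟩ hx.1
  · exact hhc ▸ hh.strictAntiOn hxm hmc.le hx.2

theorem apply_le (hh : IsUnimodal h dh m) (hx : 0 < x) : h x ≤ h m := by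
  rcases le_total x m with hxm | hxm
  · exact hh.strictMonoOn.monotoneOn ⟨hx, hxm⟩ (right_mem_Ioc.2 hh.m_pos) hxm
  · exact hh.strictAntiOn.antitoneOn self_mem_Ici hxm hxm

theorem exists_zero_lt (hh : IsUnimodal h dh m) (hlim : Tendsto h (𝓝[>] 0) (𝓝 l)) (hl : l < 0)
    (hm : 0 < h m) : ∃ b, 0 < b ∧ b < m ∧ h b = 0 := by
  obtain ⟨x, hhx, hx⟩ :=
    ((hlim.eventually_lt_const hl).and (Ioo_mem_nhdsGT hh.m_pos)).exists
  obtain ⟨b, hb, hhb⟩ := intermediate_value_Ioo hx.2.le (fun y hy =>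
    (hh.hasDerivAt y (hx.1.trans_le hy.1)).continuousAt.continuousWithinAt) ⟨hhx, hm⟩
  exact ⟨b, hx.1.trans hb.1, hb.2, hhb⟩

theorem exists_zero_gt (hh : IsUnimodal h dh m) (hm : 0 < h m) (hmy : m < y) (hy : h y < 0) :
    ∃ c, m < c ∧ h c = 0 := by
  obtain ⟨c, hc, hhc⟩ := intermediate_value_Ioo' hmy.le (fun x hx =>
    (hh.hasDerivAt x (hh.m_pos.trans_le hx.1)).continuousAt.continuousWithinAt) ⟨hy, hm⟩
  exact ⟨c, hc.1, hhc⟩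

end IsUnimodal

/-- The density `(k + 1) H(x) - (k - 1)/2 x² h(x)` in the Pohozaev identity
`(r^(k+1) (v²/2 + H(u)) + (k - 1)/2 r^k u v)' = r^k pohozaevDensity(u)` for radial solutions in
dimension `k + 1`. -/
noncomputable def pohozaevDensity (k : ℕ) (h H : ℝ → ℝ) (x : ℝ) : ℝ :=
  (k + 1) * H x - (k - 1) / 2 * (x ^ 2 * h x)

namespace IsBump

variable {h dh H : ℝ → ℝ} {ω b m c x y : ℝ}

theorem neg_of_lt_b (hh : IsBump h dh H ω b m c) (hx : 0 < x) (hxb : x < b) : h x < 0 := by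
  rw [← hh.apply_b]
  exact hh.strictMonoOn ⟨hx, (hxb.trans hh.b_lt_m).le⟩ ⟨hh.b_pos, hh.b_lt_m.le⟩ hxb

theorem pos_of_mem_Ioo (hh : IsBump h dh H ω b m c) (hx : x ∈ Ioo b c) : 0 < h x :=
  hh.pos_between_zeros hh.b_pos hh.b_lt_m hh.m_lt_c hh.apply_b hh.apply_c hx

theorem neg_of_c_lt (hh : IsBump h dh H ω b m c) (hx : c < x) : h x < 0 := by
  rw [← hh.apply_c]
  exact hh.strictAntiOn hh.m_lt_c.le (hh.m_lt_c.trans hx).le hx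

theorem eq_or_eq_of_apply_eq_zero (hh : IsBump h dh H ω b m c) (hx : 0 < x) (hhx : h x = 0) :
    x = b ∨ x = c := by
  rcases lt_trichotomy x b with hxb | hxb | hxb
  · exact absurd hhx (hh.neg_of_lt_b hx hxb).ne
  · exact .inl hxb
  rcases lt_trichotomy x c with hxc | hxc | hxc
  · exact absurd hhx (hh.pos_of_mem_Ioo ⟨hxb, hxc⟩).ne'
  · exact .inr hxc
  · exact absurd hhx (hh.neg_of_c_lt hxc).ne

theorem primitive_neg (hh : IsBump h dh H ω b m c) (hx : 0 < x) (hxb : x ≤ b) : H x < 0 := by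
  have hanti : StrictAntiOn H (Ioc 0 b) := by
    refine strictAntiOn_of_hasDerivWithinAt_neg (convex_Ioc 0 b)
      (fun s hs => (hh.hasDerivAt_primitive s hs.1).continuousAt.continuousWithinAt)
      (f' := fun s => s * h s) (fun s hs => ?_) fun s hs => ?_ <;> rw [interior_Ioc] at hs
    · exact (hh.hasDerivAt_primitive s hs.1).hasDerivWithinAt
    · exact mul_neg_of_pos_of_neg hs.1 (hh.neg_of_lt_b hs.1 hs.2)
  have hhalf : H (x / 2) ≤ 0 := by
    refine ge_of_tendsto hh.primitive_tendsto_zero ?_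
    filter_upwards [Ioo_mem_nhdsGT (half_pos hx)] with s hs
    exact (hanti ⟨hs.1, by linarith [hs.2]⟩ ⟨half_pos hx, by linarith⟩ hs.2).le
  exact (hanti ⟨half_pos hx, by linarith⟩ ⟨hx, hxb⟩ (half_lt_self hx)).trans_le hhalf

theorem primitive_lt (hh : IsBump h dh H ω b m c) (hx : 0 < x) (hxy : x < y) (hyc : y ≤ c)
    (hy : 0 ≤ H y) : H x < H y := by
  rcases le_total x b with hxb | hbx
  · exact (hh.primitive_neg hx hxb).trans_le hy
  have hmono : StrictMonoOn H (Icc b c) := by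
    refine strictMonoOn_of_hasDerivWithinAt_pos (convex_Icc b c)
      (fun s hs => (hh.hasDerivAt_primitive s
        (hh.b_pos.trans_le hs.1)).continuousAt.continuousWithinAt)
      (f' := fun s => s * h s) (fun s hs => ?_) fun s hs => ?_ <;> rw [interior_Icc] at hs
    · exact (hh.hasDerivAt_primitive s (hh.b_pos.trans hs.1)).hasDerivWithinAt
    · exact mul_pos (hh.b_pos.trans hs.1) (hh.pos_of_mem_Ioo hs)
  exact hmono ⟨hbx, hxy.le.trans hyc⟩ ⟨hbx.trans hxy.le, hyc⟩ hxy

theorem primitive_le_half_sq_mul (hh : IsBump h dh H ω b m c) (hx : 0 < x) (hxm : x ≤ m) :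
    H x ≤ x ^ 2 * h x / 2 := by
  have hder : ∀ s, 0 < s →
      HasDerivAt (fun s => s ^ 2 * h s / 2 - H s) (s ^ 2 * dh s / 2) s := fun s hs => by
    refine (((((hasDerivAt_id s).pow 2).mul (hh.hasDerivAt s hs)).div_const 2).sub
      (hh.hasDerivAt_primitive s hs)).congr_deriv ?_
    simp only [id, Nat.cast_ofNat, Nat.add_one_sub_one, pow_one, Pi.pow_apply]
    ring
  have hmono : MonotoneOn (fun s => s ^ 2 * h s / 2 - H s) (Ioc 0 m) := by
    refine monotoneOn_of_hasDerivWithinAt_nonneg (convex_Ioc 0 m)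
      (fun s hs => (hder s hs.1).continuousAt.continuousWithinAt)
      (f' := fun s => s ^ 2 * dh s / 2) (fun s hs => ?_) fun s hs => ?_ <;> rw [interior_Ioc] at hs
    · exact (hder s hs.1).hasDerivWithinAt
    · have := hh.deriv_pos s hs.1 hs.2
      positivity
  have hlim : Tendsto (fun s => s ^ 2 * h s / 2 - H s) (𝓝[>] 0) (𝓝 0) := by
    simpa using ((tendsto_sq_nhdsGT_zero.mul hh.tendsto_zero).div_const 2).sub
      hh.primitive_tendsto_zero
  rw [← sub_nonneg]
  refine le_of_tendsto hlim ?_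
  filter_upwards [Ioo_mem_nhdsGT hx] with s hs
  exact hmono ⟨hs.1, hs.2.le.trans hxm⟩ ⟨hx, hxm⟩ hs.2.le

theorem exists_lipschitzOnWith (hh : IsBump h dh H ω b m c) (hx : 0 < x) :
    ∃ L, LipschitzOnWith L (fun s => s * h s) (Icc x y) := by
  have hpos : Icc x y ⊆ Ioi 0 := fun s hs => hx.trans_le hs.1
  have hcont : ContinuousOn (fun s => h s + s * dh s) (Icc x y) :=
    ContinuousOn.add (fun s hs => (hh.hasDerivAt s (hpos hs)).continuousAt.continuousWithinAt)
      (continuousOn_id.mul (hh.continuousOn_deriv.mono hpos))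
  obtain ⟨L, hL⟩ := isCompact_Icc.exists_bound_of_continuousOn hcont
  refine ⟨L.toNNReal, (convex_Icc x y).lipschitzOnWith_of_nnnorm_hasDerivWithin_le
    (f' := fun s => h s + s * dh s) (fun z hz => ?_)
    fun z hz => NNReal.le_toNNReal_of_coe_le (hL z hz)⟩
  refine (((hasDerivAt_id z).mul (hh.hasDerivAt z (hpos hz))).congr_deriv ?_).hasDerivWithinAt
  simp

theorem tendsto_primitive_div_sq (hh : IsBump h dh H ω b m c) :
    Tendsto (fun x => H x / x ^ 2) (𝓝[>] 0) (𝓝 (-ω / 2)) := by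
  refine HasDerivAt.lhopital_zero_nhdsGT (f' := fun x => x * h x) (g' := fun x => 2 * x)
    ?_ (.of_forall fun x => by simpa using hasDerivAt_pow 2 x) ?_ hh.primitive_tendsto_zero
    tendsto_sq_nhdsGT_zero ?_
  · filter_upwards [self_mem_nhdsWithin] with x hx using hh.hasDerivAt_primitive x hx
  · filter_upwards [self_mem_nhdsWithin] with x (hx : 0 < x)
    positivity
  · refine (hh.tendsto_zero.div_const 2).congr' ?_
    filter_upwards [self_mem_nhdsWithin] with x (hx : 0 < x)
    field_simp

theorem pohozaevDensity_neg (hh : IsBump h dh H ω b m c) {k : ℕ} (hk : 1 ≤ k) (hx : 0 < x)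
    (hxb : x ≤ b) : pohozaevDensity k h H x < 0 := by
  have hk' : (1 : ℝ) ≤ k := by exact_mod_cast hk
  have hH := hh.primitive_neg hx hxb
  have hle := hh.primitive_le_half_sq_mul hx (hxb.trans hh.b_lt_m.le)
  have hprod := mul_nonneg (sub_nonneg.2 hk') (sub_nonneg.2 hle)
  rw [pohozaevDensity]
  linarith

theorem hasDerivAt_pohozaevDensity (hh : IsBump h dh H ω b m c) (k : ℕ) (hx : x ∈ Ioo b c) :
    HasDerivAt (pohozaevDensity k h H)
      (x * h x * (2 - (k - 1) / 2 * elasticity h dh x)) x := by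
  have hx0 := hh.b_pos.trans hx.1
  have hhx := (hh.pos_of_mem_Ioo hx).ne'
  have hsq := ((hasDerivAt_pow 2 x).mul (hh.hasDerivAt x hx0)).const_mul (((k : ℝ) - 1) / 2)
  refine (((hh.hasDerivAt_primitive x hx0).const_mul ((k : ℝ) + 1)).sub hsq).congr_deriv ?_
  simp only [elasticity, Nat.cast_ofNat, Nat.add_one_sub_one, pow_one]
  field_simp
  ring

theorem continuousOn_pohozaevDensity (hh : IsBump h dh H ω b m c) (k : ℕ) :
    ContinuousOn (pohozaevDensity k h H) (Ioi 0) := fun x hx =>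
  have hsq := ((continuousAt_id.pow 2).mul (hh.hasDerivAt x hx).continuousAt).const_mul _
  (((hh.hasDerivAt_primitive x hx).continuousAt.const_mul _).sub hsq).continuousWithinAt

theorem monotoneOn_pohozaevSlope (hh : IsBump h dh H ω b m c) {k : ℕ} (hk : 1 ≤ k) :
    MonotoneOn (fun x => 2 - ((k : ℝ) - 1) / 2 * elasticity h dh x) (Ioo b c) := by
  have hk' : (1 : ℝ) ≤ k := by exact_mod_cast hk
  exact fun x hx y hy hxy => sub_le_sub_left (mul_le_mul_of_nonneg_left
    (hh.strictAntiOn_elasticity.antitoneOn hx hy hxy) (by linarith)) 2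

theorem pohozaevDensity_neg_of_slope_nonpos (hh : IsBump h dh H ω b m c) {k : ℕ} (hk : 1 ≤ k)
    (hx : x ∈ Ioo b c) (hslope : 2 - ((k : ℝ) - 1) / 2 * elasticity h dh x ≤ 0) :
    pohozaevDensity k h H x < 0 := by
  have hanti : AntitoneOn (pohozaevDensity k h H) (Icc b x) := by
    refine antitoneOn_of_hasDerivWithinAt_nonpos (convex_Icc b x)
      ((hh.continuousOn_pohozaevDensity k).mono fun s hs => hh.b_pos.trans_le hs.1)
      (f' := fun s => s * h s * (2 - (k - 1) / 2 * elasticity h dh s)) (fun s hs => ?_)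
      fun s hs => ?_ <;> rw [interior_Icc] at hs
    all_goals have hs' : s ∈ Ioo b c := ⟨hs.1, hs.2.trans hx.2⟩
    · exact (hh.hasDerivAt_pohozaevDensity k hs').hasDerivWithinAt
    · exact mul_nonpos_of_nonneg_of_nonpos
        (mul_pos (hh.b_pos.trans hs.1) (hh.pos_of_mem_Ioo hs')).le
        ((hh.monotoneOn_pohozaevSlope hk hs' hx hs.2.le).trans hslope)
  exact (hanti (left_mem_Icc.2 hx.1.le) (right_mem_Icc.2 hx.1.le) hx.1.le).trans_lt
    (hh.pohozaevDensity_neg hk hh.b_pos le_rfl)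

theorem strictMonoOn_pohozaevDensity (hh : IsBump h dh H ω b m c) {k : ℕ} (hk : 1 ≤ k)
    (hx : x ∈ Ioo b c) (hslope : 0 < 2 - ((k : ℝ) - 1) / 2 * elasticity h dh x) :
    StrictMonoOn (pohozaevDensity k h H) (Ico x c) := by
  refine strictMonoOn_of_hasDerivWithinAt_pos (convex_Ico x c)
    ((hh.continuousOn_pohozaevDensity k).mono fun s hs => (hh.b_pos.trans hx.1).trans_le hs.1)
    (f' := fun s => s * h s * (2 - (k - 1) / 2 * elasticity h dh s)) (fun s hs => ?_)
    fun s hs => ?_ <;> rw [interior_Ico] at hs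
  all_goals have hs' : s ∈ Ioo b c := ⟨hx.1.trans hs.1, hs.2⟩
  · exact (hh.hasDerivAt_pohozaevDensity k hs').hasDerivWithinAt
  · exact mul_pos (mul_pos (hh.b_pos.trans hs'.1) (hh.pos_of_mem_Ioo hs'))
      (hslope.trans_le (hh.monotoneOn_pohozaevSlope hk hx hs' hs.1.le))

theorem pohozaevDensity_pos_of_lt (hh : IsBump h dh H ω b m c) {k : ℕ} (hk : 1 ≤ k) (hx : 0 < x)
    (hxy : x < y) (hyc : y < c) (hGx : 0 ≤ pohozaevDensity k h H x) :
    0 < pohozaevDensity k h H y := by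
  have hbx : b < x := by
    by_contra! hxb
    exact (hh.pohozaevDensity_neg hk hx hxb).not_ge hGx
  have hxc : x ∈ Ioo b c := ⟨hbx, hxy.trans hyc⟩
  have hslope : 0 < 2 - ((k : ℝ) - 1) / 2 * elasticity h dh x := by
    by_contra! hslope
    exact (hh.pohozaevDensity_neg_of_slope_nonpos hk hxc hslope).not_ge hGx
  exact hGx.trans_lt (hh.strictMonoOn_pohozaevDensity hk hxc hslope ⟨le_rfl, hxc.2⟩
    ⟨hxy.le, hyc⟩ hxy)

end IsBump

/-! ### Radial solutions -/

section Radial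

variable {h dh H : ℝ → ℝ} {ω b m c : ℝ} {k : ℕ} {u v : ℝ → ℝ} {a r s t : ℝ}
variable {u₁ v₁ u₂ v₂ : ℝ → ℝ} {I : Set ℝ}

/-- Positive trajectories on `[a, ∞)` of the radial equation `u'' + (k/r) u' + u h(u) = 0` in
dimension `k + 1`, written as a first-order system with `v = u'`. -/
structure IsRadialTrajectory (k : ℕ) (h u v : ℝ → ℝ) (a : ℝ) : Prop where
  continuousOn : ContinuousOn u (Ici a)
  continuousOn_deriv : ContinuousOn v (Ici a)
  pos : ∀ r, a ≤ r → 0 < u r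
  hasDerivAt : ∀ r, a < r → HasDerivAt u (v r) r
  hasDerivAt_deriv : ∀ r, a < r → HasDerivAt v (-(k / r) * v r - u r * h (u r)) r

/-- Positive solutions of the radial boundary value problem on `[0, ∞)` in dimension `k + 1`: they
satisfy `u'(0) = 0` and vanish at infinity. -/
structure IsRadialSolution (k : ℕ) (h u v : ℝ → ℝ) : Prop extends
    IsRadialTrajectory k h u v 0 where
  deriv_zero : v 0 = 0
  tendsto_atTop : Tendsto u atTop (𝓝 0)

/-- The energy `v²/2 + H(u)` of a radial trajectory, where `H` is a primitive of `x ↦ x * h x`. -/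
noncomputable def radialEnergy (H u v : ℝ → ℝ) (r : ℝ) : ℝ := v r ^ 2 / 2 + H (u r)

namespace IsRadialTrajectory

theorem mono (T : IsRadialTrajectory k h u v a) {a' : ℝ} (ha : a ≤ a') :
    IsRadialTrajectory k h u v a' where
  continuousOn := T.continuousOn.mono (Ici_subset_Ici.2 ha)
  continuousOn_deriv := T.continuousOn_deriv.mono (Ici_subset_Ici.2 ha)
  pos r hr := T.pos r (ha.trans hr)
  hasDerivAt r hr := T.hasDerivAt r (ha.trans_lt hr)
  hasDerivAt_deriv r hr := T.hasDerivAt_deriv r (ha.trans_lt hr)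

theorem const {x : ℝ} (hx : 0 < x) (hhx : h x = 0) :
    IsRadialTrajectory k h (fun _ => x) (fun _ => 0) a where
  continuousOn := continuousOn_const
  continuousOn_deriv := continuousOn_const
  pos _ _ := hx
  hasDerivAt r _ := hasDerivAt_const r x
  hasDerivAt_deriv r _ := by simpa [hhx] using hasDerivAt_const r (0 : ℝ)

theorem exists_mapsTo_Icc (T : IsRadialTrajectory k h u v a) (hr : a ≤ r) :
    ∃ x y, 0 < x ∧ MapsTo u (Icc a r) (Icc x y) := by
  have hcont := T.continuousOn.mono (Icc_subset_Ici_self : Icc a r ⊆ Ici a)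
  have hne : (Icc a r).Nonempty := nonempty_Icc.2 hr
  obtain ⟨s, hs, hmin⟩ := isCompact_Icc.exists_isMinOn hne hcont
  obtain ⟨t, -, hmax⟩ := isCompact_Icc.exists_isMaxOn hne hcont
  exact ⟨u s, u t, T.pos s hs.1, fun z hz => ⟨hmin hz, hmax hz⟩⟩

theorem eqOn (hh : IsBump h dh H ω b m c) {u₁ v₁ u₂ v₂ : ℝ → ℝ} (ha : 0 ≤ a)
    (T₁ : IsRadialTrajectory k h u₁ v₁ a) (T₂ : IsRadialTrajectory k h u₂ v₂ a)
    (hu : u₁ a = u₂ a) (hv : v₁ a = v₂ a) : EqOn u₁ u₂ (Ici a) := fun r hr => by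
  obtain ⟨x₁, y₁, hx₁, hmaps₁⟩ := T₁.exists_mapsTo_Icc hr
  obtain ⟨x₂, y₂, hx₂, hmaps₂⟩ := T₂.exists_mapsTo_Icc hr
  obtain ⟨L, hL⟩ := hh.exists_lipschitzOnWith (y := max y₁ y₂) (lt_min hx₁ hx₂)
  have hzero : (v₁ r - v₂ r) ^ 2 + (u₁ r - u₂ r) ^ 2 = 0 := by
    refine eq_zero_of_hasDerivAt_le_mul (g := fun s => (v₁ s - v₂ s) ^ 2 + (u₁ s - u₂ s) ^ 2)
      (K := L + 1) ?_ (by simp [hu, hv]) (by positivity) (fun s hs =>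
        (((T₁.hasDerivAt_deriv s hs.1).sub (T₂.hasDerivAt_deriv s hs.1)).pow 2).add
          (((T₁.hasDerivAt s hs.1).sub (T₂.hasDerivAt s hs.1)).pow 2)) (fun s hs => ?_) hr
    · exact (((T₁.continuousOn_deriv.sub T₂.continuousOn_deriv).pow 2).add
        ((T₁.continuousOn.sub T₂.continuousOn).pow 2)).mono Icc_subset_Ici_self
    · have hs' := Ioo_subset_Icc_self hs
      have hlip := hL.dist_le_mul (u₁ s)
        (Icc_subset_Icc (min_le_left _ _) (le_max_left _ _) (hmaps₁ hs')) (u₂ s)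
        (Icc_subset_Icc (min_le_right _ _) (le_max_right _ _) (hmaps₂ hs'))
      convert two_mul_mul_sub_add_le (y := v₁ s - v₂ s)
        (div_nonneg k.cast_nonneg (ha.trans hs'.1)) L.coe_nonneg hlip using 1
      simp only [Pi.sub_apply, Nat.cast_ofNat, Nat.add_one_sub_one, pow_one]
      ring
  exact sub_eq_zero.1 (pow_eq_zero_iff two_ne_zero |>.1
    ((add_eq_zero_iff_of_nonneg (sq_nonneg _) (sq_nonneg _)).1 hzero).2)

theorem hasDerivAt_flux (T : IsRadialTrajectory k h u v a) (ha : 0 ≤ a) (hr : a < r) :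
    HasDerivAt (fun r => r ^ k * v r) (-(r ^ k * (u r * h (u r)))) r := by
  refine ((hasDerivAt_pow k r).mul (T.hasDerivAt_deriv r hr)).congr_deriv ?_
  rw [natCast_mul_pow_pred_eq k (ha.trans_lt hr).ne']
  ring

end IsRadialTrajectory

namespace IsRadialSolution

theorem continuousOn_comp (S : IsRadialSolution k h u v) {g : ℝ → ℝ}
    (hg : ContinuousOn g (Ioi 0)) : ContinuousOn (fun r => g (u r)) (Ici 0) :=
  hg.comp S.continuousOn S.pos

theorem tendsto_deriv_div (hh : IsBump h dh H ω b m c) (S : IsRadialSolution k h u v) :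
    Tendsto (fun r => v r / r) (𝓝[>] 0) (𝓝 (-(u 0 * h (u 0)) / (k + 1))) := by
  have hcont : ContinuousOn (fun r => -(u r * h (u r)) / (k + 1)) (Ici 0) :=
    (S.continuousOn.mul (S.continuousOn_comp fun x hx =>
      (hh.hasDerivAt x hx).continuousAt.continuousWithinAt)).neg.div_const _
  have hflux : Tendsto (fun r => r ^ k * v r) (𝓝[>] 0) (𝓝 0) := by
    have hcv : ContinuousOn (fun r => r ^ k * v r) (Ici 0) :=
      (continuousOn_pow k).mul S.continuousOn_deriv
    simpa [S.deriv_zero] using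
      (hcv 0 self_mem_Ici).mono_left (nhdsWithin_mono _ Ioi_subset_Ici_self)
  have hpow : Tendsto (fun r : ℝ => r ^ (k + 1)) (𝓝[>] 0) (𝓝 0) :=
    ((continuous_pow (k + 1)).tendsto' 0 0 (by simp)).mono_left nhdsWithin_le_nhds
  refine (HasDerivAt.lhopital_zero_nhdsGT (f := fun r => r ^ k * v r)
    (g := fun r => r ^ (k + 1)) (f' := fun r => -(r ^ k * (u r * h (u r))))
    (g' := fun r => (k + 1) * r ^ k) ?_ ?_ ?_ hflux hpow ?_).congr' ?_
  · filter_upwards [self_mem_nhdsWithin] with r hr using S.hasDerivAt_flux le_rfl hr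
  · exact .of_forall fun r => by simpa using hasDerivAt_pow (k + 1) r
  · filter_upwards [self_mem_nhdsWithin] with r (hr : 0 < r)
    positivity
  · refine ((hcont 0 self_mem_Ici).mono_left
      (nhdsWithin_mono _ Ioi_subset_Ici_self)).congr' ?_
    filter_upwards [self_mem_nhdsWithin] with r (hr : 0 < r)
    field_simp
  · filter_upwards [self_mem_nhdsWithin] with r (hr : 0 < r)
    field_simp
    ring

theorem exists_pos (S : IsRadialSolution k h u v) : ∃ x, 0 < x ∧ 0 < h x := by
  by_contra! hneg
  have hv : ∀ r, 0 < r → 0 ≤ v r := fun r hr => by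
    have hmono : MonotoneOn (fun r => r ^ k * v r) (Ici 0) := by
      refine monotoneOn_of_hasDerivWithinAt_nonneg (convex_Ici 0)
        ((continuousOn_pow k).mul S.continuousOn_deriv) (f' := fun r => -(r ^ k * (u r * h (u r))))
        (fun s hs => ?_) fun s hs => ?_ <;> rw [interior_Ici] at hs
      · exact (S.hasDerivAt_flux le_rfl hs).hasDerivWithinAt
      · have hus := S.pos s (le_of_lt hs)
        exact neg_nonneg.2 (mul_nonpos_of_nonneg_of_nonpos (pow_nonneg (le_of_lt hs) k)
          (mul_nonpos_of_nonneg_of_nonpos hus.le (hneg _ hus)))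
    have hflux := hmono self_mem_Ici hr.le hr.le
    simp only [S.deriv_zero, mul_zero] at hflux
    exact nonneg_of_mul_nonneg_right hflux (pow_pos hr k)
  have hmono : MonotoneOn u (Ici 0) := by
    refine monotoneOn_of_hasDerivWithinAt_nonneg (convex_Ici 0) S.continuousOn (f' := v)
      (fun s hs => ?_) fun s hs => ?_ <;> rw [interior_Ici] at hs
    · exact (S.hasDerivAt s hs).hasDerivWithinAt
    · exact hv s hs
  have hlim : u 0 ≤ 0 := ge_of_tendsto S.tendsto_atTop
    ((eventually_ge_atTop 0).mono fun r hr => hmono self_mem_Ici hr hr)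
  exact hlim.not_gt (S.pos 0 le_rfl)

theorem continuousOn_energy (hh : IsBump h dh H ω b m c) (S : IsRadialSolution k h u v) :
    ContinuousOn (radialEnergy H u v) (Ici 0) :=
  ((S.continuousOn_deriv.pow 2).div_const 2).add (S.continuousOn_comp fun x hx =>
    (hh.hasDerivAt_primitive x hx).continuousAt.continuousWithinAt)

theorem hasDerivAt_energy (hh : IsBump h dh H ω b m c) (S : IsRadialSolution k h u v)
    (hr : 0 < r) : HasDerivAt (radialEnergy H u v) (-(k / r * v r ^ 2)) r := by
  refine ((((S.hasDerivAt_deriv r hr).pow 2).div_const 2).add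
    ((hh.hasDerivAt_primitive _ (S.pos r hr.le)).comp r (S.hasDerivAt r hr))).congr_deriv ?_
  simp only [Nat.cast_ofNat, Nat.add_one_sub_one, pow_one]
  ring

theorem antitoneOn_energy (hh : IsBump h dh H ω b m c) (S : IsRadialSolution k h u v) :
    AntitoneOn (radialEnergy H u v) (Ici 0) := by
  refine antitoneOn_of_hasDerivWithinAt_nonpos (convex_Ici 0) (S.continuousOn_energy hh)
    (f' := fun r => -(k / r * v r ^ 2)) (fun r hr => ?_) fun r hr => ?_ <;> rw [interior_Ici] at hr
  · exact (S.hasDerivAt_energy hh hr).hasDerivWithinAt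
  · have : 0 < r := hr
    exact neg_nonpos.2 (by positivity)

theorem tendsto_atTop_nhdsGT (S : IsRadialSolution k h u v) : Tendsto u atTop (𝓝[>] 0) :=
  tendsto_nhdsWithin_iff.2
    ⟨S.tendsto_atTop, (eventually_ge_atTop 0).mono fun r hr => S.pos r hr⟩

theorem energy_nonneg (hh : IsBump h dh H ω b m c) (S : IsRadialSolution k h u v) (hr : 0 ≤ r) :
    0 ≤ radialEnergy H u v r := by
  refine le_of_tendsto (hh.primitive_tendsto_zero.comp S.tendsto_atTop_nhdsGT) ?_
  filter_upwards [eventually_ge_atTop r] with s hs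
  refine le_trans ?_ (S.antitoneOn_energy hh hr (hr.trans hs) hs)
  simp only [Function.comp_apply, radialEnergy]
  linarith [sq_nonneg (v s)]

theorem apply_le_c_of_isLocalMax (hh : IsBump h dh H ω b m c) (S : IsRadialSolution k h u v)
    (hr : 0 < r) (hmax : IsLocalMax u r) : u r ≤ c := by
  by_contra! hcr
  have hconcave := nonpos_of_isLocalMax hmax
    ((eventually_gt_nhds hr).mono fun s hs => S.hasDerivAt s hs) (S.hasDerivAt_deriv r hr)
  rw [hmax.hasDerivAt_eq_zero (S.hasDerivAt r hr), mul_zero, zero_sub, neg_nonpos] at hconcave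
  exact hconcave.not_gt (mul_neg_of_pos_of_neg (S.pos r hr.le) (hh.neg_of_c_lt hcr))

theorem deriv_nonpos (hh : IsBump h dh H ω b m c) (S : IsRadialSolution k h u v) (hr : 0 < r) :
    v r ≤ 0 := by
  by_contra! hv
  obtain ⟨y, hy, hyr⟩ := exists_mem_Ioo_lt_of_hasDerivAt_pos (S.hasDerivAt r hr) hv hr
  -- If `u` increased anywhere, it would have a local maximum `z` with a lower critical point `w`
  -- before it, and the energy would be larger at `z` than at `w`.
  obtain ⟨R, hRu, hR⟩ := ((S.tendsto_atTop.eventually_lt_const (S.pos r hr.le)).and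
    (eventually_gt_atTop r)).exists
  obtain ⟨z, hz, hmax⟩ := isCompact_Icc.exists_isMaxOn ⟨r, hy.2.le, hR.le⟩
    (S.continuousOn.mono (fun s hs => hy.1.le.trans hs.1 : Icc y R ⊆ Ici 0))
  have hrz : u r ≤ u z := hmax ⟨hy.2.le, hR.le⟩
  have hz' : z ∈ Ioo y R :=
    ⟨hz.1.lt_of_ne (by rintro rfl; linarith), hz.2.lt_of_ne (by rintro rfl; linarith)⟩
  have hz0 : 0 < z := hy.1.trans hz'.1
  have hzmax : IsLocalMax u z := hmax.isLocalMax (Icc_mem_nhds hz'.1 hz'.2)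
  have hvz : v z = 0 := hzmax.hasDerivAt_eq_zero (S.hasDerivAt z hz0)
  obtain ⟨w, hw, hmin⟩ := isCompact_Icc.exists_isMinOn ⟨y, hy.1.le, hz'.1.le⟩
    (S.continuousOn.mono (Icc_subset_Ici_self : Icc 0 z ⊆ Ici 0))
  have hwy : u w ≤ u y := hmin ⟨hy.1.le, hz'.1.le⟩
  have hvw : v w = 0 := by
    rcases hw.1.eq_or_lt with rfl | hw0
    · exact S.deriv_zero
    · have hwz : w < z := hw.2.lt_of_ne (by rintro rfl; linarith)
      exact (hmin.isLocalMin (Icc_mem_nhds hw0 hwz)).hasDerivAt_eq_zero (S.hasDerivAt w hw0)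
  have hHz : 0 ≤ H (u z) := by simpa [radialEnergy, hvz] using S.energy_nonneg hh hz0.le
  have hEwz : H (u z) ≤ H (u w) := by
    simpa [radialEnergy, hvz, hvw] using S.antitoneOn_energy hh hw.1 hz0.le hw.2
  exact hEwz.not_gt (hh.primitive_lt (S.pos w hw.1) (by linarith)
    (S.apply_le_c_of_isLocalMax hh hz0 hzmax) hHz)

theorem apply_ne_c (hh : IsBump h dh H ω b m c) (S : IsRadialSolution k h u v) (hr : 0 ≤ r)
    (hv : v r = 0) : u r ≠ c := fun huc => by
  have hc : 0 < c := hh.m_pos.trans hh.m_lt_c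
  have heq : EqOn u (fun _ => c) (Ici r) :=
    IsRadialTrajectory.eqOn hh hr (S.mono hr) (.const hc hh.apply_c) huc hv
  have hlim : Tendsto u atTop (𝓝 c) :=
    tendsto_const_nhds.congr' ((eventually_ge_atTop r).mono fun s hs => (heq hs).symm)
  exact hc.ne' (tendsto_nhds_unique hlim S.tendsto_atTop)

theorem deriv_neg (hh : IsBump h dh H ω b m c) (S : IsRadialSolution k h u v) (hr : 0 < r) :
    v r < 0 := by
  refine (S.deriv_nonpos hh hr).lt_of_ne fun hv => ?_
  have hmax : IsLocalMax v r := by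
    filter_upwards [eventually_gt_nhds hr] with s hs
    exact hv ▸ S.deriv_nonpos hh hs
  have hhu : h (u r) = 0 := by
    have hv' := hmax.hasDerivAt_eq_zero (S.hasDerivAt_deriv r hr)
    simpa [hv, (S.pos r hr.le).ne'] using hv'
  rcases hh.eq_or_eq_of_apply_eq_zero (S.pos r hr.le) hhu with hub | huc
  · have hE := S.energy_nonneg hh hr.le
    have hH := hh.primitive_neg hh.b_pos le_rfl
    simp only [radialEnergy, hv, hub] at hE
    linarith
  · exact S.apply_ne_c hh hr.le hv huc

theorem strictAntiOn (hh : IsBump h dh H ω b m c) (S : IsRadialSolution k h u v) :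
    StrictAntiOn u (Ici 0) := by
  refine strictAntiOn_of_hasDerivWithinAt_neg (convex_Ici 0) S.continuousOn (f' := v)
    (fun r hr => ?_) fun r hr => ?_ <;> rw [interior_Ici] at hr
  · exact (S.hasDerivAt r hr).hasDerivWithinAt
  · exact S.deriv_neg hh hr

theorem apply_zero_mem_Ioo (hh : IsBump h dh H ω b m c) (S : IsRadialSolution k h u v) :
    u 0 ∈ Ioo b c := by
  have hu0 := S.pos 0 le_rfl
  constructor
  · by_contra! hb
    have hE := S.energy_nonneg hh le_rfl
    have hH := hh.primitive_neg hu0 hb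
    simp only [radialEnergy, S.deriv_zero] at hE
    linarith
  · refine lt_of_le_of_ne ?_ (S.apply_ne_c hh le_rfl S.deriv_zero)
    by_contra! hc
    have hlim : -(u 0 * h (u 0)) / (k + 1) ≤ 0 := by
      refine le_of_tendsto (S.tendsto_deriv_div hh) ?_
      filter_upwards [self_mem_nhdsWithin] with r hr
      exact div_nonpos_of_nonpos_of_nonneg (S.deriv_nonpos hh hr) (le_of_lt hr)
    have hneg := mul_neg_of_pos_of_neg hu0 (hh.neg_of_c_lt hc)
    exact hlim.not_gt (div_pos (neg_pos.2 hneg) (by positivity))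

theorem apply_lt_c (hh : IsBump h dh H ω b m c) (S : IsRadialSolution k h u v) (hr : 0 ≤ r) :
    u r < c :=
  ((S.strictAntiOn hh).antitoneOn self_mem_Ici hr hr).trans_lt (S.apply_zero_mem_Ioo hh).2

theorem surjOn (S : IsRadialSolution k h u v) : SurjOn u (Ioi 0) (Ioo 0 (u 0)) := fun x hx => by
  obtain ⟨R, hRx, hR⟩ := ((S.tendsto_atTop.eventually_lt_const hx.1).and
    (eventually_gt_atTop 0)).exists
  obtain ⟨r, hr, hrx⟩ := intermediate_value_Icc' hR.le
    (S.continuousOn.mono Icc_subset_Ici_self) ⟨hRx.le, hx.2.le⟩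
  exact ⟨r, hr.1.lt_of_ne (by rintro rfl; exact hx.2.ne' hrx), hrx⟩

/-! ### Decay at infinity -/

theorem exists_eventually_deriv_le_neg_mul (hh : IsBump h dh H ω b m c)
    (S : IsRadialSolution k h u v) : ∃ α, 0 < α ∧ ∀ᶠ r in atTop, v r ≤ -α * u r := by
  have hω := hh.ω_pos
  refine ⟨√(ω / 2), by positivity, ?_⟩
  have hlim := (hh.tendsto_primitive_div_sq.comp S.tendsto_atTop_nhdsGT).eventually_lt_const
    (show -ω / 2 < -ω / 4 by linarith)
  filter_upwards [hlim, eventually_gt_atTop 0] with r hHr hr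
  have hu := S.pos r hr.le
  rw [Function.comp_apply, div_lt_iff₀ (by positivity)] at hHr
  have hE := S.energy_nonneg hh hr.le
  rw [radialEnergy] at hE
  have hsq : (√(ω / 2) * u r) ^ 2 ≤ (-v r) ^ 2 := by
    rw [mul_pow, Real.sq_sqrt (by positivity)]
    linarith [neg_sq (v r)]
  linarith [le_of_sq_le_sq hsq (neg_nonneg.2 (S.deriv_neg hh hr).le)]

theorem tendsto_pow_mul_zero (hh : IsBump h dh H ω b m c) (S : IsRadialSolution k h u v) (j : ℕ) :
    Tendsto (fun r => r ^ j * u r) atTop (𝓝 0) := by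
  obtain ⟨α, hα, hle⟩ := S.exists_eventually_deriv_le_neg_mul hh
  exact tendsto_pow_mul_zero_of_hasDerivAt_le_neg_mul hα
    ((eventually_ge_atTop 0).mono fun r hr => (S.pos r hr).le)
    ((eventually_gt_atTop 0).mono S.hasDerivAt) hle j

theorem strictMonoOn_deriv (hh : IsBump h dh H ω b m c) (S : IsRadialSolution k h u v)
    (hr : 0 < r) (hub : u r < b) : StrictMonoOn v (Ici r) := by
  refine strictMonoOn_of_hasDerivWithinAt_pos (convex_Ici r)
    (S.continuousOn_deriv.mono (Ici_subset_Ici.2 hr.le))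
    (f' := fun s => -(k / s) * v s - u s * h (u s)) (fun s hs => ?_) fun s hs => ?_ <;>
    rw [interior_Ici] at hs
  all_goals have hs0 : 0 < s := hr.trans hs
  · exact (S.hasDerivAt_deriv s hs0).hasDerivWithinAt
  · have hus := S.pos s hs0.le
    have husb : u s < b := (S.strictAntiOn hh hr.le hs0.le hs).trans hub
    have hfriction : -(k / s) * v s ≥ 0 :=
      mul_nonneg_of_nonpos_of_nonpos (neg_nonpos.2 (by positivity)) (S.deriv_neg hh hs0).le
    linarith [mul_neg_of_pos_of_neg hus (hh.neg_of_lt_b hus husb)]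

theorem eventually_neg_deriv_add_one_le (hh : IsBump h dh H ω b m c)
    (S : IsRadialSolution k h u v) : ∀ᶠ r in atTop, -v (r + 1) ≤ u r := by
  filter_upwards [S.tendsto_atTop.eventually_lt_const hh.b_pos, eventually_gt_atTop 0]
    with r hub hr
  have hr1 : r < r + 1 := lt_add_one r
  obtain ⟨s, hs, hvs⟩ := exists_hasDerivAt_eq_slope u v hr1
    (S.continuousOn.mono fun s hs => hr.le.trans hs.1) fun s hs => S.hasDerivAt s (hr.trans hs.1)
  have hv := S.strictMonoOn_deriv hh hr hub hs.1.le hr1.le hs.2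
  rw [hvs, add_sub_cancel_left, div_one] at hv
  linarith [S.pos (r + 1) (by linarith)]

theorem tendsto_pow_mul_deriv_zero (hh : IsBump h dh H ω b m c) (S : IsRadialSolution k h u v)
    (j : ℕ) : Tendsto (fun r => r ^ j * v r) atTop (𝓝 0) := by
  have hshift : Tendsto (fun r : ℝ => r - 1) atTop atTop :=
    tendsto_atTop_add_const_right atTop (-1) tendsto_id
  have hlim := ((S.tendsto_pow_mul_zero hh j).comp hshift).const_mul (2 ^ j)
  rw [mul_zero] at hlim
  refine squeeze_zero_norm' ?_ hlim
  filter_upwards [hshift.eventually (S.eventually_neg_deriv_add_one_le hh), eventually_ge_atTop 2]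
    with r hv hr
  have hr0 : 0 < r := two_pos.trans_le hr
  rw [sub_add_cancel] at hv
  calc ‖r ^ j * v r‖ = r ^ j * -v r := by
        rw [norm_mul, norm_pow, Real.norm_of_nonneg hr0.le,
          Real.norm_of_nonpos (S.deriv_neg hh hr0).le]
    _ ≤ (2 * (r - 1)) ^ j * u (r - 1) := mul_le_mul
        (pow_le_pow_left₀ hr0.le (by linarith) j) hv (neg_nonneg.2 (S.deriv_neg hh hr0).le)
        (pow_nonneg (by linarith) j)
    _ = 2 ^ j * ((r - 1) ^ j * u (r - 1)) := by rw [mul_pow, mul_assoc]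

theorem hasDerivAt_pow_mul_sq (S : IsRadialSolution k h u v) (hr : 0 < r) (hv : v r ≠ 0) :
    HasDerivAt (fun r => (r ^ k * u r) ^ 2)
      (2 * (r ^ k) ^ 2 * u r * v r * (1 + k / r * (u r / v r))) r := by
  refine (((hasDerivAt_pow k r).mul (S.hasDerivAt r hr)).pow 2).congr_deriv ?_
  simp only [Pi.mul_apply, Nat.cast_ofNat, Nat.add_one_sub_one, pow_one]
  rw [natCast_mul_pow_pred_eq k hr.ne']
  field_simp
  ring

theorem tendsto_div_mul_div_deriv (hh : IsBump h dh H ω b m c) (S : IsRadialSolution k h u v) :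
    Tendsto (fun r => k / r * (u r / v r)) atTop (𝓝 0) := by
  obtain ⟨α, hα, hle⟩ := S.exists_eventually_deriv_le_neg_mul hh
  have hk : Tendsto (fun r : ℝ => k / r * α⁻¹) atTop (𝓝 0) := by
    simpa using (tendsto_const_nhds.div_atTop tendsto_id).mul_const α⁻¹
  refine squeeze_zero_norm' ?_ hk
  filter_upwards [hle, eventually_gt_atTop 0] with r hvr hr
  have hu := S.pos r hr.le
  have hv := S.deriv_neg hh hr
  rw [norm_mul, Real.norm_of_nonneg (by positivity), norm_div, Real.norm_of_nonneg hu.le,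
    Real.norm_of_nonpos hv.le]
  gcongr
  rw [div_le_iff₀ (neg_pos.2 hv), inv_mul_eq_div, le_div_iff₀ hα]
  linarith

theorem tendsto_neg_deriv_div (hh : IsBump h dh H ω b m c) (S : IsRadialSolution k h u v) :
    Tendsto (fun r => -v r / u r) atTop (𝓝 (√ω)) := by
  have hδ := (S.tendsto_div_mul_div_deriv hh).const_add 1
  rw [add_zero] at hδ
  have hsq : Tendsto (fun r => (r ^ k * v r) ^ 2 / (r ^ k * u r) ^ 2) atTop (𝓝 ω) := by
    refine HasDerivAt.lhopital_zero_atTop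
      (f' := fun r => 2 * (r ^ k * v r) * -(r ^ k * (u r * h (u r))))
      (g' := fun r => 2 * (r ^ k) ^ 2 * u r * v r * (1 + k / r * (u r / v r)))
      ?_ ?_ ?_ ?_ ?_ ?_
    · filter_upwards [eventually_gt_atTop 0] with r hr
      exact ((S.hasDerivAt_flux le_rfl hr).pow 2).congr_deriv (by simp)
    · filter_upwards [eventually_gt_atTop 0] with r hr
      exact S.hasDerivAt_pow_mul_sq hr (S.deriv_neg hh hr).ne
    · filter_upwards [hδ.eventually_const_lt one_pos, eventually_gt_atTop 0] with r hδr hr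
      have hu := (S.pos r hr.le).ne'
      have hv := (S.deriv_neg hh hr).ne
      exact mul_ne_zero (by positivity) hδr.ne'
    · simpa using (S.tendsto_pow_mul_deriv_zero hh k).pow 2
    · simpa using (S.tendsto_pow_mul_zero hh k).pow 2
    · have hlim := (hh.tendsto_zero.comp S.tendsto_atTop_nhdsGT).neg.div hδ one_ne_zero
      rw [neg_neg, div_one] at hlim
      refine hlim.congr' ?_
      filter_upwards [hδ.eventually_const_lt one_pos, eventually_gt_atTop 0] with r hδr hr
      have hu := (S.pos r hr.le).ne'
      have hv := (S.deriv_neg hh hr).ne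
      simp only [Pi.div_apply, Function.comp_apply]
      rw [div_eq_div_iff hδr.ne' (mul_ne_zero (by positivity) hδr.ne')]
      ring
  refine hsq.sqrt.congr' ?_
  filter_upwards [eventually_gt_atTop 0] with r hr
  rw [← div_pow, mul_div_mul_left _ _ (pow_pos hr k).ne', Real.sqrt_sq_eq_abs, abs_div,
    abs_of_neg (S.deriv_neg hh hr), abs_of_pos (S.pos r hr.le)]

end IsRadialSolution

/-! ### The decay exponent -/

/-- The Pohozaev function `r^(k+1) (v²/2 + H(u)) + (k - 1)/2 r^k u v` of a radial trajectory. -/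
noncomputable def pohozaev (k : ℕ) (H u v : ℝ → ℝ) (r : ℝ) : ℝ :=
  r ^ (k + 1) * radialEnergy H u v r + (k - 1) / 2 * (r ^ k * v r * u r)

/-- The local decay exponent `-d log u / d log r = -r u'/u` of a radial trajectory. -/
noncomputable def decayExponent (u v : ℝ → ℝ) (r : ℝ) : ℝ := r * (-v r / u r)

/-- The right-hand side `r θ'` of the Riccati equation for the decay exponent `θ`, where `y` stands
for `r² h(u)`. -/
noncomputable def riccatiField (k : ℕ) (θ y : ℝ) : ℝ := θ ^ 2 - (k - 1) * θ + y

/-- The product of `r θ'`, where `θ` is the decay exponent, with `r^(k-1) u²`. Unlike `θ'` it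
extends to `r = 0`, where it vanishes. -/
noncomputable def riccatiNumerator (k : ℕ) (h u v : ℝ → ℝ) (r : ℝ) : ℝ :=
  r ^ k * v r * (r * v r + (k - 1) * u r) + r ^ (k + 1) * (u r ^ 2 * h (u r))

namespace IsRadialSolution

theorem continuousOn_pohozaev (hh : IsBump h dh H ω b m c) (S : IsRadialSolution k h u v) :
    ContinuousOn (pohozaev k H u v) (Ici 0) :=
  ((continuousOn_pow _).mul (S.continuousOn_energy hh)).add
    (continuousOn_const.mul (((continuousOn_pow k).mul S.continuousOn_deriv).mul S.continuousOn))

theorem hasDerivAt_pohozaev (hh : IsBump h dh H ω b m c) (S : IsRadialSolution k h u v)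
    (hr : 0 < r) :
    HasDerivAt (pohozaev k H u v) (r ^ k * pohozaevDensity k h H (u r)) r := by
  refine (((hasDerivAt_pow (k + 1) r).mul (S.hasDerivAt_energy hh hr)).add
    (((S.hasDerivAt_flux le_rfl hr).mul (S.hasDerivAt r hr)).const_mul _)).congr_deriv ?_
  simp only [pohozaevDensity, radialEnergy, Nat.cast_add_one, Nat.add_one_sub_one]
  field_simp
  ring

theorem tendsto_pohozaev_zero (hh : IsBump h dh H ω b m c) (S : IsRadialSolution k h u v) :
    Tendsto (pohozaev k H u v) atTop (𝓝 0) := by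
  have hpow := S.tendsto_pow_mul_zero hh (k + 1)
  have hdpow := S.tendsto_pow_mul_deriv_zero hh (k + 1)
  have hH := (hh.tendsto_primitive_div_sq.comp S.tendsto_atTop_nhdsGT).mul
    (hpow.mul S.tendsto_atTop)
  have hv : Tendsto v atTop (𝓝 0) := by simpa using S.tendsto_pow_mul_deriv_zero hh 0
  have huv := ((S.tendsto_pow_mul_deriv_zero hh k).mul S.tendsto_atTop).const_mul
    (((k : ℝ) - 1) / 2)
  have hlim := ((((hdpow.mul hv).div_const 2).add hH).add huv)
  simp only [mul_zero, zero_div, add_zero] at hlim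
  refine hlim.congr' ?_
  filter_upwards [eventually_ge_atTop 0] with r hr
  have hu := (S.pos r hr).ne'
  simp only [Function.comp_apply, pohozaev, radialEnergy]
  field_simp

theorem pohozaev_pos (hh : IsBump h dh H ω b m c) (S : IsRadialSolution k h u v) (hr : 0 < r) :
    0 < pohozaev k H u v r := by
  rcases Nat.eq_zero_or_pos k with rfl | hk
  · have hE := mul_nonneg hr.le (S.energy_nonneg hh hr.le)
    have huv := mul_neg_of_neg_of_pos (S.deriv_neg hh hr) (S.pos r hr.le)
    simp only [pohozaev, Nat.cast_zero, zero_add, pow_one, pow_zero, one_mul]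
    linarith
  · refine pos_of_unimodal (S.continuousOn_pohozaev hh) (by simp [pohozaev, S.deriv_zero])
      (S.tendsto_pohozaev_zero hh) (fun s hs => S.hasDerivAt_pohozaev hh hs)
      (fun s t hs hst hGt => ?_) hr
    have ht := hs.trans hst
    exact mul_pos (pow_pos hs k) (hh.pohozaevDensity_pos_of_lt hk (S.pos t ht.le)
      (S.strictAntiOn hh hs.le ht.le hst) (S.apply_lt_c hh hs.le)
      (nonneg_of_mul_nonneg_right hGt (pow_pos ht k)))

theorem hasDerivAt_decayExponent (S : IsRadialSolution k h u v) (hr : 0 < r) :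
    HasDerivAt (decayExponent u v)
      (riccatiField k (decayExponent u v r) (r ^ 2 * h (u r)) / r) r := by
  have hu := (S.pos r hr.le).ne'
  refine ((hasDerivAt_id r).mul
    ((S.hasDerivAt_deriv r hr).neg.div (S.hasDerivAt r hr) hu)).congr_deriv ?_
  simp only [id, riccatiField, decayExponent, Pi.neg_apply, Pi.div_apply]
  field_simp
  ring

theorem hasDerivAt_riccatiNumerator (hh : IsBump h dh H ω b m c) (S : IsRadialSolution k h u v)
    (hr : 0 < r) :
    HasDerivAt (riccatiNumerator k h u v)
      (r ^ k * u r ^ 2 * (2 * h (u r) + r * (dh (u r) * v r))) r := by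
  have hu := S.hasDerivAt r hr
  have hhu := (hh.hasDerivAt _ (S.pos r hr.le)).comp r hu
  refine (((S.hasDerivAt_flux le_rfl hr).mul (((hasDerivAt_id r).mul
    (S.hasDerivAt_deriv r hr)).add (hu.const_mul ((k : ℝ) - 1)))).add
    ((hasDerivAt_pow (k + 1) r).mul ((hu.pow 2).mul hhu))).congr_deriv ?_
  simp only [Pi.add_apply, Pi.mul_apply, id_eq, neg_mul, one_mul, Nat.cast_add, Nat.cast_one,
    add_tsub_cancel_right, Pi.pow_apply, Function.comp_apply, Nat.cast_ofNat, Nat.add_one_sub_one,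
    pow_one]
  field_simp
  ring

theorem riccatiNumerator_pos (hh : IsBump h dh H ω b m c) (S : IsRadialSolution k h u v)
    (hr : 0 < r) : 0 < riccatiNumerator k h u v r := by
  -- It dominates the Pohozaev function where `u ≤ m`, and increases from `0` as long as `m < u`.
  rcases le_or_gt (u r) m with hum | hum
  · have hP := S.pohozaev_pos hh hr
    have hH := mul_le_mul_of_nonneg_left
      (hh.primitive_le_half_sq_mul (S.pos r hr.le) hum) (pow_pos hr (k + 1)).le
    have hpow : r ^ (k + 1) = r ^ k * r := pow_succ r k
    simp only [pohozaev, radialEnergy, hpow] at hP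
    rw [hpow] at hH
    rw [riccatiNumerator, hpow]
    linarith
  · have hcont : ContinuousOn (riccatiNumerator k h u v) (Ici 0) :=
      (((continuousOn_pow k).mul S.continuousOn_deriv).mul ((continuousOn_id.mul
        S.continuousOn_deriv).add (continuousOn_const.mul S.continuousOn))).add
        ((continuousOn_pow _).mul ((S.continuousOn.pow 2).mul (S.continuousOn_comp fun x hx =>
          (hh.hasDerivAt x hx).continuousAt.continuousWithinAt)))
    have hmono := strictMonoOn_of_hasDerivWithinAt_pos (convex_Icc 0 r)
      (hcont.mono Icc_subset_Ici_self)
      (f' := fun r => r ^ k * u r ^ 2 * (2 * h (u r) + r * (dh (u r) * v r)))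
      (fun s hs => by
        rw [interior_Icc] at hs
        exact (S.hasDerivAt_riccatiNumerator hh hs.1).hasDerivWithinAt) fun s hs => ?_
    · simpa [riccatiNumerator, S.deriv_zero] using
        hmono (left_mem_Icc.2 hr.le) (right_mem_Icc.2 hr.le) hr
    rw [interior_Icc] at hs
    have hs0 : 0 < s := hs.1
    have hus := S.pos s hs0.le
    have hums : m < u s := hum.trans (S.strictAntiOn hh hs0.le hr.le hs.2)
    have hhs := hh.pos_of_mem_Ioo ⟨hh.b_lt_m.trans hums, S.apply_lt_c hh hs0.le⟩
    have hdv := mul_pos_of_neg_of_neg (hh.deriv_neg _ hums) (S.deriv_neg hh hs0)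
    positivity

theorem riccatiField_decayExponent_pos (hh : IsBump h dh H ω b m c)
    (S : IsRadialSolution k h u v) (hr : 0 < r) :
    0 < riccatiField k (decayExponent u v r) (r ^ 2 * h (u r)) := by
  have hu := S.pos r hr.le
  have hprod : r ^ k * u r ^ 2 * riccatiField k (decayExponent u v r) (r ^ 2 * h (u r)) =
      r * riccatiNumerator k h u v r := by
    simp only [riccatiField, decayExponent, riccatiNumerator]
    field_simp
    ring
  have hpos := mul_pos hr (S.riccatiNumerator_pos hh hr)
  rw [← hprod] at hpos
  exact pos_of_mul_pos_right hpos (by positivity)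

theorem strictMonoOn_decayExponent (hh : IsBump h dh H ω b m c) (S : IsRadialSolution k h u v) :
    StrictMonoOn (decayExponent u v) (Ioi 0) := by
  refine strictMonoOn_of_hasDerivWithinAt_pos (convex_Ioi 0)
    (fun r hr => (S.hasDerivAt_decayExponent hr).continuousAt.continuousWithinAt)
    (f' := fun r => riccatiField k (decayExponent u v r) (r ^ 2 * h (u r)) / r)
    (fun r hr => ?_) fun r hr => ?_ <;> rw [interior_Ioi] at hr
  · exact (S.hasDerivAt_decayExponent hr).hasDerivWithinAt
  · exact div_pos (S.riccatiField_decayExponent_pos hh hr) hr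

theorem decayExponent_pos (hh : IsBump h dh H ω b m c) (S : IsRadialSolution k h u v)
    (hr : 0 < r) : 0 < decayExponent u v r :=
  mul_pos hr (div_pos (neg_pos.2 (S.deriv_neg hh hr)) (S.pos r hr.le))

theorem tendsto_apply_zero (S : IsRadialSolution k h u v) :
    Tendsto u (𝓝[>] 0) (𝓝 (u 0)) :=
  (S.continuousOn 0 self_mem_Ici).mono_left (nhdsWithin_mono _ Ioi_subset_Ici_self)

theorem tendsto_decayExponent_div_sq (hh : IsBump h dh H ω b m c)
    (S : IsRadialSolution k h u v) :
    Tendsto (fun r => decayExponent u v r / r ^ 2) (𝓝[>] 0) (𝓝 (h (u 0) / (k + 1))) := by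
  have hu0 := S.pos 0 le_rfl
  have hlim := (S.tendsto_deriv_div hh).neg.div S.tendsto_apply_zero hu0.ne'
  rw [show -(-(u 0 * h (u 0)) / ((k : ℝ) + 1)) / u 0 = h (u 0) / (k + 1) by field_simp] at hlim
  refine hlim.congr' ?_
  filter_upwards [self_mem_nhdsWithin] with r (hr : 0 < r)
  have hu := (S.pos r hr.le).ne'
  simp only [decayExponent, Pi.div_apply]
  field_simp

theorem tendsto_decayExponent_zero (hh : IsBump h dh H ω b m c) (S : IsRadialSolution k h u v) :
    Tendsto (decayExponent u v) (𝓝[>] 0) (𝓝 0) := by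
  have hlim := (S.tendsto_decayExponent_div_sq hh).mul tendsto_sq_nhdsGT_zero
  rw [mul_zero] at hlim
  refine hlim.congr' ?_
  filter_upwards [self_mem_nhdsWithin] with r (hr : 0 < r)
  field_simp

theorem tendsto_decayExponent_atTop (hh : IsBump h dh H ω b m c)
    (S : IsRadialSolution k h u v) : Tendsto (decayExponent u v) atTop atTop :=
  tendsto_id.atTop_mul_pos (Real.sqrt_pos.2 hh.ω_pos) (S.tendsto_neg_deriv_div hh)

theorem surjOn_decayExponent (hh : IsBump h dh H ω b m c) (S : IsRadialSolution k h u v) :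
    SurjOn (decayExponent u v) (Ioi 0) (Ioi 0) := fun t ht => by
  obtain ⟨r₁, hr₁t, hr₁⟩ := (((S.tendsto_decayExponent_zero hh).eventually_lt_const ht).and
    self_mem_nhdsWithin).exists
  obtain ⟨r₂, hr₂t, hr₂⟩ := (((S.tendsto_decayExponent_atTop hh).eventually_gt_atTop t).and
    (eventually_gt_atTop r₁)).exists
  have hsub : Icc r₁ r₂ ⊆ Ioi 0 := fun r hr => (mem_Ioi.1 hr₁).trans_le hr.1
  obtain ⟨r, hr, hrt⟩ := intermediate_value_Icc hr₂.le (fun r hr =>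
    (S.hasDerivAt_decayExponent (hsub hr)).continuousAt.continuousWithinAt) ⟨hr₁t.le, hr₂t.le⟩
  exact ⟨r, hsub hr, hrt⟩

end IsRadialSolution

/-- The radius at which a solution has decay exponent `t`. Two solutions are compared at equal
decay exponents, where their Riccati equations differ only in the term `r² h(u)`. -/
noncomputable def exponentRadius (u v : ℝ → ℝ) (t : ℝ) : ℝ :=
  Function.invFunOn (decayExponent u v) (Ioi 0) t

/-- The term `r² h(u)` of the Riccati equation as a function of the decay exponent `t`. -/
noncomputable def exponentForcing (h u v : ℝ → ℝ) (t : ℝ) : ℝ :=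
  exponentRadius u v t ^ 2 * h (u (exponentRadius u v t))

namespace IsRadialSolution

theorem exponentRadius_pos (hh : IsBump h dh H ω b m c) (S : IsRadialSolution k h u v)
    (ht : 0 < t) : 0 < exponentRadius u v t :=
  Function.invFunOn_mem (S.surjOn_decayExponent hh ht)

theorem decayExponent_exponentRadius (hh : IsBump h dh H ω b m c)
    (S : IsRadialSolution k h u v) (ht : 0 < t) :
    decayExponent u v (exponentRadius u v t) = t :=
  Function.invFunOn_eq (S.surjOn_decayExponent hh ht)

theorem exponentRadius_decayExponent (hh : IsBump h dh H ω b m c)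
    (S : IsRadialSolution k h u v) (hr : 0 < r) :
    exponentRadius u v (decayExponent u v r) = r :=
  (S.strictMonoOn_decayExponent hh).injOn.leftInvOn_invFunOn hr

theorem exponentRadius_lt_iff (hh : IsBump h dh H ω b m c) (S : IsRadialSolution k h u v)
    (ht : 0 < t) (hr : 0 < r) : exponentRadius u v t < r ↔ t < decayExponent u v r := by
  rw [← (S.strictMonoOn_decayExponent hh).lt_iff_lt (S.exponentRadius_pos hh ht) hr,
    S.decayExponent_exponentRadius hh ht]

theorem lt_exponentRadius_iff (hh : IsBump h dh H ω b m c) (S : IsRadialSolution k h u v)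
    (ht : 0 < t) (hr : 0 < r) : r < exponentRadius u v t ↔ decayExponent u v r < t := by
  rw [← (S.strictMonoOn_decayExponent hh).lt_iff_lt hr (S.exponentRadius_pos hh ht),
    S.decayExponent_exponentRadius hh ht]

theorem strictMonoOn_exponentRadius (hh : IsBump h dh H ω b m c)
    (S : IsRadialSolution k h u v) : StrictMonoOn (exponentRadius u v) (Ioi 0) :=
  fun s hs t ht hst => by
    rwa [S.exponentRadius_lt_iff hh hs (S.exponentRadius_pos hh ht),
      S.decayExponent_exponentRadius hh ht]

theorem strictAntiOn_comp_exponentRadius (hh : IsBump h dh H ω b m c)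
    (S : IsRadialSolution k h u v) :
    StrictAntiOn (fun t => u (exponentRadius u v t)) (Ioi 0) :=
  (S.strictAntiOn hh).comp_strictMonoOn (S.strictMonoOn_exponentRadius hh)
    fun _ ht => (S.exponentRadius_pos hh ht).le

theorem riccatiField_exponentForcing_pos (hh : IsBump h dh H ω b m c)
    (S : IsRadialSolution k h u v) (ht : 0 < t) :
    0 < riccatiField k t (exponentForcing h u v t) := by
  have hpos := S.riccatiField_decayExponent_pos hh (S.exponentRadius_pos hh ht)
  rwa [S.decayExponent_exponentRadius hh ht] at hpos

theorem hasDerivAt_exponentRadius (hh : IsBump h dh H ω b m c) (S : IsRadialSolution k h u v)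
    (ht : 0 < t) :
    HasDerivAt (exponentRadius u v)
      (exponentRadius u v t / riccatiField k t (exponentForcing h u v t)) t := by
  have hR := S.exponentRadius_pos hh ht
  have hderiv := hasDerivAt_invFunOn isOpen_Ioi (S.strictMonoOn_decayExponent hh)
    (fun r hr => S.hasDerivAt_decayExponent hr) hR
    (div_pos (S.riccatiField_decayExponent_pos hh hR) hR).ne'
  rwa [S.decayExponent_exponentRadius hh ht, inv_div] at hderiv

theorem hasDerivAt_comp_exponentRadius (hh : IsBump h dh H ω b m c)
    (S : IsRadialSolution k h u v) (ht : 0 < t) :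
    HasDerivAt (fun t => u (exponentRadius u v t))
      (-(t * u (exponentRadius u v t)) / riccatiField k t (exponentForcing h u v t)) t := by
  have hR := S.exponentRadius_pos hh ht
  have hu := (S.pos _ hR.le).ne'
  have hslope : exponentRadius u v t * v (exponentRadius u v t) =
      -(t * u (exponentRadius u v t)) := by
    have hθ := S.decayExponent_exponentRadius hh ht
    rw [decayExponent, mul_div_assoc', div_eq_iff hu] at hθ
    linarith
  refine ((S.hasDerivAt _ hR).comp t (S.hasDerivAt_exponentRadius hh ht)).congr_deriv ?_
  rw [← hslope]
  ring

theorem hasDerivAt_exponentForcing (hh : IsBump h dh H ω b m c) (S : IsRadialSolution k h u v)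
    (ht : 0 < t) (hw : h (u (exponentRadius u v t)) ≠ 0) :
    HasDerivAt (exponentForcing h u v)
      (exponentForcing h u v t * (2 - t * elasticity h dh (u (exponentRadius u v t))) /
        riccatiField k t (exponentForcing h u v t)) t := by
  have hw0 := S.pos _ (S.exponentRadius_pos hh ht).le
  refine (((S.hasDerivAt_exponentRadius hh ht).pow 2).mul
    ((hh.hasDerivAt _ hw0).comp t (S.hasDerivAt_comp_exponentRadius hh ht))).congr_deriv ?_
  rw [exponentForcing]
  simp only [elasticity, Function.comp_apply, Pi.pow_apply, Nat.cast_ofNat, Nat.add_one_sub_one,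
    pow_one]
  field_simp
  ring

theorem continuousOn_exponentForcing (hh : IsBump h dh H ω b m c)
    (S : IsRadialSolution k h u v) : ContinuousOn (exponentForcing h u v) (Ioi 0) :=
  fun t ht => (((S.hasDerivAt_exponentRadius hh ht).continuousAt.pow 2).mul
    ((hh.hasDerivAt _ (S.pos _ (S.exponentRadius_pos hh ht).le)).comp t
      (S.hasDerivAt_comp_exponentRadius hh ht)).continuousAt).continuousWithinAt

theorem tendsto_exponentRadius_zero (hh : IsBump h dh H ω b m c)
    (S : IsRadialSolution k h u v) : Tendsto (exponentRadius u v) (𝓝[>] 0) (𝓝[>] 0) := by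
  refine tendsto_nhdsWithin_iff.2 ⟨tendsto_order.2 ⟨fun r hr => ?_, fun r hr => ?_⟩, ?_⟩
  · filter_upwards [self_mem_nhdsWithin] with t ht using hr.trans (S.exponentRadius_pos hh ht)
  · filter_upwards [Ioo_mem_nhdsGT (S.decayExponent_pos hh hr)] with t ht
    exact (S.exponentRadius_lt_iff hh ht.1 hr).2 ht.2
  · filter_upwards [self_mem_nhdsWithin] with t ht using S.exponentRadius_pos hh ht

theorem tendsto_comp_exponentRadius (hh : IsBump h dh H ω b m c)
    (S : IsRadialSolution k h u v) :
    Tendsto (fun t => u (exponentRadius u v t)) (𝓝[>] 0) (𝓝 (u 0)) :=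
  S.tendsto_apply_zero.comp (S.tendsto_exponentRadius_zero hh)

theorem tendsto_exponentForcing_div (hh : IsBump h dh H ω b m c)
    (S : IsRadialSolution k h u v) :
    Tendsto (fun t => exponentForcing h u v t / t) (𝓝[>] 0) (𝓝 (k + 1)) := by
  have hu0 := S.apply_zero_mem_Ioo hh
  have hh0 := (hh.pos_of_mem_Ioo hu0).ne'
  have hk : (k : ℝ) + 1 ≠ 0 := k.cast_add_one_ne_zero
  have hlim := (((hh.hasDerivAt _ (S.pos 0 le_rfl)).continuousAt.tendsto.comp
    S.tendsto_apply_zero).div (S.tendsto_decayExponent_div_sq hh)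
    (div_ne_zero hh0 hk)).comp (S.tendsto_exponentRadius_zero hh)
  rw [div_div_cancel₀ hh0] at hlim
  refine hlim.congr' ?_
  filter_upwards [self_mem_nhdsWithin] with t ht
  simp only [Function.comp_apply, Pi.div_apply, exponentForcing,
    S.decayExponent_exponentRadius hh ht]
  rw [div_div_eq_mul_div, mul_comm]

theorem tendsto_exponentRadius_atTop (hh : IsBump h dh H ω b m c)
    (S : IsRadialSolution k h u v) : Tendsto (exponentRadius u v) atTop atTop := by
  refine Filter.tendsto_atTop.2 fun r => ?_
  have hr : 0 < max r 1 := lt_max_of_lt_right one_pos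
  filter_upwards [eventually_gt_atTop 0,
    eventually_gt_atTop (decayExponent u v (max r 1))] with t ht htr
  exact (le_max_left r 1).trans ((S.lt_exponentRadius_iff hh ht hr).2 htr).le

theorem tendsto_div_exponentRadius (hh : IsBump h dh H ω b m c)
    (S : IsRadialSolution k h u v) :
    Tendsto (fun t => t / exponentRadius u v t) atTop (𝓝 (√ω)) := by
  refine ((S.tendsto_neg_deriv_div hh).comp (S.tendsto_exponentRadius_atTop hh)).congr' ?_
  filter_upwards [eventually_gt_atTop 0] with t ht
  rw [eq_div_iff (S.exponentRadius_pos hh ht).ne', mul_comm]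
  exact S.decayExponent_exponentRadius hh ht

/-! ### Comparison at equal decay exponents -/

theorem strictMonoOn_log_radius_sub (hh : IsBump h dh H ω b m c)
    (S₁ : IsRadialSolution k h u₁ v₁) (S₂ : IsRadialSolution k h u₂ v₂) (hI : Convex ℝ I)
    (hI0 : I ⊆ Ioi 0)
    (hlt : ∀ t ∈ interior I, exponentForcing h u₂ v₂ t < exponentForcing h u₁ v₁ t) :
    StrictMonoOn (fun t => Real.log (exponentRadius u₂ v₂ t) - Real.log (exponentRadius u₁ v₁ t))
      I := by
  have hd : ∀ t, 0 < t → HasDerivAt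
      (fun t => Real.log (exponentRadius u₂ v₂ t) - Real.log (exponentRadius u₁ v₁ t))
      ((riccatiField k t (exponentForcing h u₂ v₂ t))⁻¹ -
        (riccatiField k t (exponentForcing h u₁ v₁ t))⁻¹) t := fun t ht => by
    have hR₁ := (S₁.exponentRadius_pos hh ht).ne'
    have hR₂ := (S₂.exponentRadius_pos hh ht).ne'
    refine (((S₂.hasDerivAt_exponentRadius hh ht).log hR₂).sub
      ((S₁.hasDerivAt_exponentRadius hh ht).log hR₁)).congr_deriv ?_
    field_simp
  refine strictMonoOn_of_hasDerivWithinAt_pos hI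
    (fun t ht => (hd t (hI0 ht)).continuousAt.continuousWithinAt)
    (fun t ht => (hd t (hI0 (interior_subset ht))).hasDerivWithinAt) fun t ht => ?_
  have ht0 := hI0 (interior_subset ht)
  exact sub_pos.2 (inv_strictAnti₀ (S₂.riccatiField_exponentForcing_pos hh ht0)
    (add_lt_add_right (hlt t ht) _))

theorem strictMonoOn_log_height_sub (hh : IsBump h dh H ω b m c)
    (S₁ : IsRadialSolution k h u₁ v₁) (S₂ : IsRadialSolution k h u₂ v₂) (hI : Convex ℝ I)
    (hI0 : I ⊆ Ioi 0)
    (hlt : ∀ t ∈ interior I, exponentForcing h u₂ v₂ t < exponentForcing h u₁ v₁ t) :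
    StrictMonoOn (fun t => Real.log (u₁ (exponentRadius u₁ v₁ t)) -
      Real.log (u₂ (exponentRadius u₂ v₂ t))) I := by
  have hd : ∀ t, 0 < t → HasDerivAt (fun t => Real.log (u₁ (exponentRadius u₁ v₁ t)) -
      Real.log (u₂ (exponentRadius u₂ v₂ t)))
      (t * ((riccatiField k t (exponentForcing h u₂ v₂ t))⁻¹ -
        (riccatiField k t (exponentForcing h u₁ v₁ t))⁻¹)) t := fun t ht => by
    have hw₁ := (S₁.pos _ (S₁.exponentRadius_pos hh ht).le).ne'
    have hw₂ := (S₂.pos _ (S₂.exponentRadius_pos hh ht).le).ne'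
    refine (((S₁.hasDerivAt_comp_exponentRadius hh ht).log hw₁).sub
      ((S₂.hasDerivAt_comp_exponentRadius hh ht).log hw₂)).congr_deriv ?_
    field_simp
    ring
  refine strictMonoOn_of_hasDerivWithinAt_pos hI
    (fun t ht => (hd t (hI0 ht)).continuousAt.continuousWithinAt)
    (fun t ht => (hd t (hI0 (interior_subset ht))).hasDerivWithinAt) fun t ht => ?_
  have ht0 := hI0 (interior_subset ht)
  exact mul_pos ht0 (sub_pos.2 (inv_strictAnti₀ (S₂.riccatiField_exponentForcing_pos hh ht0)
    (add_lt_add_right (hlt t ht) _)))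

theorem exponentRadius_lt_of_exponentForcing_lt (hh : IsBump h dh H ω b m c)
    (S₁ : IsRadialSolution k h u₁ v₁) (S₂ : IsRadialSolution k h u₂ v₂) (hs : 0 < s) (hst : s < t)
    (hlt : ∀ x ∈ Ioo s t, exponentForcing h u₂ v₂ x < exponentForcing h u₁ v₁ x)
    (hR : exponentRadius u₁ v₁ s ≤ exponentRadius u₂ v₂ s) :
    exponentRadius u₁ v₁ t < exponentRadius u₂ v₂ t := by
  have ht := hs.trans hst
  have hmono := S₁.strictMonoOn_log_radius_sub hh S₂ (convex_Icc s t)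
    (fun x hx => hs.trans_le hx.1) (by rwa [interior_Icc]) (left_mem_Icc.2 hst.le)
    (right_mem_Icc.2 hst.le) hst
  have hlog := Real.log_le_log (S₁.exponentRadius_pos hh hs) hR
  exact (Real.log_lt_log_iff (S₁.exponentRadius_pos hh ht) (S₂.exponentRadius_pos hh ht)).1
    (by linarith)

theorem comp_exponentRadius_lt_of_exponentForcing_lt (hh : IsBump h dh H ω b m c)
    (S₁ : IsRadialSolution k h u₁ v₁) (S₂ : IsRadialSolution k h u₂ v₂) (hs : 0 < s) (hst : s < t)
    (hlt : ∀ x ∈ Ioo s t, exponentForcing h u₂ v₂ x < exponentForcing h u₁ v₁ x)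
    (hw : u₂ (exponentRadius u₂ v₂ s) < u₁ (exponentRadius u₁ v₁ s)) :
    u₂ (exponentRadius u₂ v₂ t) < u₁ (exponentRadius u₁ v₁ t) := by
  have hpos : ∀ {u v}, IsRadialSolution k h u v → ∀ {x}, 0 < x → 0 < u (exponentRadius u v x) :=
    fun S _ hx => S.pos _ (S.exponentRadius_pos hh hx).le
  have ht := hs.trans hst
  have hmono := S₁.strictMonoOn_log_height_sub hh S₂ (convex_Icc s t)
    (fun x hx => hs.trans_le hx.1) (by rwa [interior_Icc]) (left_mem_Icc.2 hst.le)
    (right_mem_Icc.2 hst.le) hst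
  have hlog := Real.log_lt_log (hpos S₂ hs) hw
  exact (Real.log_lt_log_iff (hpos S₂ ht) (hpos S₁ ht)).1 (by linarith)

theorem comp_exponentRadius_mem_Ioo (hh : IsBump h dh H ω b m c)
    (S : IsRadialSolution k h u v) (ht : 0 < t) (hb : b < u (exponentRadius u v t)) :
    u (exponentRadius u v t) ∈ Ioo b c :=
  ⟨hb, S.apply_lt_c hh (S.exponentRadius_pos hh ht).le⟩

theorem exponentForcing_pos (hh : IsBump h dh H ω b m c) (S : IsRadialSolution k h u v)
    (ht : 0 < t) (hb : b < u (exponentRadius u v t)) : 0 < exponentForcing h u v t :=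
  mul_pos (pow_pos (S.exponentRadius_pos hh ht) 2)
    (hh.pos_of_mem_Ioo (S.comp_exponentRadius_mem_Ioo hh ht hb))

theorem eventually_mul_elasticity_lt_two (hh : IsBump h dh H ω b m c)
    (S : IsRadialSolution k h u v) :
    ∀ᶠ t in 𝓝[>] 0, t * elasticity h dh (u (exponentRadius u v t)) < 2 := by
  have hu0 := S.pos 0 le_rfl
  have hcont : ContinuousAt (elasticity h dh) (u 0) :=
    (continuousAt_id.mul (hh.continuousOn_deriv.continuousAt (Ioi_mem_nhds hu0))).div
      (hh.hasDerivAt _ hu0).continuousAt (hh.pos_of_mem_Ioo (S.apply_zero_mem_Ioo hh)).ne'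
  have hlim := (tendsto_id.mono_left nhdsWithin_le_nhds : Tendsto id (𝓝[>] (0 : ℝ)) (𝓝 0)).mul
    (hcont.tendsto.comp (S.tendsto_comp_exponentRadius hh))
  rw [zero_mul] at hlim
  exact hlim.eventually_lt_const two_pos

theorem eventually_b_lt_comp_exponentRadius (hh : IsBump h dh H ω b m c)
    (S : IsRadialSolution k h u v) : ∀ᶠ t in 𝓝[>] 0, b < u (exponentRadius u v t) :=
  (S.tendsto_comp_exponentRadius hh).eventually_const_lt (S.apply_zero_mem_Ioo hh).1

theorem tendsto_log_exponentForcing_sub (hh : IsBump h dh H ω b m c)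
    (S₁ : IsRadialSolution k h u₁ v₁) (S₂ : IsRadialSolution k h u₂ v₂) :
    Tendsto (fun t => Real.log (exponentForcing h u₁ v₁ t) - Real.log (exponentForcing h u₂ v₂ t))
      (𝓝[>] 0) (𝓝 0) := by
  have hk : (k : ℝ) + 1 ≠ 0 := k.cast_add_one_ne_zero
  have hlim := ((S₁.tendsto_exponentForcing_div hh).log hk).sub
    ((S₂.tendsto_exponentForcing_div hh).log hk)
  rw [sub_self] at hlim
  refine hlim.congr' ?_
  filter_upwards [self_mem_nhdsWithin, S₁.eventually_b_lt_comp_exponentRadius hh,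
    S₂.eventually_b_lt_comp_exponentRadius hh] with t (ht : 0 < t) hb₁ hb₂
  rw [Real.log_div (S₁.exponentForcing_pos hh ht hb₁).ne' ht.ne',
    Real.log_div (S₂.exponentForcing_pos hh ht hb₂).ne' ht.ne', sub_sub_sub_cancel_right]

theorem elasticity_comp_exponentRadius_lt (hh : IsBump h dh H ω b m c)
    (S₁ : IsRadialSolution k h u₁ v₁) (S₂ : IsRadialSolution k h u₂ v₂) (ht : 0 < t)
    (hb : b < u₂ (exponentRadius u₂ v₂ t))
    (hlt : u₂ (exponentRadius u₂ v₂ t) < u₁ (exponentRadius u₁ v₁ t)) :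
    elasticity h dh (u₁ (exponentRadius u₁ v₁ t)) <
      elasticity h dh (u₂ (exponentRadius u₂ v₂ t)) :=
  hh.strictAntiOn_elasticity (S₂.comp_exponentRadius_mem_Ioo hh ht hb)
    (S₁.comp_exponentRadius_mem_Ioo hh ht (hb.trans hlt)) hlt

theorem eventually_comp_exponentRadius_lt (hh : IsBump h dh H ω b m c)
    (S₁ : IsRadialSolution k h u₁ v₁) (S₂ : IsRadialSolution k h u₂ v₂) (h0 : u₂ 0 < u₁ 0) :
    ∀ᶠ t in 𝓝[>] 0, u₂ (exponentRadius u₂ v₂ t) < u₁ (exponentRadius u₁ v₁ t) :=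
  (S₂.tendsto_comp_exponentRadius hh).eventually_lt (S₁.tendsto_comp_exponentRadius hh) h0

theorem hasDerivAt_log_exponentForcing (hh : IsBump h dh H ω b m c)
    (S : IsRadialSolution k h u v) (ht : 0 < t) (hb : b < u (exponentRadius u v t)) :
    HasDerivAt (fun t => Real.log (exponentForcing h u v t))
      ((2 - t * elasticity h dh (u (exponentRadius u v t))) /
        riccatiField k t (exponentForcing h u v t)) t := by
  have hy := (S.exponentForcing_pos hh ht hb).ne'
  have hw := (hh.pos_of_mem_Ioo (S.comp_exponentRadius_mem_Ioo hh ht hb)).ne'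
  refine ((S.hasDerivAt_exponentForcing hh ht hw).log hy).congr_deriv ?_
  rw [mul_div_assoc, mul_div_cancel_left₀ _ hy]

theorem exponentForcing_lt_of_forall_Ioc (hh : IsBump h dh H ω b m c)
    (S₁ : IsRadialSolution k h u₁ v₁) (S₂ : IsRadialSolution k h u₂ v₂) (ht : 0 < t)
    (hκ : ∀ s ∈ Ioc 0 t, s * elasticity h dh (u₂ (exponentRadius u₂ v₂ s)) < 2)
    (hb : ∀ s ∈ Ioc 0 t, b < u₂ (exponentRadius u₂ v₂ s))
    (hw : ∀ s ∈ Ioc 0 t, u₂ (exponentRadius u₂ v₂ s) < u₁ (exponentRadius u₁ v₁ s)) :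
    exponentForcing h u₂ v₂ t < exponentForcing h u₁ v₁ t := by
  have hy₁ := fun s (hs : s ∈ Ioc 0 t) =>
    S₁.exponentForcing_pos hh hs.1 ((hb s hs).trans (hw s hs))
  have hy₂ := fun s (hs : s ∈ Ioc 0 t) => S₂.exponentForcing_pos hh hs.1 (hb s hs)
  have htt := right_mem_Ioc.2 ht
  rw [← Real.log_lt_log_iff (hy₂ t htt) (hy₁ t htt), ← sub_pos]
  refine pos_of_tendsto_zero_of_deriv_pos (a := 0)
    (g := fun t => Real.log (exponentForcing h u₁ v₁ t) - Real.log (exponentForcing h u₂ v₂ t))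
    (S₁.tendsto_log_exponentForcing_sub hh S₂)
    (fun s hs => (S₁.hasDerivAt_log_exponentForcing hh hs.1 ((hb s hs).trans (hw s hs))).sub
      (S₂.hasDerivAt_log_exponentForcing hh hs.1 (hb s hs))) (fun s hs hle => ?_) ht
  rw [sub_nonpos, Real.log_le_log_iff (hy₁ s hs) (hy₂ s hs)] at hle
  have hlt := S₁.elasticity_comp_exponentRadius_lt hh S₂ hs.1 (hb s hs) (hw s hs)
  have hnum := sub_lt_sub_left (mul_lt_mul_of_pos_left hlt hs.1) 2
  exact sub_pos.2 (div_lt_div₀ hnum (add_le_add_right hle _)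
    ((sub_pos.2 (hκ s hs)).trans hnum).le (S₁.riccatiField_exponentForcing_pos hh hs.1))

theorem eventually_exponentForcing_lt (hh : IsBump h dh H ω b m c)
    (S₁ : IsRadialSolution k h u₁ v₁) (S₂ : IsRadialSolution k h u₂ v₂) (h0 : u₂ 0 < u₁ 0) :
    ∀ᶠ t in 𝓝[>] 0, exponentForcing h u₂ v₂ t < exponentForcing h u₁ v₁ t := by
  obtain ⟨ε, hε, hev⟩ := mem_nhdsGT_iff_exists_Ioo_subset.1
    ((S₂.eventually_mul_elasticity_lt_two hh).and
      ((S₂.eventually_b_lt_comp_exponentRadius hh).and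
        (S₁.eventually_comp_exponentRadius_lt hh S₂ h0)))
  filter_upwards [Ioo_mem_nhdsGT hε] with t ht
  have hsub : Ioc 0 t ⊆ Ioo 0 ε := fun s hs => ⟨hs.1, hs.2.trans_lt ht.2⟩
  exact S₁.exponentForcing_lt_of_forall_Ioc hh S₂ ht.1 (fun s hs => (hev (hsub hs)).1)
    (fun s hs => (hev (hsub hs)).2.1) fun s hs => (hev (hsub hs)).2.2

theorem exponentForcing_lt_of_b_lt (hh : IsBump h dh H ω b m c)
    (S₁ : IsRadialSolution k h u₁ v₁) (S₂ : IsRadialSolution k h u₂ v₂) (h0 : u₂ 0 < u₁ 0)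
    (ht : 0 < t) (hb : b < u₂ (exponentRadius u₂ v₂ t)) :
    exponentForcing h u₂ v₂ t < exponentForcing h u₁ v₁ t := by
  obtain ⟨ε, hε, hev⟩ := mem_nhdsGT_iff_exists_Ioo_subset.1
    ((S₁.eventually_exponentForcing_lt hh S₂ h0).and
      (S₁.eventually_comp_exponentRadius_lt hh S₂ h0))
  obtain ⟨e, he, heε⟩ := exists_between (lt_min hε ht)
  have het : e < t := heε.trans_le (min_le_right _ _)
  have heε' := hev ⟨he, heε.trans_le (min_le_left _ _)⟩
  have hcont : ∀ {u v}, IsRadialSolution k h u v → ContinuousOn (exponentForcing h u v) (Icc e t) :=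
    fun S => (S.continuousOn_exponentForcing hh).mono fun s hs => he.trans_le hs.1
  rw [← sub_pos]
  refine pos_on_Icc_of_deriv_pos_at_zero
    (g := fun t => exponentForcing h u₁ v₁ t - exponentForcing h u₂ v₂ t)
    ((hcont S₁).sub (hcont S₂)) (sub_pos.2 heε'.1) (fun x hx hpos hzero => ?_) t
    (right_mem_Icc.2 het.le)
  have hx0 : 0 < x := he.trans hx.1
  have hbx : b < u₂ (exponentRadius u₂ v₂ x) :=
    hb.trans_le ((S₂.strictAntiOn_comp_exponentRadius hh).antitoneOn hx0 ht hx.2)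
  have hw := S₁.comp_exponentRadius_lt_of_exponentForcing_lt hh S₂ he hx.1
    (fun s hs => sub_pos.1 (hpos s ⟨hs.1.le, hs.2⟩)) heε'.2
  have hκ := S₁.elasticity_comp_exponentRadius_lt hh S₂ hx0 hbx hw
  have hh₁ := (hh.pos_of_mem_Ioo (S₁.comp_exponentRadius_mem_Ioo hh hx0 (hbx.trans hw))).ne'
  have hh₂ := (hh.pos_of_mem_Ioo (S₂.comp_exponentRadius_mem_Ioo hh hx0 hbx)).ne'
  refine ⟨_, ?_, (S₁.hasDerivAt_exponentForcing hh hx0 hh₁).sub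
    (S₂.hasDerivAt_exponentForcing hh hx0 hh₂)⟩
  rw [sub_eq_zero.1 hzero, sub_pos]
  have hy := S₂.exponentForcing_pos hh hx0 hbx
  have hN := S₂.riccatiField_exponentForcing_pos hh hx0
  gcongr

theorem comp_exponentRadius_lt_of_b_le (hh : IsBump h dh H ω b m c)
    (S₁ : IsRadialSolution k h u₁ v₁) (S₂ : IsRadialSolution k h u₂ v₂) (h0 : u₂ 0 < u₁ 0)
    (ht : 0 < t) (hb : b ≤ u₂ (exponentRadius u₂ v₂ t)) :
    u₂ (exponentRadius u₂ v₂ t) < u₁ (exponentRadius u₁ v₁ t) := by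
  obtain ⟨e, hew, he, het⟩ :=
    ((S₁.eventually_comp_exponentRadius_lt hh S₂ h0).and (Ioo_mem_nhdsGT ht)).exists
  refine S₁.comp_exponentRadius_lt_of_exponentForcing_lt hh S₂ he het (fun s hs => ?_) hew
  have hs0 : 0 < s := he.trans hs.1
  exact S₁.exponentForcing_lt_of_b_lt hh S₂ h0 hs0
    (hb.trans_lt (S₂.strictAntiOn_comp_exponentRadius hh hs0 ht hs.2))

theorem exponentForcing_lt_of_le_b (hh : IsBump h dh H ω b m c)
    (S₁ : IsRadialSolution k h u₁ v₁) (S₂ : IsRadialSolution k h u₂ v₂) (ht : 0 < t)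
    (hb : u₂ (exponentRadius u₂ v₂ t) ≤ b)
    (hw : u₂ (exponentRadius u₂ v₂ t) < u₁ (exponentRadius u₁ v₁ t))
    (hR : exponentRadius u₁ v₁ t ≤ exponentRadius u₂ v₂ t) :
    exponentForcing h u₂ v₂ t < exponentForcing h u₁ v₁ t := by
  have hR₁ := S₁.exponentRadius_pos hh ht
  have hR₂ := S₂.exponentRadius_pos hh ht
  have hmem : u₂ (exponentRadius u₂ v₂ t) ∈ Ioc 0 m := ⟨S₂.pos _ hR₂.le, hb.trans hh.b_lt_m.le⟩
  have hh₂ : h (u₂ (exponentRadius u₂ v₂ t)) ≤ 0 :=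
    hh.apply_b ▸ hh.strictMonoOn.monotoneOn hmem ⟨hh.b_pos, hh.b_lt_m.le⟩ hb
  rcases lt_or_ge b (u₁ (exponentRadius u₁ v₁ t)) with hb₁ | hb₁
  · exact (mul_nonpos_of_nonneg_of_nonpos (sq_nonneg _) hh₂).trans_lt
      (S₁.exponentForcing_pos hh ht hb₁)
  · have hhlt := hh.strictMonoOn hmem ⟨S₁.pos _ hR₁.le, hb₁.trans hh.b_lt_m.le⟩ hw
    calc exponentForcing h u₂ v₂ t
        ≤ exponentRadius u₁ v₁ t ^ 2 * h (u₂ (exponentRadius u₂ v₂ t)) :=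
          mul_le_mul_of_nonpos_right (pow_le_pow_left₀ hR₁.le hR 2) hh₂
      _ < exponentForcing h u₁ v₁ t := mul_lt_mul_of_pos_left hhlt (pow_pos hR₁ 2)

theorem exponentForcing_lt_of_lt (hh : IsBump h dh H ω b m c)
    (S₁ : IsRadialSolution k h u₁ v₁) (S₂ : IsRadialSolution k h u₂ v₂) (hs : 0 < s)
    (hb : u₂ (exponentRadius u₂ v₂ s) ≤ b)
    (hw : u₂ (exponentRadius u₂ v₂ s) < u₁ (exponentRadius u₁ v₁ s))
    (hR : exponentRadius u₁ v₁ s ≤ exponentRadius u₂ v₂ s) (hst : s < t) :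
    exponentForcing h u₂ v₂ t < exponentForcing h u₁ v₁ t := by
  have hcont : ∀ {u v}, IsRadialSolution k h u v → ContinuousOn (exponentForcing h u v) (Icc s t) :=
    fun S => (S.continuousOn_exponentForcing hh).mono fun x hx => hs.trans_le hx.1
  rw [← sub_pos]
  refine pos_on_Icc_of_ne_zero
    (g := fun t => exponentForcing h u₁ v₁ t - exponentForcing h u₂ v₂ t)
    ((hcont S₁).sub (hcont S₂)) (sub_pos.2 (S₁.exponentForcing_lt_of_le_b hh S₂ hs hb hw hR))
    (fun x hx hpos => ?_) t (right_mem_Icc.2 hst.le)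
  have hlt : ∀ y ∈ Ioo s x, exponentForcing h u₂ v₂ y < exponentForcing h u₁ v₁ y := fun y hy =>
    sub_pos.1 (hpos y ⟨hy.1.le, hy.2⟩)
  have hx0 := hs.trans hx.1
  exact sub_ne_zero.2 (S₁.exponentForcing_lt_of_le_b hh S₂ hx0
    (((S₂.strictAntiOn_comp_exponentRadius hh) hs hx0 hx.1).le.trans hb)
    (S₁.comp_exponentRadius_lt_of_exponentForcing_lt hh S₂ hs hx.1 hlt hw)
    (S₁.exponentRadius_lt_of_exponentForcing_lt hh S₂ hs hx.1 hlt hR).le).ne'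

theorem tendsto_log_exponentRadius_sub (hh : IsBump h dh H ω b m c)
    (S₁ : IsRadialSolution k h u₁ v₁) (S₂ : IsRadialSolution k h u₂ v₂) :
    Tendsto (fun t => Real.log (exponentRadius u₂ v₂ t) - Real.log (exponentRadius u₁ v₁ t))
      atTop (𝓝 0) := by
  have hω := (Real.sqrt_pos.2 hh.ω_pos).ne'
  have hlim := ((S₁.tendsto_div_exponentRadius hh).log hω).sub
    ((S₂.tendsto_div_exponentRadius hh).log hω)
  rw [sub_self] at hlim
  refine hlim.congr' ?_
  filter_upwards [eventually_gt_atTop 0] with t ht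
  rw [Real.log_div ht.ne' (S₁.exponentRadius_pos hh ht).ne',
    Real.log_div ht.ne' (S₂.exponentRadius_pos hh ht).ne', sub_sub_sub_cancel_left]

theorem exponentRadius_lt_of_le_b (hh : IsBump h dh H ω b m c)
    (S₁ : IsRadialSolution k h u₁ v₁) (S₂ : IsRadialSolution k h u₂ v₂) (ht : 0 < t)
    (hb : u₂ (exponentRadius u₂ v₂ t) ≤ b)
    (hw : u₂ (exponentRadius u₂ v₂ t) < u₁ (exponentRadius u₁ v₁ t)) :
    exponentRadius u₂ v₂ t < exponentRadius u₁ v₁ t := by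
  by_contra! hR
  have hmono := S₁.strictMonoOn_log_radius_sub hh S₂ (convex_Ici t) (fun x hx => ht.trans_le hx)
    (by simpa using fun x hx => S₁.exponentForcing_lt_of_lt hh S₂ ht hb hw hR hx)
  have hlog := sub_nonneg.2 (Real.log_le_log (S₁.exponentRadius_pos hh ht) hR)
  have hnext := hmono self_mem_Ici (lt_add_one t).le (lt_add_one t)
  refine (hlog.trans_lt hnext).not_ge (ge_of_tendsto (S₁.tendsto_log_exponentRadius_sub hh S₂)
    ((eventually_ge_atTop (t + 1)).mono fun x hx => ?_))
  have htx : t ≤ t + 1 := by linarith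
  exact hmono.monotoneOn htx (htx.trans hx) hx

theorem apply_lt_of_decayExponent_le (S₁ : IsRadialSolution k h u₁ v₁)
    (S₂ : IsRadialSolution k h u₂ v₂) (h0 : u₂ 0 < u₁ 0) (hr : 0 ≤ r)
    (hle : ∀ s ∈ Ioo 0 r, decayExponent u₁ v₁ s ≤ decayExponent u₂ v₂ s) : u₂ r < u₁ r := by
  have hmono : MonotoneOn (fun s => Real.log (u₁ s) - Real.log (u₂ s)) (Icc 0 r) := by
    refine monotoneOn_of_hasDerivWithinAt_nonneg (convex_Icc 0 r)
      (((S₁.continuousOn.mono Icc_subset_Ici_self).log fun s hs => (S₁.pos s hs.1).ne').sub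
        ((S₂.continuousOn.mono Icc_subset_Ici_self).log fun s hs => (S₂.pos s hs.1).ne'))
      (f' := fun s => v₁ s / u₁ s - v₂ s / u₂ s) (fun s hs => ?_) fun s hs => ?_ <;>
      rw [interior_Icc] at hs
    · exact (((S₁.hasDerivAt s hs.1).log (S₁.pos s hs.1.le).ne').sub
        ((S₂.hasDerivAt s hs.1).log (S₂.pos s hs.1.le).ne')).hasDerivWithinAt
    · have hle' := le_of_mul_le_mul_left (hle s hs) hs.1
      rw [neg_div, neg_div, neg_le_neg_iff] at hle'
      exact sub_nonneg.2 hle'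
  have hlog := hmono (left_mem_Icc.2 hr) (right_mem_Icc.2 hr) hr
  have hlog0 := Real.log_lt_log (S₂.pos 0 le_rfl) h0
  exact (Real.log_lt_log_iff (S₂.pos r hr) (S₁.pos r hr)).1 (by linarith)

theorem exists_comp_exponentRadius_eq_b (hh : IsBump h dh H ω b m c)
    (S : IsRadialSolution k h u v) : ∃ t, 0 < t ∧ u (exponentRadius u v t) = b := by
  obtain ⟨r, hr, hrb⟩ := S.surjOn ⟨hh.b_pos, (S.apply_zero_mem_Ioo hh).1⟩
  refine ⟨decayExponent u v r, S.decayExponent_pos hh hr, ?_⟩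
  rw [S.exponentRadius_decayExponent hh hr, hrb]

theorem decayExponent_lt_of_exponentRadius_lt (hh : IsBump h dh H ω b m c)
    (S₁ : IsRadialSolution k h u₁ v₁) (S₂ : IsRadialSolution k h u₂ v₂) (hr : 0 < r)
    (hR : exponentRadius u₂ v₂ (decayExponent u₁ v₁ r) <
      exponentRadius u₁ v₁ (decayExponent u₁ v₁ r)) :
    decayExponent u₁ v₁ r < decayExponent u₂ v₂ r := by
  rwa [S₁.exponentRadius_decayExponent hh hr,
    S₂.exponentRadius_lt_iff hh (S₁.decayExponent_pos hh hr) hr] at hR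

theorem exponentRadius_lt_of_b_le (hh : IsBump h dh H ω b m c)
    (S₁ : IsRadialSolution k h u₁ v₁) (S₂ : IsRadialSolution k h u₂ v₂) (h0 : u₂ 0 < u₁ 0)
    (ht : 0 < t) (hb : b ≤ u₂ (exponentRadius u₂ v₂ t)) :
    exponentRadius u₂ v₂ t < exponentRadius u₁ v₁ t := by
  obtain ⟨t₀, ht₀, hb₀⟩ := S₂.exists_comp_exponentRadius_eq_b hh
  have hend := S₁.exponentRadius_lt_of_le_b hh S₂ ht₀ hb₀.le
    (S₁.comp_exponentRadius_lt_of_b_le hh S₂ h0 ht₀ hb₀.ge)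
  rw [← hb₀, (S₂.strictAntiOn_comp_exponentRadius hh).le_iff_ge ht₀ ht] at hb
  rcases hb.eq_or_lt with rfl | htt₀
  · exact hend
  by_contra! hR
  refine hend.not_gt (S₁.exponentRadius_lt_of_exponentForcing_lt hh S₂ ht htt₀ (fun s hs => ?_) hR)
  have hs0 := ht.trans hs.1
  exact S₁.exponentForcing_lt_of_b_lt hh S₂ h0 hs0
    (hb₀ ▸ S₂.strictAntiOn_comp_exponentRadius hh hs0 ht₀ hs.2)

theorem exponentRadius_lt (hh : IsBump h dh H ω b m c)
    (S₁ : IsRadialSolution k h u₁ v₁) (S₂ : IsRadialSolution k h u₂ v₂) (h0 : u₂ 0 < u₁ 0)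
    (ht : 0 < t) : exponentRadius u₂ v₂ t < exponentRadius u₁ v₁ t := by
  obtain ⟨t₀, ht₀, hb₀⟩ := S₂.exists_comp_exponentRadius_eq_b hh
  have hw₂ := S₂.strictAntiOn_comp_exponentRadius hh
  have hbefore : ∀ s, 0 < s → s ≤ t₀ → exponentRadius u₂ v₂ s < exponentRadius u₁ v₁ s :=
    fun s hs hst₀ => S₁.exponentRadius_lt_of_b_le hh S₂ h0 hs
      (hb₀.ge.trans (hw₂.antitoneOn hs ht₀ hst₀))
  rcases le_total t t₀ with htt₀ | htt₀
  · exact hbefore t ht htt₀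
  have hcont : ∀ {u v}, IsRadialSolution k h u v → ContinuousOn (exponentRadius u v) (Icc t₀ t) :=
    fun S x hx =>
      (S.hasDerivAt_exponentRadius hh (ht₀.trans_le hx.1)).continuousAt.continuousWithinAt
  rw [← sub_pos]
  refine pos_on_Icc_of_ne_zero (g := fun t => exponentRadius u₁ v₁ t - exponentRadius u₂ v₂ t)
    ((hcont S₁).sub (hcont S₂)) (sub_pos.2 (hbefore t₀ ht₀ le_rfl)) (fun x hx hpos hzero => ?_) t
    (right_mem_Icc.2 htt₀)
  have hx0 := ht₀.trans hx.1
  have hRx := sub_eq_zero.1 hzero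
  -- At the first `x` where the two radii agree, `u₂ < u₁` still holds at that common radius.
  have hux := S₁.apply_lt_of_decayExponent_le S₂ h0 (S₁.exponentRadius_pos hh hx0).le
    fun s hs => (S₁.decayExponent_lt_of_exponentRadius_lt hh S₂ hs.1 (by
      have hsx := (S₁.lt_exponentRadius_iff hh hx0 hs.1).1 hs.2
      rcases le_total (decayExponent u₁ v₁ s) t₀ with hle | hge
      · exact hbefore _ (S₁.decayExponent_pos hh hs.1) hle
      · exact sub_pos.1 (hpos _ ⟨hge, hsx⟩))).le
  refine hRx.not_gt (S₁.exponentRadius_lt_of_le_b hh S₂ hx0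
    (hb₀ ▸ (hw₂ ht₀ hx0 hx.1).le) (hRx ▸ hux))

theorem apply_lt_of_apply_zero_lt (hh : IsBump h dh H ω b m c)
    (S₁ : IsRadialSolution k h u₁ v₁) (S₂ : IsRadialSolution k h u₂ v₂) (h0 : u₂ 0 < u₁ 0)
    (hr : 0 ≤ r) : u₂ r < u₁ r :=
  S₁.apply_lt_of_decayExponent_le S₂ h0 hr fun _ hs =>
    (S₁.decayExponent_lt_of_exponentRadius_lt hh S₂ hs.1
      (S₁.exponentRadius_lt hh S₂ h0 (S₁.decayExponent_pos hh hs.1))).le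

end IsRadialSolution

/-! ### Comparison at equal heights -/

/-- The positive radius at which the decreasing function `u₂` takes the value `u₁ r`. The signs make
the inverted function increasing. -/
noncomputable def matchingRadius (u₁ u₂ : ℝ → ℝ) (r : ℝ) : ℝ :=
  Function.invFunOn (fun s => -u₂ s) (Ioi 0) (-u₁ r)

/-- The difference `r^(2k) (v₁² - v₂²)`, with `v₁` taken at `r` and `v₂` at the matching radius. By
the energy identities it varies through the friction terms alone. -/
noncomputable def matchedSlopeGap (k : ℕ) (u₁ v₁ u₂ v₂ : ℝ → ℝ) (r : ℝ) : ℝ :=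
  (r ^ k * v₁ r) ^ 2 - (r ^ k * v₂ (matchingRadius u₁ u₂ r)) ^ 2

namespace IsRadialSolution

theorem matchingRadius_mem (S₂ : IsRadialSolution k h u₂ v₂) (hu : u₁ r ∈ Ioo 0 (u₂ 0)) :
    -u₁ r ∈ (fun s => -u₂ s) '' Ioi 0 := by
  obtain ⟨s, hs, hsu⟩ := S₂.surjOn hu
  exact ⟨s, hs, congrArg Neg.neg hsu⟩

theorem matchingRadius_pos (S₂ : IsRadialSolution k h u₂ v₂) (hu : u₁ r ∈ Ioo 0 (u₂ 0)) :
    0 < matchingRadius u₁ u₂ r :=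
  Function.invFunOn_mem (S₂.matchingRadius_mem hu)

theorem apply_matchingRadius (S₂ : IsRadialSolution k h u₂ v₂) (hu : u₁ r ∈ Ioo 0 (u₂ 0)) :
    u₂ (matchingRadius u₁ u₂ r) = u₁ r :=
  neg_inj.1 (Function.invFunOn_eq (S₂.matchingRadius_mem hu))

theorem matchingRadius_lt (hh : IsBump h dh H ω b m c) (S₂ : IsRadialSolution k h u₂ v₂)
    (hs : 0 ≤ s) (hu : u₁ r ∈ Ioo 0 (u₂ 0)) (hlt : u₂ s < u₁ r) : matchingRadius u₁ u₂ r < s := by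
  rw [← (S₂.strictAntiOn hh).lt_iff_gt hs (S₂.matchingRadius_pos hu).le]
  exact hlt.trans_eq (S₂.apply_matchingRadius hu).symm

theorem tendsto_matchingRadius (hh : IsBump h dh H ω b m c) (S₁ : IsRadialSolution k h u₁ v₁)
    (S₂ : IsRadialSolution k h u₂ v₂) (hr : 0 < r) (hru : u₁ r = u₂ 0) :
    Tendsto (matchingRadius u₁ u₂) (𝓝[>] r) (𝓝[>] 0) := by
  have hmem : ∀ᶠ s in 𝓝[>] r, u₁ s ∈ Ioo 0 (u₂ 0) := by
    filter_upwards [self_mem_nhdsWithin] with s (hs : r < s)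
    exact ⟨S₁.pos s (hr.trans hs).le,
      hru ▸ S₁.strictAntiOn hh hr.le (hr.trans hs).le hs⟩
  refine tendsto_nhdsWithin_iff.2 ⟨tendsto_order.2 ⟨fun ε hε => ?_, fun ε hε => ?_⟩, ?_⟩
  · exact hmem.mono fun s hs => hε.trans (S₂.matchingRadius_pos hs)
  · have hlt : u₂ ε < u₁ r := hru ▸ S₂.strictAntiOn hh self_mem_Ici hε.le hε
    filter_upwards [hmem, ((S₁.hasDerivAt r hr).continuousAt.eventually_const_lt hlt).filter_mono
      nhdsWithin_le_nhds] with s hs hεs using S₂.matchingRadius_lt hh (le_of_lt hε) hs hεs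
  · exact hmem.mono fun s hs => S₂.matchingRadius_pos hs

theorem hasDerivAt_matchingRadius (hh : IsBump h dh H ω b m c) (S₁ : IsRadialSolution k h u₁ v₁)
    (S₂ : IsRadialSolution k h u₂ v₂) (hr : 0 < r) (hu : u₁ r ∈ Ioo 0 (u₂ 0)) :
    HasDerivAt (matchingRadius u₁ u₂) (v₁ r / v₂ (matchingRadius u₁ u₂ r)) r := by
  have hσ := S₂.matchingRadius_pos hu
  have hinv := hasDerivAt_invFunOn isOpen_Ioi
    (((S₂.strictAntiOn hh).mono Ioi_subset_Ici_self).neg) (fun s hs => (S₂.hasDerivAt s hs).neg) hσ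
    (neg_ne_zero.2 (S₂.deriv_neg hh hσ).ne)
  rw [S₂.apply_matchingRadius hu] at hinv
  refine (hinv.comp r (S₁.hasDerivAt r hr).neg).congr_deriv ?_
  rw [inv_neg, neg_mul_neg, mul_comm, div_eq_mul_inv]

theorem hasDerivAt_matchedSlopeGap (hh : IsBump h dh H ω b m c) (S₁ : IsRadialSolution k h u₁ v₁)
    (S₂ : IsRadialSolution k h u₂ v₂) (hr : 0 < r) (hu : u₁ r ∈ Ioo 0 (u₂ 0)) :
    HasDerivAt (matchedSlopeGap k u₁ v₁ u₂ v₂)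
      (2 * k * (r ^ k) ^ 2 * (v₂ (matchingRadius u₁ u₂ r) *
        (v₁ r / matchingRadius u₁ u₂ r - v₂ (matchingRadius u₁ u₂ r) / r))) r := by
  have hσ := S₂.matchingRadius_pos hu
  have hv := (S₂.deriv_neg hh hσ).ne
  refine (((S₁.hasDerivAt_flux le_rfl hr).pow 2).sub (((hasDerivAt_pow k r).mul
    ((S₂.hasDerivAt_deriv _ hσ).comp r (S₁.hasDerivAt_matchingRadius hh S₂ hr hu))).pow 2)
    ).congr_deriv ?_
  rw [natCast_mul_pow_pred_eq k hr.ne', S₂.apply_matchingRadius hu]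
  simp only [Function.comp_apply, Pi.mul_apply, Nat.cast_ofNat, Nat.add_one_sub_one, pow_one]
  field_simp
  ring

theorem eventually_matchedSlopeGap_pos (hh : IsBump h dh H ω b m c)
    (S₁ : IsRadialSolution k h u₁ v₁) (S₂ : IsRadialSolution k h u₂ v₂) (hr : 0 < r)
    (hru : u₁ r = u₂ 0) : ∀ᶠ s in 𝓝[>] r, 0 < matchedSlopeGap k u₁ v₁ u₂ v₂ s := by
  have hpow : Tendsto (fun s : ℝ => s ^ k) (𝓝[>] r) (𝓝 (r ^ k)) :=
    (continuous_pow k).continuousAt.mono_left nhdsWithin_le_nhds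
  have hv₁ : Tendsto v₁ (𝓝[>] r) (𝓝 (v₁ r)) :=
    (S₁.hasDerivAt_deriv r hr).continuousAt.mono_left nhdsWithin_le_nhds
  have hv₂ : Tendsto v₂ (𝓝[>] 0) (𝓝 (v₂ 0)) :=
    (S₂.continuousOn_deriv 0 self_mem_Ici).mono_left (nhdsWithin_mono _ Ioi_subset_Ici_self)
  have hlim := ((hpow.mul hv₁).pow 2).sub
    ((hpow.mul (hv₂.comp (S₁.tendsto_matchingRadius hh S₂ hr hru))).pow 2)
  rw [S₂.deriv_zero, mul_zero, zero_pow two_ne_zero, sub_zero] at hlim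
  have hne := mul_ne_zero (pow_pos hr k).ne' (S₁.deriv_neg hh hr).ne
  exact hlim.eventually_const_lt (by positivity)

theorem matchedSlopeGap_deriv_nonneg (hh : IsBump h dh H ω b m c)
    (S₁ : IsRadialSolution k h u₁ v₁) (S₂ : IsRadialSolution k h u₂ v₂) (hr : 0 < r)
    (hu : u₁ r ∈ Ioo 0 (u₂ 0)) (hlt : u₂ r < u₁ r)
    (hgap : 0 < matchedSlopeGap k u₁ v₁ u₂ v₂ r) :
    0 ≤ 2 * k * (r ^ k) ^ 2 * (v₂ (matchingRadius u₁ u₂ r) *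
      (v₁ r / matchingRadius u₁ u₂ r - v₂ (matchingRadius u₁ u₂ r) / r)) := by
  have hσ := S₂.matchingRadius_pos hu
  have hv₁ := S₁.deriv_neg hh hr
  have hv₂ := S₂.deriv_neg hh hσ
  have hv : v₁ r < v₂ (matchingRadius u₁ u₂ r) := by
    rw [matchedSlopeGap, mul_pow, mul_pow, ← mul_sub] at hgap
    have hsq := sub_pos.1 (pos_of_mul_pos_right hgap (by positivity))
    rw [sq_lt_sq, abs_of_neg hv₁, abs_of_neg hv₂] at hsq
    exact neg_lt_neg_iff.1 hsq
  have hle : v₁ r / matchingRadius u₁ u₂ r ≤ v₂ (matchingRadius u₁ u₂ r) / r :=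
    (mul_le_mul_of_nonpos_left (inv_anti₀ hσ (S₂.matchingRadius_lt hh hr.le hu hlt).le)
      hv₁.le).trans (div_le_div_of_nonneg_right hv.le hr.le)
  exact mul_nonneg (by positivity) (mul_nonneg_of_nonpos_of_nonpos hv₂.le (sub_nonpos.2 hle))

theorem exists_apply_le (hh : IsBump h dh H ω b m c) (S₁ : IsRadialSolution k h u₁ v₁)
    (S₂ : IsRadialSolution k h u₂ v₂) : ∃ r, 0 ≤ r ∧ u₁ r ≤ u₂ r := by
  by_contra! hlt
  obtain ⟨r₀, hr₀ : 0 < r₀, hr₀u⟩ := S₁.surjOn ⟨S₂.pos 0 le_rfl, hlt 0 le_rfl⟩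
  obtain ⟨r₁, hgap, hr₁ : r₀ < r₁⟩ := ((S₁.eventually_matchedSlopeGap_pos hh S₂ hr₀ hr₀u).and
    self_mem_nhdsWithin).exists
  have hpos : ∀ r, r₁ ≤ r → 0 < r := fun r hr => hr₀.trans (hr₁.trans_le hr)
  have hmem : ∀ r, r₁ ≤ r → u₁ r ∈ Ioo 0 (u₂ 0) := fun r hr =>
    ⟨S₁.pos r (hpos r hr).le,
      hr₀u ▸ S₁.strictAntiOn hh hr₀.le (hpos r hr).le (hr₁.trans_le hr)⟩
  have hderiv := fun r hr => S₁.hasDerivAt_matchedSlopeGap hh S₂ (hpos r hr) (hmem r hr)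
  have hcont : ContinuousOn (matchedSlopeGap k u₁ v₁ u₂ v₂) (Ici r₁) := fun r hr =>
    (hderiv r hr).continuousAt.continuousWithinAt
  have hmono : ∀ r, r₁ ≤ r → (∀ s ∈ Ico r₁ r, 0 < matchedSlopeGap k u₁ v₁ u₂ v₂ s) →
      matchedSlopeGap k u₁ v₁ u₂ v₂ r₁ ≤ matchedSlopeGap k u₁ v₁ u₂ v₂ r := fun r hr hs => by
    refine monotoneOn_of_hasDerivWithinAt_nonneg (convex_Icc r₁ r)
      (hcont.mono Icc_subset_Ici_self) (fun s hs => (hderiv s ?_).hasDerivWithinAt)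
      (fun s hs' => ?_) (left_mem_Icc.2 hr) (right_mem_Icc.2 hr) hr
    · exact (interior_subset hs).1
    · rw [interior_Icc] at hs'
      exact S₁.matchedSlopeGap_deriv_nonneg hh S₂ (hpos s hs'.1.le) (hmem s hs'.1.le)
        (hlt s (hpos s hs'.1.le).le) (hs s (Ioo_subset_Ico_self hs'))
  have hlower : ∀ r, r₁ ≤ r → matchedSlopeGap k u₁ v₁ u₂ v₂ r₁ ≤ (r ^ k * v₁ r) ^ 2 := fun r hr =>
    (hmono r hr fun s hs => pos_on_Icc_of_ne_zero (hcont.mono Icc_subset_Ici_self) hgap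
      (fun x hx hx' => (hgap.trans_le (hmono x hx.1.le hx')).ne') s ⟨hs.1, hs.2.le⟩).trans
      (sub_le_self _ (sq_nonneg _))
  have hlim := (S₁.tendsto_pow_mul_deriv_zero hh k).pow 2
  rw [zero_pow two_ne_zero] at hlim
  exact hgap.not_ge (ge_of_tendsto hlim ((eventually_ge_atTop r₁).mono hlower))

theorem apply_zero_le (hh : IsBump h dh H ω b m c) (S₁ : IsRadialSolution k h u₁ v₁)
    (S₂ : IsRadialSolution k h u₂ v₂) : u₁ 0 ≤ u₂ 0 := by
  by_contra! h0
  obtain ⟨r, hr, hle⟩ := S₁.exists_apply_le hh S₂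
  exact hle.not_gt (S₁.apply_lt_of_apply_zero_lt hh S₂ h0 hr)

theorem eqOn (hh : IsBump h dh H ω b m c) (S₁ : IsRadialSolution k h u₁ v₁)
    (S₂ : IsRadialSolution k h u₂ v₂) : EqOn u₁ u₂ (Ici 0) :=
  S₁.toIsRadialTrajectory.eqOn hh le_rfl S₂.toIsRadialTrajectory
    ((S₁.apply_zero_le hh S₂).antisymm (S₂.apply_zero_le hh S₁))
    (S₁.deriv_zero.trans S₂.deriv_zero.symm)

end IsRadialSolution

end Radial

/-! ### The double power nonlinearity -/

/-- The quotient `f(x) / x = -ω + x^α - x^β` for the double power nonlinearity `f`, in terms of the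
exponents `α = p - 1` and `β = q - 1`. -/
noncomputable def doublePower (ω α β x : ℝ) : ℝ := -ω + x ^ α - x ^ β

/-- The derivative of `doublePower` on `(0, ∞)`. -/
noncomputable def doublePowerDeriv (α β x : ℝ) : ℝ := α * x ^ (α - 1) - β * x ^ (β - 1)

/-- The primitive of `x * doublePower ω α β x` vanishing at `0`. -/
noncomputable def doublePowerPrimitive (ω α β x : ℝ) : ℝ :=
  -ω * x ^ 2 / 2 + x ^ (α + 2) / (α + 2) - x ^ (β + 2) / (β + 2)

/-- The maximum point of `doublePower` on `(0, ∞)`. -/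
noncomputable def doublePowerPeak (α β : ℝ) : ℝ := (α / β) ^ (β - α)⁻¹

section DoublePower

variable {ω α β b c x y : ℝ}

theorem f_eq_mul_doublePower {p q : ℝ} (hx : 0 < x) :
    f ω p q x = x * doublePower ω (p - 1) (q - 1) x := by
  rw [f, doublePower, Real.rpow_sub_one hx.ne', Real.rpow_sub_one hx.ne']
  field_simp

theorem hasDerivAt_doublePower (hx : 0 < x) :
    HasDerivAt (doublePower ω α β) (doublePowerDeriv α β x) x :=
  ((Real.hasDerivAt_rpow_const (.inl hx.ne')).const_add (-ω)).sub
    (Real.hasDerivAt_rpow_const (.inl hx.ne'))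

theorem hasDerivAt_doublePowerPrimitive (hα : 0 < α) (hβ : 0 < β) (hx : 0 < x) :
    HasDerivAt (doublePowerPrimitive ω α β) (x * doublePower ω α β x) x := by
  have hpow : ∀ γ : ℝ, 0 < γ → HasDerivAt (fun x : ℝ => x ^ (γ + 2) / (γ + 2)) (x * x ^ γ) x :=
    fun γ hγ => by
      refine ((Real.hasDerivAt_rpow_const (.inl hx.ne')).div_const (γ + 2)).congr_deriv ?_
      rw [mul_div_cancel_left₀ _ (by linarith), ← Real.rpow_one_add' hx.le (by linarith)]
      congr 1
      ring
  refine (((((hasDerivAt_pow 2 x).const_mul (-ω)).div_const 2).add (hpow α hα)).sub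
    (hpow β hβ)).congr_deriv ?_
  rw [doublePower]
  ring

theorem tendsto_doublePower (hα : 0 < α) (hβ : 0 < β) :
    Tendsto (doublePower ω α β) (𝓝[>] 0) (𝓝 (-ω)) := by
  have hlim : Tendsto (doublePower ω α β) (𝓝[>] 0) (𝓝 (-ω + 0 - 0)) :=
    ((tendsto_rpow_nhdsGT_zero hα).const_add (-ω)).sub (tendsto_rpow_nhdsGT_zero hβ)
  simpa using hlim

theorem tendsto_doublePowerPrimitive (hα : 0 < α) (hβ : 0 < β) :
    Tendsto (doublePowerPrimitive ω α β) (𝓝[>] 0) (𝓝 0) := by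
  have hpow : ∀ γ : ℝ, 0 < γ →
      Tendsto (fun x : ℝ => x ^ (γ + 2) / (γ + 2)) (𝓝[>] 0) (𝓝 (0 / (γ + 2))) := fun γ hγ =>
    (tendsto_rpow_nhdsGT_zero (add_pos hγ two_pos)).div_const (γ + 2)
  have hlim : Tendsto (doublePowerPrimitive ω α β) (𝓝[>] 0)
      (𝓝 (-ω * 0 / 2 + 0 / (α + 2) - 0 / (β + 2))) :=
    (((tendsto_sq_nhdsGT_zero.const_mul (-ω)).div_const 2).add (hpow α hα)).sub (hpow β hβ)
  simpa using hlim

theorem doublePowerPeak_pos (hα : 0 < α) (hβ : 0 < β) : 0 < doublePowerPeak α β :=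
  Real.rpow_pos_of_pos (div_pos hα hβ) _

theorem doublePowerPeak_lt_one (hα : 0 < α) (hαβ : α < β) : doublePowerPeak α β < 1 :=
  Real.rpow_lt_one (div_pos hα (hα.trans hαβ)).le ((div_lt_one (hα.trans hαβ)).2 hαβ)
    (inv_pos.2 (sub_pos.2 hαβ))

theorem doublePowerDeriv_eq (hα : 0 < α) (hαβ : α < β) (hx : 0 < x) :
    doublePowerDeriv α β x =
      β * x ^ (α - 1) * (doublePowerPeak α β ^ (β - α) - x ^ (β - α)) := by
  have hβ := hα.trans hαβ
  rw [doublePowerPeak, Real.rpow_inv_rpow (div_pos hα hβ).le (sub_pos.2 hαβ).ne', doublePowerDeriv,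
    show β - 1 = α - 1 + (β - α) by ring, Real.rpow_add hx]
  field_simp

theorem isUnimodal_doublePower (hα : 0 < α) (hαβ : α < β) :
    IsUnimodal (doublePower ω α β) (doublePowerDeriv α β) (doublePowerPeak α β) where
  m_pos := doublePowerPeak_pos hα (hα.trans hαβ)
  hasDerivAt _ := hasDerivAt_doublePower
  deriv_pos x hx hxm := by
    have hβ := hα.trans hαβ
    rw [doublePowerDeriv_eq hα hαβ hx]
    exact mul_pos (by positivity) (sub_pos.2 (Real.rpow_lt_rpow hx.le hxm (sub_pos.2 hαβ)))
  deriv_neg x hmx := by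
    have hm := doublePowerPeak_pos hα (hα.trans hαβ)
    have hx := hm.trans hmx
    have hβ := hα.trans hαβ
    rw [doublePowerDeriv_eq hα hαβ hx]
    exact mul_neg_of_pos_of_neg (by positivity)
      (sub_neg.2 (Real.rpow_lt_rpow hm.le hmx (sub_pos.2 hαβ)))

theorem doublePower_neg_of_one_le (hω : 0 < ω) (hαβ : α < β) (hx : 1 ≤ x) :
    doublePower ω α β x < 0 := by
  have := Real.rpow_le_rpow_of_exponent_le hx hαβ.le
  rw [doublePower]
  linarith

theorem mul_doublePowerDeriv (hx : 0 < x) :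
    x * doublePowerDeriv α β x = α * x ^ α - β * x ^ β := by
  rw [doublePowerDeriv, Real.rpow_sub_one hx.ne', Real.rpow_sub_one hx.ne']
  field_simp

theorem sub_mul_sub_lt_sq {A B : ℝ} (hA : 0 < A) (hB : 0 < B) (hω : 0 < ω) (hαβ : α ≠ β)
    (hpos : 0 < -ω + A - B) :
    (α ^ 2 * A - β ^ 2 * B) * (-ω + A - B) < (α * A - β * B) ^ 2 := by
  rcases le_or_gt 0 (α ^ 2 * A - β ^ 2 * B) with hle | hlt
  · have hdiff : (α * A - β * B) ^ 2 - (α ^ 2 * A - β ^ 2 * B) * (-ω + A - B) =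
        A * B * (α - β) ^ 2 + ω * (α ^ 2 * A - β ^ 2 * B) := by ring
    have hsq : 0 < A * B * (α - β) ^ 2 :=
      mul_pos (mul_pos hA hB) (sq_pos_of_ne_zero (sub_ne_zero.2 hαβ))
    exact sub_pos.1 (hdiff ▸ add_pos_of_pos_of_nonneg hsq (mul_nonneg hω.le hle))
  · exact (mul_neg_of_neg_of_pos hlt hpos).trans_le (sq_nonneg _)

theorem hasDerivAt_elasticity_doublePower (hx : 0 < x) (hpos : 0 < doublePower ω α β x) :
    HasDerivAt (elasticity (doublePower ω α β) (doublePowerDeriv α β))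
      (((α ^ 2 * x ^ α - β ^ 2 * x ^ β) * doublePower ω α β x - (α * x ^ α - β * x ^ β) ^ 2) /
        (x * doublePower ω α β x ^ 2)) x := by
  have hnum : HasDerivAt (fun x : ℝ => α * x ^ α - β * x ^ β)
      (α * (α * x ^ (α - 1)) - β * (β * x ^ (β - 1))) x :=
    ((Real.hasDerivAt_rpow_const (.inl hx.ne')).const_mul α).sub
      ((Real.hasDerivAt_rpow_const (.inl hx.ne')).const_mul β)
  have heq : elasticity (doublePower ω α β) (doublePowerDeriv α β) =ᶠ[𝓝 x]
      fun x => (α * x ^ α - β * x ^ β) / doublePower ω α β x := by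
    filter_upwards [lt_mem_nhds hx] with y hy
    rw [elasticity, mul_doublePowerDeriv hy]
  refine ((hnum.div (hasDerivAt_doublePower hx) hpos.ne').congr_of_eventuallyEq heq).congr_deriv ?_
  rw [doublePowerDeriv, Real.rpow_sub_one hx.ne', Real.rpow_sub_one hx.ne']
  field_simp

theorem strictAntiOn_elasticity_doublePower (hω : 0 < ω) (hαβ : α ≠ β) (hb : 0 < b)
    (hpos : ∀ x ∈ Ioo b c, 0 < doublePower ω α β x) :
    StrictAntiOn (elasticity (doublePower ω α β) (doublePowerDeriv α β)) (Ioo b c) := by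
  have hder := fun x (hx : x ∈ Ioo b c) =>
    hasDerivAt_elasticity_doublePower (hb.trans hx.1) (hpos x hx)
  refine strictAntiOn_of_hasDerivWithinAt_neg (convex_Ioo b c)
    (fun x hx => (hder x hx).continuousAt.continuousWithinAt)
    (fun x hx => (hder x (interior_subset hx)).hasDerivWithinAt) fun x hx => ?_
  rw [interior_Ioo] at hx
  have hx0 := hb.trans hx.1
  have hpow := fun γ : ℝ => Real.rpow_pos_of_pos hx0 γ
  exact div_neg_of_neg_of_pos (sub_neg.2 (sub_mul_sub_lt_sq (hpow α) (hpow β) hω hαβ (hpos x hx)))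
    (mul_pos hx0 (pow_pos (hpos x hx) 2))

theorem exists_isBump_doublePower (hω : 0 < ω) (hα : 0 < α) (hαβ : α < β) (hx : 0 < x)
    (hpos : 0 < doublePower ω α β x) :
    ∃ b c, IsBump (doublePower ω α β) (doublePowerDeriv α β) (doublePowerPrimitive ω α β) ω b
      (doublePowerPeak α β) c := by
  have hβ := hα.trans hαβ
  have huni := isUnimodal_doublePower (ω := ω) hα hαβ
  have hpeak := hpos.trans_le (huni.apply_le hx)
  obtain ⟨b, hb, hbm, hhb⟩ :=
    huni.exists_zero_lt (tendsto_doublePower hα hβ) (neg_neg_of_pos hω) hpeak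
  obtain ⟨c, hmc, hhc⟩ := huni.exists_zero_gt hpeak (doublePowerPeak_lt_one hα hαβ)
    (doublePower_neg_of_one_le hω hαβ le_rfl)
  exact ⟨b, c,
    { huni with
      ω_pos := hω
      b_pos := hb
      b_lt_m := hbm
      m_lt_c := hmc
      continuousOn_deriv := by
        refine ContinuousOn.sub ?_ ?_ <;> exact continuousOn_const.mul fun y hy =>
          (Real.continuousAt_rpow_const y _ (.inl (ne_of_gt hy))).continuousWithinAt
      tendsto_zero := tendsto_doublePower hα hβ
      apply_b := hhb
      apply_c := hhc
      hasDerivAt_primitive := fun _ => hasDerivAt_doublePowerPrimitive hα hβ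
      primitive_tendsto_zero := tendsto_doublePowerPrimitive hα hβ
      strictAntiOn_elasticity := strictAntiOn_elasticity_doublePower hω hαβ.ne hb fun _ =>
        huni.pos_between_zeros hb hbm hmc hhb hhc }⟩

end DoublePower

theorem IsPositiveSolution.isRadialSolution {k : ℕ} {g h u : ℝ → ℝ}
    (hg : ∀ x, 0 < x → g x = x * h x) (hu : IsPositiveSolution (k + 1) g u) :
    IsRadialSolution k h u (derivWithin u (Ici 0)) := by
  obtain ⟨hsmooth, hpos, hode, hzero, htop⟩ := hu
  have hdiff : DifferentiableOn ℝ u (Ici 0) := hsmooth.differentiableOn two_ne_zero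
  have hdiff' : DifferentiableOn ℝ (derivWithin u (Ici 0)) (Ici 0) :=
    (hsmooth.derivWithin (m := 1) (uniqueDiffOn_Ici 0) one_add_one_eq_two.le).differentiableOn
      one_ne_zero
  refine ⟨⟨hdiff.continuousOn, hdiff'.continuousOn, hpos, fun r hr =>
    (hdiff r hr.le).hasDerivWithinAt.hasDerivAt (Ici_mem_nhds hr), fun r hr => ?_⟩, hzero, htop⟩
  refine ((hdiff' r hr.le).hasDerivWithinAt.hasDerivAt (Ici_mem_nhds hr)).congr_deriv ?_
  have hr' := hode r hr
  rw [iteratedDerivWithin_succ, iteratedDerivWithin_one, hg _ (hpos r hr.le), Nat.cast_succ,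
    add_sub_cancel_right] at hr'
  linarith

theorem uniqueness_of_positive_solution_general (ω p q : ℝ) (hω : 0 < ω) (hp : 1 < p)
    (hpq : p < q) (n : ℕ) (hn : 1 ≤ n) :
    ∀ u₁ u₂ : ℝ → ℝ, IsPositiveSolution n (f ω p q) u₁ →
      IsPositiveSolution n (f ω p q) u₂ → Set.EqOn u₁ u₂ (Set.Ici 0) := by
  intro u₁ u₂ hu₁ hu₂
  obtain ⟨k, rfl⟩ := Nat.exists_eq_add_of_le' hn
  have S₁ := hu₁.isRadialSolution fun _ => f_eq_mul_doublePower
  have S₂ := hu₂.isRadialSolution fun _ => f_eq_mul_doublePower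
  obtain ⟨x, hx, hpos⟩ := S₁.exists_pos
  obtain ⟨b, c, hbump⟩ :=
    exists_isBump_doublePower hω (sub_pos.2 hp) (sub_lt_sub_right hpq 1) hx hpos
  exact S₁.eqOn hbump S₂

theorem uniqueness_of_positive_solution (ω p q : ℝ) (hω : 0 < ω) (hp : 1 < p)
    (hpq : p < q) (n : ℕ) (hn : 1 ≤ n)
    (htilde : ∀ u : ℝ, 0 < u →
      (f' ω p q u + u * f'' p q u) * f ω p q u - u * (f' ω p q u) ^ 2 < 0) :
    ∀ u₁ u₂ : ℝ → ℝ, IsPositiveSolution n (f ω p q) u₁ →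
      IsPositiveSolution n (f ω p q) u₂ → Set.EqOn u₁ u₂ (Set.Ici 0) :=
  uniqueness_of_positive_solution_general ω p q hω hp hpq n hn
end

section
/- Let ω > 0 and q > p > 1 be real numbers, and let f(u) = -ω·u + u^p - u^q, F(u) = -ω·u²/2 + u^{p+1}/(p+1) - u^{q+1}/(q+1). Then there exists u > 0 with F(u) > 0 if and only if F̃(u) := (f(u) + u·f'(u))·F(u) - u·f(u)² < 0 for all u > 0. -/
/-- The primitive `F(u) = ∫₀ᵘ f = -ω·u²/2 + u^(p+1)/(p+1) - u^(q+1)/(q+1)`. -/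
noncomputable def F (ω p q u : ℝ) : ℝ :=
  -ω * u ^ 2 / 2 + u ^ (p + 1) / (p + 1) - u ^ (q + 1) / (q + 1)

section RpowDiff

variable {a b μ s : ℝ}

/-- The profile `h(s) = s^a / a - s^b / b`, to which `F(u) / u²` reduces after rescaling and up to
an additive constant. The weights put its critical point at `s = 1`; for `s > 0`, the iterates of
`s d/ds` on `h` are `s^a - s^b` and `a s^a - b s^b`. -/
noncomputable def rpowDiff (a b s : ℝ) : ℝ := s ^ a / a - s ^ b / b

/-- The numerator `g · θ²g - (θg)²` of `θ²(log g)`, where `g = rpowDiff a b - μ` and `θ = s d/ds` is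
differentiation in `log s`. It is defined by its explicit formula, which makes sense also where
`g ≤ 0`. -/
noncomputable def logHess (a b μ s : ℝ) : ℝ :=
  (rpowDiff a b s - μ) * (a * s ^ a - b * s ^ b) - (s ^ a - s ^ b) ^ 2

lemma rpowDiff_one : rpowDiff a b 1 = 1 / a - 1 / b := by
  simp only [rpowDiff, Real.one_rpow]

lemma rpowDiff_le_rpowDiff_one (ha : 0 < a) (hab : a ≤ b) (hs : 0 ≤ s) :
    rpowDiff a b s ≤ rpowDiff a b 1 := by
  have hb : 0 < b := ha.trans_le hab
  have bernoulli : 1 + b / a * (s ^ a - 1) ≤ (1 + (s ^ a - 1)) ^ (b / a) :=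
    one_add_mul_self_le_rpow_one_add (by linarith [Real.rpow_nonneg hs a]) ((one_le_div ha).2 hab)
  rw [add_sub_cancel, ← Real.rpow_mul hs, mul_div_cancel₀ b ha.ne'] at bernoulli
  have scaled : 1 / b + (s ^ a - 1) / a ≤ s ^ b / b := by
    calc 1 / b + (s ^ a - 1) / a = (1 + b / a * (s ^ a - 1)) / b := by field_simp
      _ ≤ s ^ b / b := by gcongr
  rw [rpowDiff_one, rpowDiff]
  linarith [sub_div (s ^ a) 1 a]

lemma mul_rpow_sub_mul_rpow_le (ha : 0 < a) (hab : a ≤ b) (hs : 0 < s) :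
    b * s ^ b - a * s ^ a ≤ (b - a) * (s ^ a * s ^ b) := by
  have hb : 0 < b := ha.trans_le hab
  have at_inv : rpowDiff a b s⁻¹ ≤ rpowDiff a b 1 :=
    rpowDiff_le_rpowDiff_one ha hab (inv_nonneg.2 hs.le)
  rw [rpowDiff_one, rpowDiff, Real.inv_rpow hs.le, Real.inv_rpow hs.le] at at_inv
  calc b * s ^ b - a * s ^ a
      = a * b * (s ^ a * s ^ b) * ((s ^ a)⁻¹ / a - (s ^ b)⁻¹ / b) := by field_simp
    _ ≤ a * b * (s ^ a * s ^ b) * (1 / a - 1 / b) := by gcongr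
    _ = (b - a) * (s ^ a * s ^ b) := by field_simp

lemma logHess_eq (ha : a ≠ 0) (hb : b ≠ 0) :
    logHess a b μ s =
      μ * (b * s ^ b - a * s ^ a) - (b - a) * (s ^ a * s ^ b) * rpowDiff a b 1 := by
  rw [logHess, rpowDiff_one, rpowDiff]
  field_simp
  ring

lemma logHess_one (ha : a ≠ 0) (hb : b ≠ 0) :
    logHess a b μ 1 = (b - a) * (μ - rpowDiff a b 1) := by
  rw [logHess_eq ha hb, Real.one_rpow, Real.one_rpow]
  ring

lemma logHess_le (ha : 0 < a) (hab : a ≤ b) (hμ : 0 ≤ μ) (hs : 0 < s) :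
    logHess a b μ s ≤ (b - a) * (s ^ a * s ^ b) * (μ - rpowDiff a b 1) := by
  rw [logHess_eq ha.ne' (ha.trans_le hab).ne']
  linarith [mul_le_mul_of_nonneg_left (mul_rpow_sub_mul_rpow_le ha hab hs) hμ]

lemma exists_lt_rpowDiff_iff (ha : 0 < a) (hab : a ≤ b) :
    (∃ s, 0 < s ∧ μ < rpowDiff a b s) ↔ μ < rpowDiff a b 1 :=
  ⟨fun ⟨_, hs, h⟩ => h.trans_le (rpowDiff_le_rpowDiff_one ha hab hs.le),
    fun h => ⟨1, one_pos, h⟩⟩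

lemma forall_logHess_neg_iff (ha : 0 < a) (hab : a < b) (hμ : 0 ≤ μ) :
    (∀ s, 0 < s → logHess a b μ s < 0) ↔ μ < rpowDiff a b 1 := by
  have hba : 0 < b - a := sub_pos.2 hab
  constructor
  · intro h
    have at_one := h 1 one_pos
    rw [logHess_one ha.ne' (ha.trans hab).ne'] at at_one
    exact sub_neg.1 (neg_of_mul_neg_right at_one hba.le)
  · intro h s hs
    exact (logHess_le ha hab.le hμ hs).trans_lt
      (mul_neg_of_pos_of_neg (by positivity) (sub_neg.2 h))

end RpowDiff

lemma exists_rpow_eq_mul_and_rpow_eq_mul {a b A B : ℝ} (hab : a ≠ b) (hA : 0 < A) (hB : 0 < B) :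
    ∃ c K : ℝ, 0 < c ∧ 0 < K ∧ c ^ a = K * A ∧ c ^ b = K * B := by
  have hBA : 0 < B / A := div_pos hB hA
  obtain ⟨c, hc, ratio⟩ : ∃ c : ℝ, 0 < c ∧ c ^ (b - a) = B / A :=
    ⟨(B / A) ^ (b - a)⁻¹, Real.rpow_pos_of_pos hBA _,
      Real.rpow_inv_rpow hBA.le (sub_ne_zero.2 hab.symm)⟩
  refine ⟨c, c ^ a / A, hc, div_pos (Real.rpow_pos_of_pos hc a) hA,
    (div_mul_cancel₀ _ hA.ne').symm, ?_⟩
  calc c ^ b = c ^ a * c ^ (b - a) := by rw [← Real.rpow_add hc, add_sub_cancel]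
    _ = c ^ a / A * B := by rw [ratio]; ring

lemma mul_rpow_eq_mul_rpow_sub_one {c s r : ℝ} (hc : 0 < c) (hs : 0 < s) :
    (c * s) ^ r = c * s * (c ^ (r - 1) * s ^ (r - 1)) := by
  have hcs : c * s ≠ 0 := (mul_pos hc hs).ne'
  rw [← Real.mul_rpow hc.le hs.le, Real.rpow_sub_one hcs, mul_div_cancel₀ _ hcs]

section Rescaling

-- `hcp` and `hcq` make `c` the critical point of `F(u) / u²`, so that it corresponds to `s = 1`.
variable {p q μ c s K : ℝ}
  (hcp : c ^ (p - 1) = K * ((p + 1) / (p - 1)))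
  (hcq : c ^ (q - 1) = K * ((q + 1) / (q - 1)))

include hcp hcq

lemma F_mul (hp : 1 < p) (hq : 1 < q) (hc : 0 < c) (hs : 0 < s) :
    F (2 * K * μ) p q (c * s) =
      (c * s) ^ 2 * (K * (rpowDiff (p - 1) (q - 1) s - μ)) := by
  have : p - 1 ≠ 0 := by linarith
  have : q - 1 ≠ 0 := by linarith
  have : p + 1 ≠ 0 := by linarith
  have : q + 1 ≠ 0 := by linarith
  rw [F, Real.rpow_add_one (mul_pos hc hs).ne', Real.rpow_add_one (mul_pos hc hs).ne',
    mul_rpow_eq_mul_rpow_sub_one hc hs, mul_rpow_eq_mul_rpow_sub_one hc hs, hcp, hcq, rpowDiff]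
  field_simp
  ring

lemma f_mul (hp : p ≠ 1) (hq : q ≠ 1) (hc : 0 < c) (hs : 0 < s) :
    f (2 * K * μ) p q (c * s) =
      c * s * (K * (2 * (rpowDiff (p - 1) (q - 1) s - μ) + (s ^ (p - 1) - s ^ (q - 1)))) := by
  have : p - 1 ≠ 0 := sub_ne_zero.2 hp
  have : q - 1 ≠ 0 := sub_ne_zero.2 hq
  rw [f, mul_rpow_eq_mul_rpow_sub_one hc hs, mul_rpow_eq_mul_rpow_sub_one hc hs, hcp, hcq,
    rpowDiff]
  field_simp
  ring

lemma f'_mul (hp : p ≠ 1) (hq : q ≠ 1) (hc : 0 ≤ c) (hs : 0 ≤ s) :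
    f' (2 * K * μ) p q (c * s) =
      K * (2 * (rpowDiff (p - 1) (q - 1) s - μ) + 3 * (s ^ (p - 1) - s ^ (q - 1)) +
        ((p - 1) * s ^ (p - 1) - (q - 1) * s ^ (q - 1))) := by
  have : p - 1 ≠ 0 := sub_ne_zero.2 hp
  have : q - 1 ≠ 0 := sub_ne_zero.2 hq
  rw [f', Real.mul_rpow hc hs, Real.mul_rpow hc hs, hcp, hcq, rpowDiff]
  field_simp
  ring

lemma F_mul_pos_iff (hp : 1 < p) (hq : 1 < q) (hc : 0 < c) (hs : 0 < s) (hK : 0 < K) :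
    0 < F (2 * K * μ) p q (c * s) ↔ μ < rpowDiff (p - 1) (q - 1) s := by
  rw [F_mul hcp hcq hp hq hc hs, mul_pos_iff_of_pos_left (by positivity),
    mul_pos_iff_of_pos_left hK, sub_pos]

lemma Ftilde_mul (hp : 1 < p) (hq : 1 < q) (hc : 0 < c) (hs : 0 < s) :
    (f (2 * K * μ) p q (c * s) + c * s * f' (2 * K * μ) p q (c * s)) * F (2 * K * μ) p q (c * s)
        - c * s * f (2 * K * μ) p q (c * s) ^ 2 =
      K ^ 2 * (c * s) ^ 3 * logHess (p - 1) (q - 1) μ s := by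
  rw [F_mul hcp hcq hp hq hc hs, f_mul hcp hcq hp.ne' hq.ne' hc hs,
    f'_mul hcp hcq hp.ne' hq.ne' hc.le hs.le, logHess]
  ring

lemma Ftilde_mul_neg_iff (hp : 1 < p) (hq : 1 < q) (hc : 0 < c) (hs : 0 < s) (hK : 0 < K) :
    (f (2 * K * μ) p q (c * s) + c * s * f' (2 * K * μ) p q (c * s)) * F (2 * K * μ) p q (c * s)
        - c * s * f (2 * K * μ) p q (c * s) ^ 2 < 0 ↔
      logHess (p - 1) (q - 1) μ s < 0 := by
  have scale_pos : 0 < K ^ 2 * (c * s) ^ 3 := by positivity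
  rw [Ftilde_mul hcp hcq hp hq hc hs]
  exact ⟨fun h => neg_of_mul_neg_right h scale_pos.le, mul_neg_of_pos_of_neg scale_pos⟩

end Rescaling

theorem F_pos_iff_Ftilde_neg (ω p q : ℝ) (hω : 0 < ω) (hp : 1 < p) (hpq : p < q) :
    (∃ u : ℝ, 0 < u ∧ 0 < F ω p q u) ↔
      ∀ u : ℝ, 0 < u →
        (f ω p q u + u * f' ω p q u) * F ω p q u - u * (f ω p q u) ^ 2 < 0 := by
  have hq : 1 < q := hp.trans hpq
  have hp₀ : 0 < p - 1 := sub_pos.2 hp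
  have : 0 < q - 1 := sub_pos.2 hq
  have hpq' : p - 1 < q - 1 := sub_lt_sub_right hpq 1
  obtain ⟨c, K, hc, hK, hcp, hcq⟩ := exists_rpow_eq_mul_and_rpow_eq_mul hpq'.ne
    (show 0 < (p + 1) / (p - 1) by positivity) (show 0 < (q + 1) / (q - 1) by positivity)
  obtain ⟨μ, rfl⟩ : ∃ μ, ω = 2 * K * μ := ⟨ω / (2 * K), by field_simp⟩
  have hμ : 0 ≤ μ := (pos_of_mul_pos_right hω (by positivity)).le
  let rescale : ℝ ≃ ℝ := Equiv.mulLeft₀ c hc.ne'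
  have rescale_pos (s : ℝ) : 0 < s ↔ 0 < rescale s := (mul_pos_iff_of_pos_left hc).symm
  calc (∃ u, 0 < u ∧ 0 < F (2 * K * μ) p q u)
      ↔ ∃ s, 0 < s ∧ μ < rpowDiff (p - 1) (q - 1) s := .symm <| rescale.exists_congr fun s =>
        (and_congr_right fun hs => (F_mul_pos_iff hcp hcq hp hq hc hs hK).symm).trans
          (and_congr_left' (rescale_pos s))
    _ ↔ μ < rpowDiff (p - 1) (q - 1) 1 := exists_lt_rpowDiff_iff hp₀ hpq'.le
    _ ↔ ∀ s, 0 < s → logHess (p - 1) (q - 1) μ s < 0 :=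
        (forall_logHess_neg_iff hp₀ hpq' hμ).symm
    _ ↔ _ := rescale.forall_congr fun s =>
        (forall_congr' fun hs => (Ftilde_mul_neg_iff hcp hcq hp hq hc hs hK).symm).trans
          (imp_congr_left (rescale_pos s))
end

section
/- Let ω > 0 and q > p > 1 be real numbers, and let f(u) = -ω·u + u^p - u^q. Then f̃(u) := (f'(u) + u·f''(u))·f(u) - u·f'(u)² < 0 for all u > 0 if and only if there exists u > 0 with f(u) > 0. -/
/-!
Write `a = p - 1`, `b = q - 1`, so that `0 < a < b`. Dividing `f` and `f̃` by positive powers of `u`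
turns `0 < f u` into `ω < u ^ a - u ^ b`, and `f̃ u < 0` into
`ω * (b ^ 2 * u⁻¹ ^ a - a ^ 2 * u⁻¹ ^ b) < (b - a) ^ 2`. Both functions of `u` attain their maximum
at the same point, the solution `m` of `a * m ^ a = b * m ^ b`, and the product of the two maxima is
exactly `(b - a) ^ 2`. Hence either condition says that `ω` is below the first maximum.
-/

section RealPowers

variable {a b c d m t : ℝ}

theorem rpow_sub_one_le_div_mul_rpow_sub_one (ha : 0 ≤ a) (hb : 0 < b) (hab : a ≤ b) (ht : 0 ≤ t) :
    t ^ a - 1 ≤ a / b * (t ^ b - 1) := by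
  have bernoulli : (1 + (t ^ b - 1)) ^ (a / b) ≤ 1 + a / b * (t ^ b - 1) :=
    rpow_one_add_le_one_add_mul_self (by linarith [Real.rpow_nonneg ht b])
      (div_nonneg ha hb.le) ((div_le_one hb).mpr hab)
  rw [add_sub_cancel, ← Real.rpow_mul ht, mul_div_cancel₀ a hb.ne'] at bernoulli
  linarith

theorem exists_pos_mul_rpow_eq_mul_rpow (hc : 0 < c) (hd : 0 < d) (hab : a ≠ b) :
    ∃ m : ℝ, 0 < m ∧ c * m ^ a = d * m ^ b := by
  have hcd : 0 < c / d := div_pos hc hd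
  set m := (c / d) ^ (b - a)⁻¹
  have hm : 0 < m := Real.rpow_pos_of_pos hcd _
  have hpow : m ^ (b - a) = c / d := Real.rpow_inv_rpow hcd.le (sub_ne_zero.mpr hab.symm)
  refine ⟨m, hm, ?_⟩
  calc c * m ^ a = d * (m ^ a * m ^ (b - a)) := by rw [hpow]; field_simp
    _ = d * m ^ b := by rw [← Real.rpow_add hm, add_sub_cancel]

theorem isMaxOn_mul_rpow_sub_mul_rpow (ha : 0 ≤ a) (hb : 0 < b) (hab : a ≤ b) (hc : 0 ≤ c)
    (hm : 0 < m) (hcrit : c * a * m ^ a = d * b * m ^ b) :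
    IsMaxOn (fun t : ℝ => c * t ^ a - d * t ^ b) (Set.Ici 0) m := by
  intro t ht
  rw [Set.mem_Ici] at ht
  obtain ⟨s, hs, rfl⟩ : ∃ s, 0 ≤ s ∧ m * s = t :=
    ⟨t / m, div_nonneg ht hm.le, mul_div_cancel₀ t hm.ne'⟩
  have hcoeff : d * m ^ b = c * m ^ a * (a / b) := by field_simp; linarith
  have hgap : c * m ^ a * (s ^ a - 1) ≤ c * m ^ a * (a / b * (s ^ b - 1)) := by
    gcongr
    exact rpow_sub_one_le_div_mul_rpow_sub_one ha hb hab hs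
  have hscaled : c * m ^ a * (s ^ a - 1) ≤ d * m ^ b * (s ^ b - 1) := by
    rwa [hcoeff, mul_assoc _ (a / b)]
  simp only [Set.mem_ofPred_eq, Real.mul_rpow hm.le hs]
  linarith

theorem isMaxOn_rpow_sub_rpow (ha : 0 ≤ a) (hb : 0 < b) (hab : a ≤ b) (hm : 0 < m)
    (hcrit : a * m ^ a = b * m ^ b) :
    IsMaxOn (fun u : ℝ => u ^ a - u ^ b) (Set.Ici 0) m := by
  simpa only [one_mul] using
    isMaxOn_mul_rpow_sub_mul_rpow ha hb hab zero_le_one hm (d := 1) (by simpa only [one_mul])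

theorem isMaxOn_sq_mul_inv_rpow_sub_sq_mul_inv_rpow (ha : 0 ≤ a) (hb : 0 < b) (hab : a ≤ b)
    (hm : 0 < m) (hcrit : a * m ^ a = b * m ^ b) :
    IsMaxOn (fun u : ℝ => b ^ 2 * u⁻¹ ^ a - a ^ 2 * u⁻¹ ^ b) (Set.Ici 0) m := by
  have hcrit_inv : b ^ 2 * a * m⁻¹ ^ a = a ^ 2 * b * m⁻¹ ^ b := by
    rw [Real.inv_rpow hm.le, Real.inv_rpow hm.le]
    field_simp
    linear_combination -a * hcrit
  exact (isMaxOn_mul_rpow_sub_mul_rpow ha hb hab (sq_nonneg b) (inv_pos.mpr hm)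
    hcrit_inv).comp_mapsTo
      (fun _ hu => Set.mem_Ici.mpr (inv_nonneg.mpr (Set.mem_Ici.mp hu))) rfl

theorem rpow_sub_rpow_mul_inv_rpow_sub_inv_rpow (hm : 0 < m) (hcrit : a * m ^ a = b * m ^ b) :
    (m ^ a - m ^ b) * (b ^ 2 * m⁻¹ ^ a - a ^ 2 * m⁻¹ ^ b) = (b - a) ^ 2 := by
  rw [Real.inv_rpow hm.le, Real.inv_rpow hm.le]
  field_simp
  linear_combination (b * m ^ b - a * m ^ a) * hcrit

end RealPowers

section DoublePower

variable {ω p q u m : ℝ}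

theorem f_eq_mul (hu : u ≠ 0) : f ω p q u = u * (u ^ (p - 1) - u ^ (q - 1) - ω) := by
  simp only [f, Real.rpow_sub_one hu]
  field_simp
  ring

theorem ftilde_eq_mul (hu : 0 < u) :
    (f' ω p q u + u * f'' p q u) * f ω p q u - u * f' ω p q u ^ 2 =
      u * u ^ (p - 1) * u ^ (q - 1) *
        (ω * ((q - 1) ^ 2 * u⁻¹ ^ (p - 1) - (p - 1) ^ 2 * u⁻¹ ^ (q - 1)) - (q - p) ^ 2) := by
  have hpow (r : ℝ) : u ^ (r - 1) = u ^ (r - 2) * u := by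
    rw [← Real.rpow_add_one hu.ne']; ring_nf
  simp only [f_eq_mul hu.ne', f', f'', Real.inv_rpow hu.le, hpow]
  field_simp
  ring

theorem f_pos_iff (hu : 0 < u) : 0 < f ω p q u ↔ ω < u ^ (p - 1) - u ^ (q - 1) := by
  rw [f_eq_mul hu.ne', mul_pos_iff_of_pos_left hu, sub_pos]

theorem ftilde_neg_iff (hu : 0 < u) :
    (f' ω p q u + u * f'' p q u) * f ω p q u - u * f' ω p q u ^ 2 < 0 ↔
      ω * ((q - 1) ^ 2 * u⁻¹ ^ (p - 1) - (p - 1) ^ 2 * u⁻¹ ^ (q - 1)) < (q - p) ^ 2 := by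
  have hfactor : 0 < u * u ^ (p - 1) * u ^ (q - 1) := by positivity
  rw [ftilde_eq_mul hu, ← sub_neg (b := (q - p) ^ 2)]
  exact smul_neg_iff_of_pos_left hfactor

theorem exists_f_pos_iff (hp : 1 ≤ p) (hq : 1 < q) (hpq : p ≤ q) (hm : 0 < m)
    (hcrit : (p - 1) * m ^ (p - 1) = (q - 1) * m ^ (q - 1)) :
    (∃ u, 0 < u ∧ 0 < f ω p q u) ↔ ω < m ^ (p - 1) - m ^ (q - 1) := by
  refine ⟨?_, fun h => ⟨m, hm, (f_pos_iff hm).mpr h⟩⟩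
  rintro ⟨u, hu, hfu⟩
  have hmax := isMaxOn_rpow_sub_rpow (sub_nonneg.mpr hp) (sub_pos.mpr hq)
    (sub_le_sub_right hpq 1) hm hcrit
  exact ((f_pos_iff hu).mp hfu).trans_le (hmax hu.le)

theorem forall_ftilde_neg_iff (hω : 0 ≤ ω) (hp : 1 ≤ p) (hq : 1 < q) (hpq : p ≤ q) (hm : 0 < m)
    (hcrit : (p - 1) * m ^ (p - 1) = (q - 1) * m ^ (q - 1)) :
    (∀ u, 0 < u → (f' ω p q u + u * f'' p q u) * f ω p q u - u * f' ω p q u ^ 2 < 0) ↔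
      ω * ((q - 1) ^ 2 * m⁻¹ ^ (p - 1) - (p - 1) ^ 2 * m⁻¹ ^ (q - 1)) < (q - p) ^ 2 := by
  refine ⟨fun h => (ftilde_neg_iff hm).mp (h m hm), fun h u hu => (ftilde_neg_iff hu).mpr ?_⟩
  have hmax := isMaxOn_sq_mul_inv_rpow_sub_sq_mul_inv_rpow (sub_nonneg.mpr hp) (sub_pos.mpr hq)
    (sub_le_sub_right hpq 1) hm hcrit
  exact (mul_le_mul_of_nonneg_left (hmax hu.le) hω).trans_lt h

end DoublePower

theorem ftilde_neg_iff_f_pos (ω p q : ℝ) (hω : 0 < ω) (hp : 1 < p) (hpq : p < q) :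
    (∀ u : ℝ, 0 < u →
        (f' ω p q u + u * f'' p q u) * f ω p q u - u * (f' ω p q u) ^ 2 < 0) ↔
      ∃ u : ℝ, 0 < u ∧ 0 < f ω p q u := by
  have ha : 0 < p - 1 := sub_pos.mpr hp
  have hab : p - 1 < q - 1 := sub_lt_sub_right hpq 1
  have hb : 0 < q - 1 := ha.trans hab
  obtain ⟨m, hm, hcrit⟩ := exists_pos_mul_rpow_eq_mul_rpow ha hb hab.ne
  rw [forall_ftilde_neg_iff hω.le hp.le (hp.trans hpq) hpq.le hm hcrit,
    exists_f_pos_iff hp.le (hp.trans hpq) hpq.le hm hcrit]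
  have hprod := rpow_sub_rpow_mul_inv_rpow_sub_inv_rpow hm hcrit
  rw [sub_sub_sub_cancel_right] at hprod
  set M := m ^ (p - 1) - m ^ (q - 1)
  set N := (q - 1) ^ 2 * m⁻¹ ^ (p - 1) - (p - 1) ^ 2 * m⁻¹ ^ (q - 1)
  -- `M` dominates the value `0` taken at `u = 1`.
  have hM : 0 ≤ M := sub_nonneg.mpr <| by
    simpa using isMaxOn_rpow_sub_rpow ha.le hb hab.le hm hcrit (Set.mem_Ici.mpr zero_le_one)
  have hN : 0 < N := pos_of_mul_pos_right (hprod ▸ pow_pos (sub_pos.mpr hpq) 2) hM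
  rw [← hprod, mul_lt_mul_iff_left₀ hN]
end

section
/- Let ω > 0 and q > p > 1 be real numbers, and let F(u) = -ω·u²/2 + u^{p+1}/(p+1) - u^{q+1}/(q+1). Then there exists u > 0 with F(u) > 0 if and only if ω < ω_{p,q}, where ω_{p,q} = (2(q-p)/((p+1)(q-1)))·((p-1)(q+1)/((p+1)(q-1)))^{(p-1)/(q-p)}. -/
/-- The critical constant `ω_{p,q}`. -/
noncomputable def omegaPQ (p q : ℝ) : ℝ :=
  2 * (q - p) / ((p + 1) * (q - 1)) *
    ((p - 1) * (q + 1) / ((p + 1) * (q - 1))) ^ ((p - 1) / (q - p))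

/-!
Dividing by `u ^ 2 / 2` turns `0 < F ω p q u` into `ω < c * u ^ a - d * u ^ b` with `a = p - 1`,
`b = q - 1`, `c = 2 / (p + 1)` and `d = 2 / (q + 1)`, so the question is whether `ω` lies below the
maximum of the right-hand side. At a critical point `u₀` the numbers `a * c * u₀ ^ a` and
`b * d * u₀ ^ b` agree; writing `k` for their common value and `x = u / u₀`, the deficit from the
value at `u₀` is `k * ((x ^ b - 1) / b - (x ^ a - 1) / a)`. It is nonnegative because
`(x ^ s - 1) / s` is the slope of the chord of the convex function `s ↦ x ^ s` from `0` to `s`.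
-/

open Set

theorem monotoneOn_rpow_sub_one_div {x : ℝ} (hx : 0 < x) :
    MonotoneOn (fun s : ℝ ↦ (x ^ s - 1) / s) {0}ᶜ := fun s hs t ht hst ↦ by
  simpa using (convexOn_rpow_left hx).secant_mono (mem_univ 0) (mem_univ s) (mem_univ t) hs ht hst

section DifferenceOfPowers

variable {a b c d : ℝ}

theorem isMaxOn_mul_rpow_sub_mul_rpow_s4 {u₀ : ℝ} (hab : a ≤ b) (hac : 0 < a * c) (hbd : 0 < b * d)
    (hu₀ : 0 < u₀) (hcrit : a * c * u₀ ^ a = b * d * u₀ ^ b) :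
    IsMaxOn (fun u ↦ c * u ^ a - d * u ^ b) (Ioi 0) u₀ := by
  intro u (hu : 0 < u)
  have ha : a ≠ 0 := left_ne_zero_of_mul hac.ne'
  have hb : b ≠ 0 := left_ne_zero_of_mul hbd.ne'
  have hchord : ((u / u₀) ^ a - 1) / a ≤ ((u / u₀) ^ b - 1) / b :=
    monotoneOn_rpow_sub_one_div (div_pos hu hu₀) ha hb hab
  have hscaled := mul_le_mul_of_nonneg_left hchord (by positivity : 0 ≤ a * c * u₀ ^ a)
  have hleft : a * c * u₀ ^ a * (((u / u₀) ^ a - 1) / a) = c * u ^ a - c * u₀ ^ a := by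
    rw [Real.div_rpow hu.le hu₀.le]
    field_simp
  have hright : a * c * u₀ ^ a * (((u / u₀) ^ b - 1) / b) = d * u ^ b - d * u₀ ^ b := by
    rw [hcrit, Real.div_rpow hu.le hu₀.le]
    field_simp
  change c * u ^ a - d * u ^ b ≤ c * u₀ ^ a - d * u₀ ^ b
  linarith

theorem isGreatest_mul_rpow_sub_mul_rpow (hab : a < b) (hac : 0 < a * c) (hbd : 0 < b * d) :
    IsGreatest ((fun u ↦ c * u ^ a - d * u ^ b) '' Ioi 0)
      (c * (b - a) / b * (a * c / (b * d)) ^ (a / (b - a))) := by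
  have hb : b ≠ 0 := left_ne_zero_of_mul hbd.ne'
  have hd : d ≠ 0 := right_ne_zero_of_mul hbd.ne'
  have hba : b - a ≠ 0 := sub_ne_zero.mpr hab.ne'
  set r := a * c / (b * d) with hr
  have hr_pos : 0 < r := div_pos hac hbd
  set u₀ := r ^ (1 / (b - a))
  have hu₀ : 0 < u₀ := by positivity
  have hpow_a : u₀ ^ a = r ^ (a / (b - a)) := by
    rw [← Real.rpow_mul hr_pos.le, one_div_mul_eq_div]
  have hpow_b : u₀ ^ b = r ^ (a / (b - a)) * r := by
    rw [← Real.rpow_mul hr_pos.le, ← Real.rpow_add_one hr_pos.ne']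
    congr 1
    field_simp
    ring
  have hcrit : a * c * u₀ ^ a = b * d * u₀ ^ b := by
    rw [hpow_a, hpow_b, hr]
    field_simp
  have hvalue : c * u₀ ^ a - d * u₀ ^ b = c * (b - a) / b * r ^ (a / (b - a)) := by
    rw [hpow_a, hpow_b, hr]
    field_simp
  rw [← hvalue]
  exact ⟨mem_image_of_mem _ hu₀,
    forall_mem_image.mpr fun _ hu ↦ isMaxOn_mul_rpow_sub_mul_rpow_s4 hab.le hac hbd hu₀ hcrit hu⟩

end DifferenceOfPowers

/-- The value of `ω` for which `F ω p q` vanishes at a given `u > 0`, written as a difference of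
powers of `u`. -/
noncomputable def frequencyThreshold (p q u : ℝ) : ℝ :=
  2 / (p + 1) * u ^ (p - 1) - 2 / (q + 1) * u ^ (q - 1)

theorem F_eq_mul_frequencyThreshold_sub (ω p q : ℝ) {u : ℝ} (hu : 0 < u) :
    F ω p q u = u ^ 2 / 2 * (frequencyThreshold p q u - ω) := by
  have rpow_add_one_eq (s : ℝ) : u ^ (s + 1) = u ^ 2 * u ^ (s - 1) := by
    rw [← Real.rpow_natCast, ← Real.rpow_add hu]
    congr 1
    push_cast
    ring
  rw [F, frequencyThreshold, rpow_add_one_eq p, rpow_add_one_eq q]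
  ring

theorem F_pos_iff_lt_frequencyThreshold (ω p q : ℝ) {u : ℝ} (hu : 0 < u) :
    0 < F ω p q u ↔ ω < frequencyThreshold p q u := by
  rw [F_eq_mul_frequencyThreshold_sub ω p q hu, mul_pos_iff_of_pos_left (by positivity), sub_pos]

theorem sub_one_mul_two_div_add_one_pos {s : ℝ} (hs : 1 < |s|) : 0 < (s - 1) * (2 / (s + 1)) := by
  have hsq : 0 < (s - 1) * (s + 1) := by linarith [(one_lt_sq_iff_one_lt_abs s).mpr hs]
  have hs' : s + 1 ≠ 0 := right_ne_zero_of_mul hsq.ne'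
  calc
    0 < 2 * ((s - 1) * (s + 1)) / (s + 1) ^ 2 := by positivity
    _ = (s - 1) * (2 / (s + 1)) := by field_simp

theorem isGreatest_frequencyThreshold {p q : ℝ} (hp : 1 < |p|) (hq : 1 < |q|) (hpq : p < q) :
    IsGreatest (frequencyThreshold p q '' Ioi 0) (omegaPQ p q) := by
  have hp_pos := sub_one_mul_two_div_add_one_pos hp
  have hq_pos := sub_one_mul_two_div_add_one_pos hq
  have hcoeff : 2 * (q - p) / ((p + 1) * (q - 1)) = 2 / (p + 1) * (q - p) / (q - 1) := by
    field_simp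
  have hbase : (p - 1) * (q + 1) / ((p + 1) * (q - 1)) =
      (p - 1) * (2 / (p + 1)) / ((q - 1) * (2 / (q + 1))) := by
    field_simp
  have hmax := isGreatest_mul_rpow_sub_mul_rpow (sub_lt_sub_right hpq 1) hp_pos hq_pos
  rw [sub_sub_sub_cancel_right, ← hcoeff, ← hbase] at hmax
  exact hmax

theorem F_pos_iff_omega_lt_general (ω : ℝ) {p q : ℝ} (hp : 1 < |p|) (hq : 1 < |q|) (hpq : p < q) :
    (∃ u : ℝ, 0 < u ∧ 0 < F ω p q u) ↔ ω < omegaPQ p q := by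
  rw [lt_isLUB_iff (isGreatest_frequencyThreshold hp hq hpq).isLUB, exists_mem_image]
  exact exists_congr fun u ↦ and_congr_right (F_pos_iff_lt_frequencyThreshold ω p q)

theorem F_pos_iff_omega_lt (ω p q : ℝ) (hω : 0 < ω) (hp : 1 < p) (hpq : p < q) :
    (∃ u : ℝ, 0 < u ∧ 0 < F ω p q u) ↔ ω < omegaPQ p q :=
  F_pos_iff_omega_lt_general ω (hp.trans_le (le_abs_self p))
    ((hp.trans hpq).trans_le (le_abs_self q)) hpq
end

section
/- Let ω > 0 and q > p > 1 be real numbers, and let f(u) = -ω·u + u^p - u^q, F(u) = -ω·u²/2 + u^{p+1}/(p+1) - u^{q+1}/(q+1). Then F̃(u) := (f(u) + u·f'(u))·F(u) - u·f(u)² < 0 for all u > 0 if and only if ω < ω_{p,q}, where ω_{p,q} = (2(q-p)/((p+1)(q-1)))·((p-1)(q+1)/((p+1)(q-1)))^{(p-1)/(q-p)}. -/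
/-!
For fixed `u > 0`, the function `F̃(u)` is affine in `ω` and negative at `ω = 0`: it equals a
positive factor times `ω * M(u) - 1`, where `M(u)` is a combination of `u ^ (1 - p)` and
`u ^ (1 - q)`. Hence `F̃ < 0` on `(0, ∞)` if and only if `ω * max M < 1`. By Bernoulli's inequality
`M` is maximal at its critical point, and its value there is `1 / ω_{p,q}`.
-/

/-- The function `F̃ = (u f)' F - u f²` of the double power nonlinearity. -/
noncomputable def Ftilde (ω p q u : ℝ) : ℝ :=
  (f ω p q u + u * f' ω p q u) * F ω p q u - u * f ω p q u ^ 2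

/-- The reciprocal of the frequency `ω` at which `F̃` vanishes at the amplitude `u`. The reciprocal
is used because, unlike that frequency, it is defined at every `u > 0`. -/
noncomputable def invZeroFreq (p q u : ℝ) : ℝ :=
  (p + 1) * (q - 1) ^ 2 / (2 * (q - p) ^ 2) * u ^ (1 - p) -
    (q + 1) * (p - 1) ^ 2 / (2 * (q - p) ^ 2) * u ^ (1 - q)

/-- The critical point of `invZeroFreq p q`, that is, the amplitude at which `F̃` first vanishes as
`ω` increases from `0`. -/
noncomputable def criticalAmplitude (p q : ℝ) : ℝ :=
  ((p - 1) * (q + 1) / ((p + 1) * (q - 1))) ^ (1 / (q - p))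

/-- The equation `hcrit` says that the derivative vanishes at `t₀`. After rescaling to `t₀ = B = 1`,
the claim is Bernoulli's inequality for the base `t ^ b` and the exponent `a / b`. -/
theorem isMaxOn_mul_rpow_sub_mul_rpow_s5 {a b A B t₀ : ℝ} (hb : b ≠ 0) (hab₀ : 0 ≤ a / b)
    (hab₁ : a / b ≤ 1) (hB : 0 ≤ B) (ht₀ : 0 < t₀)
    (hcrit : a * (B * t₀ ^ a) = b * (A * t₀ ^ b)) :
    IsMaxOn (fun t ↦ B * t ^ a - A * t ^ b) (Set.Ioi 0) t₀ := by
  refine isMaxOn_iff.mpr fun t (ht : 0 < t) ↦ ?_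
  obtain ⟨s, hs, rfl⟩ : ∃ s, 0 < s ∧ s * t₀ = t :=
    ⟨t / t₀, div_pos ht ht₀, div_mul_cancel₀ t ht₀.ne'⟩
  have bernoulli : s ^ a ≤ 1 + a / b * (s ^ b - 1) := by
    have h := rpow_one_add_le_one_add_mul_self
      (by linarith [Real.rpow_pos_of_pos hs b] : -1 ≤ s ^ b - 1) hab₀ hab₁
    rwa [add_sub_cancel, ← Real.rpow_mul hs.le, mul_div_cancel₀ a hb] at h
  have hA : A * t₀ ^ b = a / b * (B * t₀ ^ a) := by
    field_simp
    linarith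
  calc B * (s * t₀) ^ a - A * (s * t₀) ^ b
      = B * t₀ ^ a * s ^ a - A * t₀ ^ b * s ^ b := by
        rw [Real.mul_rpow hs.le ht₀.le, Real.mul_rpow hs.le ht₀.le]
        ring
    _ = B * t₀ ^ a * (s ^ a - a / b * s ^ b) := by
        rw [hA]
        ring
    _ ≤ B * t₀ ^ a * (1 - a / b) := by
        gcongr ?_ * ?_
        linarith
    _ = B * t₀ ^ a - A * t₀ ^ b := by
        rw [hA]
        ring

/-- The squares of the individual terms of `f` cancel in `F̃`, so only mixed products survive and
`F̃` is affine in `ω`. -/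
theorem Ftilde_eq_mul_invZeroFreq {p q u : ℝ} (ω : ℝ) (hp : p + 1 ≠ 0) (hq : q + 1 ≠ 0)
    (hpq : p ≠ q) (hu : 0 < u) :
    Ftilde ω p q u = (q - p) ^ 2 / ((p + 1) * (q + 1)) * u ^ (p + q + 1) *
      (ω * invZeroFreq p q u - 1) := by
  have hqp : q - p ≠ 0 := sub_ne_zero.mpr hpq.symm
  have hup : u ^ p ≠ 0 := (Real.rpow_pos_of_pos hu p).ne'
  have huq : u ^ q ≠ 0 := (Real.rpow_pos_of_pos hu q).ne'
  simp only [Ftilde, f, f', F, invZeroFreq, Real.rpow_add hu, Real.rpow_sub hu, Real.rpow_one]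
  field_simp
  ring

theorem Ftilde_neg_iff {p q u : ℝ} (ω : ℝ) (hp : -1 < p) (hpq : p < q) (hu : 0 < u) :
    Ftilde ω p q u < 0 ↔ ω * invZeroFreq p q u < 1 := by
  have hp1 : 0 < p + 1 := by linarith
  have hq1 : 0 < q + 1 := by linarith
  have hqp : 0 < q - p := sub_pos.mpr hpq
  rw [Ftilde_eq_mul_invZeroFreq ω hp1.ne' hq1.ne' hpq.ne hu, ← smul_eq_mul,
    smul_neg_iff_of_pos_left (by positivity [hqp]), sub_neg]

section CriticalAmplitude

variable {p q : ℝ}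

theorem criticalAmplitude_base_pos (hp : 1 < p) (hpq : p < q) :
    0 < (p - 1) * (q + 1) / ((p + 1) * (q - 1)) := by
  apply div_pos <;> apply mul_pos <;> linarith

theorem criticalAmplitude_pos (hp : 1 < p) (hpq : p < q) : 0 < criticalAmplitude p q :=
  Real.rpow_pos_of_pos (criticalAmplitude_base_pos hp hpq) _

theorem criticalAmplitude_rpow_one_sub (hp : 1 < p) (hpq : p < q) :
    criticalAmplitude p q ^ (1 - p) =
      (p - 1) * (q + 1) / ((p + 1) * (q - 1)) * criticalAmplitude p q ^ (1 - q) := by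
  have hpow : criticalAmplitude p q ^ (q - p) = (p - 1) * (q + 1) / ((p + 1) * (q - 1)) := by
    rw [criticalAmplitude, ← Real.rpow_mul (criticalAmplitude_base_pos hp hpq).le,
      one_div_mul_cancel (sub_pos.mpr hpq).ne', Real.rpow_one]
  rw [← hpow, ← Real.rpow_add (criticalAmplitude_pos hp hpq)]
  ring_nf

theorem omegaPQ_eq_mul_criticalAmplitude_rpow (hp : 1 < p) (hpq : p < q) :
    omegaPQ p q = 2 * (q - p) / ((p + 1) * (q - 1)) * criticalAmplitude p q ^ (p - 1) := by
  rw [omegaPQ, criticalAmplitude, ← Real.rpow_mul (criticalAmplitude_base_pos hp hpq).le,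
    one_div_mul_eq_div]

theorem omegaPQ_pos (hp : 1 < p) (hpq : p < q) : 0 < omegaPQ p q := by
  have hcoeff : 0 < 2 * (q - p) / ((p + 1) * (q - 1)) := by
    apply div_pos <;> apply mul_pos <;> linarith
  exact mul_pos hcoeff (Real.rpow_pos_of_pos (criticalAmplitude_base_pos hp hpq) _)

theorem isMaxOn_invZeroFreq (hp : 1 < p) (hpq : p < q) :
    IsMaxOn (invZeroFreq p q) (Set.Ioi 0) (criticalAmplitude p q) := by
  have hp1 : 0 < p + 1 := by linarith
  have hq1 : 0 < q - 1 := by linarith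
  have hqp : 0 < q - p := sub_pos.mpr hpq
  have hratio : (1 - p) / (1 - q) = (p - 1) / (q - 1) := by
    rw [← neg_div_neg_eq, neg_sub, neg_sub]
  refine isMaxOn_mul_rpow_sub_mul_rpow_s5 (by linarith) ?_ ?_ (by positivity [hp1])
    (criticalAmplitude_pos hp hpq) ?_
  · rw [hratio]
    exact div_nonneg (by linarith) hq1.le
  · rw [hratio]
    exact div_le_one_of_le₀ (by linarith) hq1.le
  · rw [criticalAmplitude_rpow_one_sub hp hpq]
    field_simp
    ring

theorem invZeroFreq_criticalAmplitude (hp : 1 < p) (hpq : p < q) :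
    invZeroFreq p q (criticalAmplitude p q) = (omegaPQ p q)⁻¹ := by
  have hp0 : p - 1 ≠ 0 := by linarith
  have hp1 : p + 1 ≠ 0 := by linarith
  have hq0 : q - 1 ≠ 0 := by linarith
  have hq1 : q + 1 ≠ 0 := by linarith
  have hqp : q - p ≠ 0 := by linarith
  have hneg : criticalAmplitude p q ^ (p - 1) = (criticalAmplitude p q ^ (1 - p))⁻¹ := by
    rw [← Real.rpow_neg (criticalAmplitude_pos hp hpq).le, neg_sub]
  have hu : criticalAmplitude p q ^ (1 - q) ≠ 0 :=
    (Real.rpow_pos_of_pos (criticalAmplitude_pos hp hpq) _).ne'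
  rw [omegaPQ_eq_mul_criticalAmplitude_rpow hp hpq, hneg, invZeroFreq,
    criticalAmplitude_rpow_one_sub hp hpq]
  field_simp
  ring

end CriticalAmplitude

theorem Ftilde_neg_iff_omega_lt (ω p q : ℝ) (hω : 0 < ω) (hp : 1 < p) (hpq : p < q) :
    (∀ u : ℝ, 0 < u →
        (f ω p q u + u * f' ω p q u) * F ω p q u - u * (f ω p q u) ^ 2 < 0) ↔
      ω < omegaPQ p q := by
  calc (∀ u : ℝ, 0 < u → Ftilde ω p q u < 0)
      ↔ ∀ u : ℝ, 0 < u → ω * invZeroFreq p q u < 1 :=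
        forall₂_congr fun _ hu ↦ Ftilde_neg_iff ω (by linarith) hpq hu
    _ ↔ ω * invZeroFreq p q (criticalAmplitude p q) < 1 :=
        ⟨fun h ↦ h _ (criticalAmplitude_pos hp hpq), fun h _ hu ↦
          (mul_le_mul_of_nonneg_left (isMaxOn_invZeroFreq hp hpq hu) hω.le).trans_lt h⟩
    _ ↔ ω < omegaPQ p q := by
        rw [invZeroFreq_criticalAmplitude hp hpq, ← div_eq_mul_inv, div_lt_one (omegaPQ_pos hp hpq)]
end

section
/- Let q > p > 1 be real numbers. Then ω_{p,q} < η_{p,q}, where ω_{p,q} = (2(q-p)/((p+1)(q-1)))·((p-1)(q+1)/((p+1)(q-1)))^{(p-1)/(q-p)} and η_{p,q} = ((q-p)/(q-1))·((p-1)/(q-1))^{(p-1)/(q-p)}. -/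
/-- The critical constant `η_{p,q}`. -/
noncomputable def etaPQ (p q : ℝ) : ℝ :=
  (q - p) / (q - 1) * ((p - 1) / (q - 1)) ^ ((p - 1) / (q - p))

/-!
The ratio `ω_{p,q} / η_{p,q}` is `2 / (p + 1) * ((q + 1) / (p + 1)) ^ ((p - 1) / (q - p))`. It is
less than `1` because, after taking logarithms, this says that the slope of `log` over
`[p + 1, q + 1]` is smaller than its slope over `[2, p + 1]`, which is strict concavity.
-/

theorem div_rpow_sub_div_sub_lt_div {a b c : ℝ} (ha : 0 < a) (hab : a < b) (hac : a < c)
    (hcb : c ≠ b) : (c / b) ^ ((b - a) / (c - b)) < b / a := by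
  have hb : 0 < b := ha.trans hab
  have hc : 0 < c := ha.trans hac
  have secant_lt : (Real.log c - Real.log b) / (c - b) < (Real.log b - Real.log a) / (b - a) := by
    simpa only [← neg_sub b a, ← neg_sub (Real.log b) (Real.log a), neg_div_neg_eq] using
      strictConcaveOn_log_Ioi.secant_strict_mono hb ha hc hab.ne hcb hac
  rw [Real.rpow_lt_iff_lt_log (by positivity) (by positivity),
    Real.log_div hc.ne' hb.ne', Real.log_div hb.ne' ha.ne']
  calc
    (b - a) / (c - b) * (Real.log c - Real.log b)
        = (Real.log c - Real.log b) / (c - b) * (b - a) := by ring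
    _ < Real.log b - Real.log a := (lt_div_iff₀ (sub_pos.mpr hab)).mp secant_lt

theorem omegaPQ_eq_etaPQ_mul {p q : ℝ} (hp : 1 ≤ p) (hq : 1 ≤ q) :
    omegaPQ p q = etaPQ p q * (2 / (p + 1) * ((q + 1) / (p + 1)) ^ ((p - 1) / (q - p))) := by
  have base_eq : (p - 1) * (q + 1) / ((p + 1) * (q - 1)) =
      (p - 1) / (q - 1) * ((q + 1) / (p + 1)) := by
    rw [mul_comm (p + 1), mul_div_mul_comm]
  have hbase : 0 ≤ (p - 1) / (q - 1) := div_nonneg (sub_nonneg.mpr hp) (sub_nonneg.mpr hq)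
  have hratio : 0 ≤ (q + 1) / (p + 1) := by positivity
  rw [omegaPQ, etaPQ, base_eq, Real.mul_rpow hbase hratio, mul_div_mul_comm]
  ring

theorem etaPQ_pos {p q : ℝ} (hp : 1 < p) (hpq : p < q) : 0 < etaPQ p q := by
  have hq : 0 < q - 1 := sub_pos.mpr (hp.trans hpq)
  exact mul_pos (div_pos (sub_pos.mpr hpq) hq)
    (Real.rpow_pos_of_pos (div_pos (sub_pos.mpr hp) hq) _)

theorem omegaPQ_lt_etaPQ (p q : ℝ) (hp : 1 < p) (hpq : p < q) :
    omegaPQ p q < etaPQ p q := by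
  have : 0 < p + 1 := by linarith
  have rpow_lt : ((q + 1) / (p + 1)) ^ ((p - 1) / (q - p)) < (p + 1) / 2 := by
    convert div_rpow_sub_div_sub_lt_div (a := 2) (b := p + 1) (c := q + 1)
      two_pos (by linarith) (by linarith) (by linarith) using 3 <;> ring
  rw [omegaPQ_eq_etaPQ_mul hp.le (hp.trans hpq).le]
  refine mul_lt_of_lt_one_right (etaPQ_pos hp hpq) ?_
  calc
    2 / (p + 1) * ((q + 1) / (p + 1)) ^ ((p - 1) / (q - p))
        < 2 / (p + 1) * ((p + 1) / 2) := by gcongr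
    _ = 1 := by field_simp
end
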